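/- If f: S³∖L → S¹ is a simple, boundary-regular Morse map for a link L, then the set of critical points of f is finite and its cardinality is even; moreover, every smooth page of f is a spanning surface for L (a compact oriented surface in S³ with boundary L), and f is boundary-connected if and only if every smooth page of f is a Seifert surface for L. -/

import Mathlib

/-!  Morse maps for knots and links in `S³` and the Morse–Novikov number:
common framework.

We work in the smooth category.  `S³` is the unit sphere of `ℝ⁴ ≅ ℂ²`.
A link is presented by disjoint smoothly embedded oriented parametrized
circles.  A *simple boundary-regular map* for a link `L` is a smooth map
`f : S³ ∖ L → S¹` which near `L` is the
standard fibration `(x, z) ↦ z/|z|` in a positively oriented tubular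
neighborhood trivialization of `L` (this makes the homotopy class of `f`
the canonical class `ξ_L` dual to a Seifert surface, i.e. `f` is simple).
Such a map is *Morse* if all its critical points are nondegenerate; the
Morse–Novikov number `MN L` is the least number of critical points of a
simple boundary-regular Morse map for `L`. -/

noncomputable section
open scoped Manifold Real
open Metric Set

namespace MorseNovikov

/-- Ambient Euclidean 4-space, identified with `ℂ²` via the complex
coordinates `Z`, `W`. -/
abbrev E := EuclideanSpace ℝ (Fin 4)
abbrev E3 := EuclideanSpace ℝ (Fin 3)
abbrev E2 := EuclideanSpace ℝ (Fin 2)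

instance : Fact (Module.finrank ℝ E = 3 + 1) := ⟨by simp⟩

/-- The 3-sphere `S³`, the unit sphere of `ℝ⁴ ≅ ℂ²`. -/
abbrev Sph : Type := sphere (0 : E) 1

/-- First complex coordinate on `ℝ⁴ = ℂ²`. -/
def Z (p : E) : ℂ := (p 0 : ℂ) + (p 1 : ℂ) * Complex.I
/-- Second complex coordinate on `ℝ⁴ = ℂ²`. -/
def W (p : E) : ℂ := (p 2 : ℂ) + (p 3 : ℂ) * Complex.I

lemma continuous_Z : Continuous Z := by unfold Z; fun_prop
lemma continuous_W : Continuous W := by unfold W; fun_prop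

/-- The point of `ℝ⁴ = ℂ²` with complex coordinates `(z, w)`. -/
def mk4 (z w : ℂ) : E := (EuclideanSpace.equiv (Fin 4) ℝ).symm ![z.re, z.im, w.re, w.im]

/-- `z/|z| ∈ S¹` (with junk value `1` at `z = 0`). -/
def toCircle (z : ℂ) : Circle := Circle.exp (Complex.arg z)

/-- The set underlying the standard (horizontal) unknot `O = {w = 0} ⊂ S³`. -/
def Ocar : Set Sph := {p : Sph | W (p : E) = 0}

/-- The set underlying the standard split 2-component unlink
(the link of indeterminacy at infinity of `(2z-1)/z`). -/
def Ucar : Set Sph := {p : Sph | Z (p : E) = 0 ∨ Z (p : E) = 1/2}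

/-- A link: a nonempty closed oriented 1-dimensional smooth submanifold of
`S³`, presented by disjoint smoothly embedded circles; each component is a
`2π`-periodic injective smooth immersion of `ℝ` (recording its orientation). -/
structure Link where
  n : ℕ
  npos : 0 < n
  emb : Fin n → ℝ → Sph
  smooth : ∀ i, ContMDiff 𝓘(ℝ, ℝ) (𝓡 3) (⊤ : ℕ∞) (emb i)
  periodic : ∀ i t, emb i (t + 2*π) = emb i t
  immersed : ∀ i t, mfderiv 𝓘(ℝ, ℝ) (𝓡 3) (emb i) t ≠ 0
  inj : ∀ i j s t, s ∈ Ico 0 (2*π) → t ∈ Ico 0 (2*π) →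
    emb i s = emb j t → i = j ∧ s = t

/-- The underlying subset of `S³`. -/
def Link.carrier (L : Link) : Set Sph := ⋃ i, L.emb i '' (Icc 0 (2*π))

lemma Link.isClosed_carrier (L : Link) : IsClosed L.carrier := by
  refine isClosed_iUnion_of_finite fun i => ?_
  exact (isCompact_Icc.image (L.smooth i).continuous).isClosed

/-- The complement `S³ ∖ L`, an open submanifold of `S³`. -/
def Link.compl (L : Link) : TopologicalSpace.Opens Sph :=
  ⟨{x | x ∉ L.carrier}, L.isClosed_carrier.isOpen_compl⟩

/-- A knot is a one-component link. -/
def Link.IsKnot (L : Link) : Prop := L.n = 1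

section Generic
variable {M : Type*} [TopologicalSpace M] [ChartedSpace E3 M]

/-- `x` is a critical point of the circle-valued function `f`:
the differential of `f` at `x` fails to be surjective. -/
def IsCrit (f : M → Circle) (x : M) : Prop :=
  ¬ Function.Surjective (mfderiv (𝓡 3) (𝓡 1) f x)

/-- The set of critical points of `f`. -/
def critSet (f : M → Circle) : Set M := {x | IsCrit f x}

/-- A local real lift of `f` near `x`, read in the preferred chart at `x`. -/
def liftChart (f : M → Circle) (x : M) (u : E3) : ℝ :=
  Complex.arg ((f ((extChartAt (𝓡 3) x).symm u) : ℂ) / (f x : ℂ))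

/-- The Hessian bilinear form of `f` at `x` (meaningful at critical points,
where it is independent of the choice of chart and lift). -/
def hessAt (f : M → Circle) (x : M) (v w : E3) : ℝ :=
  fderiv ℝ (fun u => fderiv ℝ (liftChart f x) u v) (extChartAt (𝓡 3) x x) w

/-- Nondegeneracy of a critical point. -/
def Nondeg (f : M → Circle) (x : M) : Prop :=
  ∀ v : E3, v ≠ 0 → ∃ w : E3, hessAt f x v w ≠ 0

/-- `f` is a Morse function: it has no degenerate critical points. -/
def MorseFun (f : M → Circle) : Prop := ∀ x, IsCrit f x → Nondeg f x

/-- `x` is a nondegenerate critical point of `f` of Morse index `i`. -/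
def HasIndex (f : M → Circle) (x : M) (i : ℕ) : Prop :=
  IsCrit f x ∧ i ≤ 3 ∧
  ∃ V W : Submodule ℝ E3, Module.finrank ℝ V = i ∧ Module.finrank ℝ W = 3 - i ∧
    (∀ v ∈ V, v ≠ 0 → hessAt f x v v < 0) ∧ (∀ w ∈ W, w ≠ 0 → 0 < hessAt f x w w)

end Generic

/-- The determinant of four ambient vectors; expresses the standard
orientation of `S³ ⊂ ℝ⁴`. -/
def det4 (a b c d : E) : ℝ :=
  Matrix.det (Matrix.of ![(fun i => a i), (fun i => b i), (fun i => c i), (fun i => d i)])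

/-- The ambient (`ℝ⁴`-valued) differential of a map `g : ℝ × ℂ → S³`. -/
def tangAmb (g : ℝ × ℂ → Sph) (q : ℝ × ℂ) (v : ℝ × ℂ) : E :=
  mfderiv (𝓡 3) 𝓘(ℝ, E) (fun p : Sph => (p : E)) (g q)
    (mfderiv 𝓘(ℝ, ℝ × ℂ) (𝓡 3) g q v)

/-- A **simple boundary-regular smooth map** for the link `L`: a smooth map
`f : S³ ∖ L → S¹` together with an adapted trivialization `τ : L × D² → N(L)`
of a tubular neighborhood of `L`, with `τ(x, 0) = x`, on which `f` is the
standard fibration `(x, z) ↦ z/|z|`.  The trivialization is positively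
oriented with respect to the orientations of `L` and `S³`; consequently the
homotopy class of `f` is the canonical class `ξ_L ∈ H¹(S³ ∖ L; ℤ)` dual to a
Seifert surface, i.e. `f` is simple. -/
structure BRMap (L : Link) where
  f : L.compl → Circle
  smooth : ContMDiff (𝓡 3) (𝓡 1) (⊤ : ℕ∞) f
  tub : Fin L.n → ℝ × ℂ → Sph
  tub_smooth : ∀ i, ContMDiffOn 𝓘(ℝ, ℝ × ℂ) (𝓡 3) (⊤ : ℕ∞) (tub i) (univ ×ˢ ball (0:ℂ) 1)
  tub_per : ∀ i t z, tub i (t + 2*π, z) = tub i (t, z)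
  tub_core : ∀ i t, tub i (t, 0) = L.emb i t
  tub_inj : ∀ i j t s z w, t ∈ Ico 0 (2*π) → s ∈ Ico 0 (2*π) →
    z ∈ ball (0:ℂ) 1 → w ∈ ball (0:ℂ) 1 → tub i (t, z) = tub j (s, w) →
    i = j ∧ t = s ∧ z = w
  tub_nbhd : ∀ x ∈ L.carrier, (⋃ i, tub i '' (univ ×ˢ ball (0:ℂ) 1)) ∈ nhds x
  tub_off : ∀ i t z, z ∈ ball (0:ℂ) 1 → z ≠ 0 → tub i (t, z) ∉ L.carrier
  adapted : ∀ i t z, z ∈ ball (0:ℂ) 1 → z ≠ 0 →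
    ∀ x : L.compl, (x : Sph) = tub i (t, z) → f x = toCircle z
  positive : ∀ i t z, z ∈ ball (0:ℂ) 1 →
    0 < det4 ((tub i (t, z) : E)) (tangAmb (tub i) (t, z) (1, 0))
        (tangAmb (tub i) (t, z) (0, 1)) (tangAmb (tub i) (t, z) (0, Complex.I))

variable {L : Link}

/-- The page `F_θ := L ∪ f⁻¹(θ)` of `f`, as a subset of `S³`. -/
def pageSet (F : BRMap L) (θ : Circle) : Set Sph :=
  L.carrier ∪ {x : Sph | ∃ h : x ∈ L.compl, F.f ⟨x, h⟩ = θ}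

/-- `θ` is a regular value of `F.f` (the corresponding page is smooth). -/
def IsRegularValue (F : BRMap L) (θ : Circle) : Prop :=
  ∀ x : L.compl, F.f x = θ → ¬ IsCrit F.f x

/-- The Morse–Novikov number of `L`: the least number of critical points of
a simple boundary-regular Morse map `S³ ∖ L → S¹`. -/
def MN (L : Link) : ℕ∞ :=
  sInf {k : ℕ∞ | ∃ F : BRMap L, MorseFun F.f ∧ (critSet F.f).encard = k}

/-- `F` is a minimal Morse map for `L`. -/
def Minimal (F : BRMap L) : Prop :=
  MorseFun F.f ∧ ∀ G : BRMap L, MorseFun G.f →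
    (critSet F.f).encard ≤ (critSet G.f).encard

/-- All critical points of `F` have index 1 or 2. -/
def Moderate (F : BRMap L) : Prop :=
  ∀ x ∈ critSet F.f, HasIndex F.f x 1 ∨ HasIndex F.f x 2

/-- `F.f` restricted to its critical set factors as the index followed by an
injection. -/
def SelfIndexed (F : BRMap L) : Prop :=
  ∀ x ∈ critSet F.f, ∀ y ∈ critSet F.f, ∀ i j : ℕ,
    HasIndex F.f x i → HasIndex F.f y j → (F.f x = F.f y ↔ i = j)

/-- An ambient isotopy of `S³`: a smooth family of diffeomorphisms starting
at the identity. -/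
structure Isotopy where
  H : ℝ × Sph → Sph
  smooth : ContMDiff (𝓘(ℝ, ℝ).prod (𝓡 3)) (𝓡 3) (⊤ : ℕ∞) H
  init : ∀ x, H (0, x) = x
  bij : ∀ t, Function.Bijective (fun x => H (t, x))

/-- Two subsets of `S³` are ambient isotopic. -/
def AmbientIsotopic (A B : Set Sph) : Prop :=
  ∃ h : Isotopy, (fun x => h.H (1, x)) '' A = B

/-- Two links are (ambient) isotopic. -/
def LinkIsotopic (L₁ L₂ : Link) : Prop := AmbientIsotopic L₁.carrier L₂.carrier

/-- Isotopy of simple boundary-regular maps: an ambient isotopy carries one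
binding to the other and intertwines the two maps. -/
def BRMapIsotopic (L₁ : Link) (F₁ : BRMap L₁) (L₂ : Link) (F₂ : BRMap L₂) : Prop :=
  ∃ h : Isotopy, (fun x => h.H (1, x)) '' L₁.carrier = L₂.carrier ∧
    ∀ (x : L₁.compl) (y : L₂.compl), (y : Sph) = h.H (1, (x : Sph)) →
      F₂.f y = F₁.f x

/-- A closed (nonempty, compact, boundaryless) smooth surface inside `A ⊆ S³`. -/
structure ClosedSurfaceIn (A : Set Sph) where
  carr : Type
  [ts : TopologicalSpace carr]
  [cs : ChartedSpace E2 carr]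
  [cpt : CompactSpace carr]
  [ne : Nonempty carr]
  emb : carr → Sph
  smooth : ContMDiff (𝓡 2) (𝓡 3) (⊤ : ℕ∞) emb
  inj : Function.Injective emb
  imm : ∀ p, Function.Injective (mfderiv (𝓡 2) (𝓡 3) emb p)
  sub : Set.range emb ⊆ A

/-- `A` contains a nonempty closed surface. -/
def ContainsClosedSurface (A : Set Sph) : Prop := Nonempty (ClosedSurfaceIn A)

/-- `F` is boundary-connected: no page of `F` contains a nonempty closed
surface (equivalently, every page has trivial second homology). -/
def BoundaryConnected (F : BRMap L) : Prop :=
  ∀ θ : Circle, ¬ ContainsClosedSurface (pageSet F θ)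

/-- `F` is connected: every page of `F` is connected. -/
def ConnectedMap (F : BRMap L) : Prop :=
  ∀ θ : Circle, IsConnected (pageSet F θ)

/-- The ambient differential of a map into `S³` defined on a
surface-with-boundary. -/
def tangAmbS {C : Type*} [TopologicalSpace C] [ChartedSpace (EuclideanHalfSpace 2) C]
    (g : C → Sph) (p : C) (v : E2) : E :=
  mfderiv (𝓡 3) 𝓘(ℝ, E) (fun q : Sph => (q : E)) (g p)
    (mfderiv (𝓡∂ 2) (𝓡 3) g p v)

/-- A compact oriented smooth surface-with-boundary embedded in `S³`, with
boundary the link `L` (a *spanning surface* for `L`).  Orientedness is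
encoded by a continuous nonvanishing normal (coorientation) field in `S³`. -/
structure SpanningSurface (L : Link) where
  carr : Type
  [ts : TopologicalSpace carr]
  [cs : ChartedSpace (EuclideanHalfSpace 2) carr]
  [cpt : CompactSpace carr]
  emb : carr → Sph
  smooth : ContMDiff (𝓡∂ 2) (𝓡 3) (⊤ : ℕ∞) emb
  inj : Function.Injective emb
  imm : ∀ p, Function.Injective (mfderiv (𝓡∂ 2) (𝓡 3) emb p)
  bdry : emb '' ((𝓡∂ 2).boundary carr) = L.carrier
  int_off : ∀ p, p ∉ (𝓡∂ 2).boundary carr → emb p ∉ L.carrier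
  coorient : ∃ ν : carr → E, Continuous ν ∧ ∀ p, ν p ≠ 0 ∧
    inner (𝕜 := ℝ) (ν p) ((emb p : Sph) : E) = 0 ∧
    ∀ v : E2, inner (𝕜 := ℝ) (ν p) (tangAmbS emb p v) = 0

/-- A Seifert surface for `L`: a spanning surface with no closed components. -/
structure SeifertSurface (L : Link) extends SpanningSurface L where
  no_closed : ∀ p : carr, (connectedComponent p ∩ (𝓡∂ 2).boundary carr).Nonempty

/-- A compact smooth surface-with-boundary embedded in the region `Amb ⊆ S³`,
with boundary the set `Bd`. -/
structure EmbSurface (Bd Amb : Set Sph) where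
  carr : Type
  [ts : TopologicalSpace carr]
  [cs : ChartedSpace (EuclideanHalfSpace 2) carr]
  [cpt : CompactSpace carr]
  emb : carr → Sph
  smooth : ContMDiff (𝓡∂ 2) (𝓡 3) (⊤ : ℕ∞) emb
  inj : Function.Injective emb
  imm : ∀ p, Function.Injective (mfderiv (𝓡∂ 2) (𝓡 3) emb p)
  bdry : emb '' ((𝓡∂ 2).boundary carr) = Bd
  sub : Set.range emb ⊆ Amb

/-- Angular speed about the origin of a plane curve. -/
def angSpeed (g : ℝ → ℂ) (t : ℝ) : ℝ := ((deriv g t) / g t).im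

/-- Total winding number about `0` of a (`2π`-periodic) plane curve. -/
def windingNumber (g : ℝ → ℂ) : ℝ := (1/(2*π)) * ∫ t in (0:ℝ)..(2*π), angSpeed g t

section PartA
open MeasureTheory Filter Topology

def bv (i : Fin 3) : E3 := EuclideanSpace.single i 1

def pd (f : E3 → ℝ) (i : Fin 3) : E3 → ℝ := fun x => fderiv ℝ f x (bv i)

lemma pd_contDiff {f : E3 → ℝ} {n : ℕ} (hf : ContDiff ℝ (n + 1 : ℕ) f) (i : Fin 3) :
    ContDiff ℝ n (pd f i) := by
  unfold pd
  exact (hf.fderiv_right (m := n) (by norm_cast)).clm_apply contDiff_const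

lemma pd_comm {f : E3 → ℝ} (hf : ContDiff ℝ 2 f) (i j : Fin 3) (x : E3) :
    pd (pd f i) j x = pd (pd f j) i x := by
  have h1 : Differentiable ℝ (fderiv ℝ f) :=
    (hf.fderiv_right (m := 1) (by norm_num)).differentiable (by norm_num)
  have key : ∀ i j, pd (pd f i) j x = fderiv ℝ (fderiv ℝ f) x (bv j) (bv i) := by
    intro i j
    unfold pd
    rw [fderiv_clm_apply (h1 x) (differentiableAt_const _)]
    simp
  rw [key, key]
  have := (hf.contDiffAt (x := x)).isSymmSndFDerivAt (by simp)
  exact this _ _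

lemma pd_mul {f g : E3 → ℝ} (hf : Differentiable ℝ f) (hg : Differentiable ℝ g) (i : Fin 3) (x : E3) :
    pd (fun x => f x * g x) i x = pd f i x * g x + f x * pd g i x := by
  unfold pd
  rw [fderiv_fun_mul (hf x) (hg x)]
  simp; ring

lemma pd_sub {f g : E3 → ℝ} (hf : Differentiable ℝ f) (hg : Differentiable ℝ g) (i : Fin 3) (x : E3) :
    pd (fun x => f x - g x) i x = pd f i x - pd g i x := by
  unfold pd
  rw [fderiv_fun_sub (hf x) (hg x)]
  simp

lemma pd_comp {a : ℝ → ℝ} {g : E3 → ℝ} (ha : Differentiable ℝ a) (hg : Differentiable ℝ g)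
    (i : Fin 3) (x : E3) :
    pd (fun x => a (g x)) i x = deriv a (g x) * pd g i x := by
  unfold pd
  have := ((ha (g x)).hasDerivAt.comp_hasFDerivAt x (hg x).hasFDerivAt).fderiv
  have h2 : (fun x => a (g x)) = a ∘ g := rfl
  rw [h2, this]; simp

lemma ibp {u g : E3 → ℝ} (hu : ContDiff ℝ 1 u) (hc : HasCompactSupport u) (hg : ContDiff ℝ 1 g)
    (i : Fin 3) :
    Integrable (fun x => pd u i x * g x) ∧ Integrable (fun x => u x * pd g i x) ∧
    ∫ x, pd u i x * g x = - ∫ x, u x * pd g i x := by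
  have c1 : Continuous (pd u i) := (pd_contDiff (n := 0) (by simpa using hu) i).continuous
  have c2 : Continuous (pd g i) := (pd_contDiff (n := 0) (by simpa using hg) i).continuous
  have s1 : HasCompactSupport (pd u i) := hc.fderiv_apply (𝕜 := ℝ) (v := bv i)
  have i1 : Integrable (fun x => pd u i x * g x) :=
    (c1.mul hg.continuous).integrable_of_hasCompactSupport (s1.mul_right)
  have i2 : Integrable (fun x => u x * pd g i x) :=
    (hu.continuous.mul c2).integrable_of_hasCompactSupport (hc.mul_right)
  have i3 : Integrable (fun x => u x * g x) :=
    (hu.continuous.mul hg.continuous).integrable_of_hasCompactSupport (hc.mul_right)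
  refine ⟨i1, i2, ?_⟩
  have := integral_mul_fderiv_eq_neg_fderiv_mul_of_integrable (μ := (volume : Measure E3))
    (f := u) (g := g) (v := bv i) i1 i2 i3
    (fun x _ => hu.differentiable (by norm_num) x) (fun x _ => hg.differentiable (by norm_num) x)
  unfold pd
  rw [this, neg_neg]

def det3 (u v w : E3 → ℝ) (x : E3) : ℝ :=
  pd u 0 x * (pd v 1 x * pd w 2 x - pd v 2 x * pd w 1 x) +
  pd u 1 x * (pd v 2 x * pd w 0 x - pd v 0 x * pd w 2 x) +
  pd u 2 x * (pd v 0 x * pd w 1 x - pd v 1 x * pd w 0 x)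

lemma int_add3 {f g h : E3 → ℝ} (hf : Integrable f) (hg : Integrable g) (hh : Integrable h) :
    ∫ x, (f x + g x + h x) = (∫ x, f x) + (∫ x, g x) + (∫ x, h x) := by
  have : Integrable (fun x => f x + g x) := hf.add hg
  rw [integral_add this hh, integral_add hf hg]

lemma piola {u v w : E3 → ℝ} (hu : ContDiff ℝ 2 u) (hv : ContDiff ℝ 2 v) (hw : ContDiff ℝ 2 w)
    (hc : HasCompactSupport u) : ∫ x, det3 u v w x = 0 := by
  have hu1 : ContDiff ℝ 1 u := hu.of_le (by norm_num)
  have dv : ∀ i, ContDiff ℝ 1 (pd v i) := fun i => pd_contDiff (n := 1) (by simpa using hv) i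
  have dw : ∀ i, ContDiff ℝ 1 (pd w i) := fun i => pd_contDiff (n := 1) (by simpa using hw) i
  have cv : ∀ i j, ContDiff ℝ 1 (fun x => pd v i x * pd w j x - pd v j x * pd w i x) :=
    fun i j => ((dv i).mul (dw j)).sub ((dv j).mul (dw i))
  obtain ⟨a0, b0, e0⟩ := ibp hu1 hc (cv 1 2) 0
  obtain ⟨a1, b1, e1⟩ := ibp hu1 hc (cv 2 0) 1
  obtain ⟨a2, b2, e2⟩ := ibp hu1 hc (cv 0 1) 2
  unfold det3
  rw [int_add3 a0 a1 a2, e0, e1, e2, ← neg_add, ← neg_add, ← int_add3 b0 b1 b2, neg_eq_zero]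
  have : ∀ x, u x * pd (fun x => pd v 1 x * pd w 2 x - pd v 2 x * pd w 1 x) 0 x +
      u x * pd (fun x => pd v 2 x * pd w 0 x - pd v 0 x * pd w 2 x) 1 x +
      u x * pd (fun x => pd v 0 x * pd w 1 x - pd v 1 x * pd w 0 x) 2 x = 0 := by
    intro x
    have Dv : ∀ i, Differentiable ℝ (pd v i) := fun i => (dv i).differentiable (by norm_num)
    have Dw : ∀ i, Differentiable ℝ (pd w i) := fun i => (dw i).differentiable (by norm_num)
    have hs : ∀ i j k, pd (fun x => pd v i x * pd w j x - pd v j x * pd w i x) k x =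
        pd (fun x => pd v i x * pd w j x) k x - pd (fun x => pd v j x * pd w i x) k x := fun i j k =>
      pd_sub (f := fun x => pd v i x * pd w j x) (g := fun x => pd v j x * pd w i x)
        ((Dv _).mul (Dw _)) ((Dv _).mul (Dw _)) _ _
    simp only [hs]
    simp only [pd_mul (Dv _) (Dw _)]
    rw [pd_comm hv 1 0, pd_comm hv 2 0, pd_comm hv 2 1, pd_comm hw 1 0, pd_comm hw 2 0,
      pd_comm hw 2 1]
    ring
  simp [this]

lemma exists_bump (ε : ℝ) (hε : 0 < ε) : ∃ A a : ℝ → ℝ, ContDiff ℝ 2 A ∧ ContDiff ℝ 2 a ∧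
    deriv A = a ∧ (∀ x, 0 ≤ a x) ∧ 0 < a 0 ∧ (∀ x, ε ≤ |x| → a x = 0) ∧ (∀ x, x ≤ -ε → A x = 0) := by
  let φ : ContDiffBump (0 : ℝ) := ⟨ε / 2, ε, by positivity, by linarith⟩
  have hφ : ContDiff ℝ 2 φ := φ.contDiff
  have hz : ∀ x, ε ≤ |x| → φ x = 0 := by
    intro x hx
    apply φ.zero_of_le_dist
    simpa using hx
  have hd : ∀ x, HasDerivAt (fun x => ∫ t in (-ε)..x, φ t) (φ x) x := fun x =>
    intervalIntegral.integral_hasDerivAt_right (φ.continuous.intervalIntegrable _ _)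
      (φ.continuous.stronglyMeasurableAtFilter _ _) φ.continuous.continuousAt
  have hder : deriv (fun x => ∫ t in (-ε)..x, φ t) = φ := funext fun x => (hd x).deriv
  refine ⟨fun x => ∫ t in (-ε)..x, φ t, φ, ?_, hφ, hder, fun x => φ.nonneg, ?_, hz, ?_⟩
  · have h2 : (2 : WithTop ℕ∞) = 1 + 1 := by norm_num
    rw [h2, contDiff_succ_iff_deriv]
    refine ⟨fun x => (hd x).differentiableAt, by simp, ?_⟩
    rw [hder]; exact hφ.of_le (by norm_num)
  · exact φ.pos_of_mem_ball (by simp [φ, hε])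
  · intro x hx
    apply intervalIntegral.integral_zero_ae
    refine Eventually.of_forall fun t ht => hz t ?_
    rw [uIoc_of_ge hx] at ht
    have := ht.2
    rw [abs_of_neg (by linarith)]; linarith

end PartA

section PartA2
open MeasureTheory Filter Topology

def cmp (g : E3 → E3) (i : Fin 3) : E3 → ℝ := fun x => g x i

lemma cmp_contDiff {g : E3 → E3} {n : WithTop ℕ∞} (hg : ContDiff ℝ n g) (i : Fin 3) :
    ContDiff ℝ n (cmp g i) :=
  (contDiff_euclidean.1 hg) i

lemma det_eq {g : E3 → E3} (hg : ContDiff ℝ 1 g) (x : E3) :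
    (fderiv ℝ g x).det = det3 (cmp g 0) (cmp g 1) (cmp g 2) x := by
  have hp : ∀ i j, pd (cmp g i) j x = (fderiv ℝ g x (bv j)) i := by
    intro i j
    unfold pd cmp
    have h := (hg.differentiable (by norm_num) x).hasFDerivAt
    have := ((EuclideanSpace.proj (𝕜 := ℝ) i).hasFDerivAt.comp x h).fderiv
    have h2 : (fun x => g x i) = (EuclideanSpace.proj (𝕜 := ℝ) i) ∘ g := rfl
    rw [h2, this]; simp
  have : (fderiv ℝ g x).det = LinearMap.det ((fderiv ℝ g x) : E3 →ₗ[ℝ] E3) := rfl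
  rw [this, ← LinearMap.det_toMatrix (EuclideanSpace.basisFun (Fin 3) ℝ).toBasis, Matrix.det_fin_three]
  simp only [LinearMap.toMatrix_apply, OrthonormalBasis.coe_toBasis, EuclideanSpace.basisFun_apply,
    OrthonormalBasis.coe_toBasis_repr_apply, EuclideanSpace.basisFun_repr, det3, hp]
  simp only [bv, ContinuousLinearMap.coe_coe]
  ring

lemma integral_zero {g : E3 → E3} (hg : ContDiff ℝ 2 g) {A a : ℝ → ℝ} (hA : ContDiff ℝ 2 A)
    (ha : ContDiff ℝ 2 a) (hAa : deriv A = a)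
    (hc : HasCompactSupport (fun x => A (g x 0) * (a (g x 1) * a (g x 2)))) :
    ∫ x, (a (g x 0) * (a (g x 1) * a (g x 2))) * (fderiv ℝ g x).det = 0 := by
  have hgi : ∀ i, ContDiff ℝ 2 (cmp g i) := cmp_contDiff hg
  have hgd : ∀ i, Differentiable ℝ (cmp g i) := fun i => (hgi i).differentiable (by norm_num)
  have had := ha.differentiable (n := 2) (by norm_num)
  have hAd := hA.differentiable (n := 2) (by norm_num)
  have hu : ContDiff ℝ 2 (fun x => A (cmp g 0 x) * (a (cmp g 1 x) * a (cmp g 2 x))) :=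
    (hA.comp (hgi 0)).mul ((ha.comp (hgi 1)).mul (ha.comp (hgi 2)))
  have := piola hu (hgi 1) (hgi 2) hc
  rw [← this]
  congr 1
  ext x
  rw [det_eq (hg.of_le (by norm_num))]
  have hh : ∀ i, pd (fun x => A (cmp g 0 x) * (a (cmp g 1 x) * a (cmp g 2 x))) i x =
      a (cmp g 0 x) * pd (cmp g 0) i x * (a (cmp g 1 x) * a (cmp g 2 x)) +
      A (cmp g 0 x) * (deriv a (cmp g 1 x) * pd (cmp g 1) i x * a (cmp g 2 x) +
        a (cmp g 1 x) * (deriv a (cmp g 2 x) * pd (cmp g 2) i x)) := by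
    intro i
    rw [pd_mul (f := fun x => A (cmp g 0 x)) (g := fun x => a (cmp g 1 x) * a (cmp g 2 x))
      (hAd.comp (hgd 0)) ((had.comp (hgd 1)).mul (had.comp (hgd 2))),
      pd_mul (f := fun x => a (cmp g 1 x)) (g := fun x => a (cmp g 2 x)) (had.comp (hgd 1))
      (had.comp (hgd 2)), pd_comp hAd (hgd 0), pd_comp had (hgd 1), pd_comp had (hgd 2), hAa]
  unfold det3
  simp only [hh]
  simp only [cmp]
  ring

lemma sum_pm_even {ι : Type*} (s : Finset ι) (σ : ι → ℝ) (hσ : ∀ i ∈ s, σ i = 1 ∨ σ i = -1)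
    (h0 : ∑ i ∈ s, σ i = 0) : Even s.card := by
  classical
  have h : ∀ t : Finset ι, (∀ i ∈ t, σ i = 1 ∨ σ i = -1) →
      ∃ k : ℤ, ∑ i ∈ t, σ i = t.card + 2 * k := by
    intro t
    induction t using Finset.induction_on with
    | empty => intro _; exact ⟨0, by simp⟩
    | insert i t hi ih =>
      intro ht
      obtain ⟨k, hk⟩ := ih (fun j hj => ht j (Finset.mem_insert_of_mem hj))
      rw [Finset.sum_insert hi, Finset.card_insert_of_notMem hi, hk]
      rcases ht i (Finset.mem_insert_self _ _) with h | h
      · exact ⟨k, by rw [h]; push_cast; ring⟩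
      · exact ⟨k - 1, by rw [h]; push_cast; ring⟩
  obtain ⟨k, hk⟩ := h s hσ
  rw [h0] at hk
  have : (s.card : ℤ) + 2 * k = 0 := by exact_mod_cast hk.symm
  have h2 : Even (s.card : ℤ) := ⟨-k, by linarith⟩
  exact_mod_cast h2

lemma zeros_finite {g : E3 → E3} (hg : ContDiff ℝ 2 g) {q : E3} (hq : q ≠ 0)
    (hlim : Tendsto g (cocompact E3) (𝓝 q))
    (hnd : ∀ x, g x = 0 → Function.Injective (fderiv ℝ g x)) : {x | g x = 0}.Finite := by
  have hcl : IsClosed {x | g x = 0} := isClosed_eq hg.continuous continuous_const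
  have hev : ∀ᶠ x in cocompact E3, g x ≠ 0 := hlim.eventually_ne hq
  obtain ⟨K, hK, hKs⟩ := mem_cocompact.1 hev
  have hcomp : IsCompact {x | g x = 0} := by
    refine hK.of_isClosed_subset hcl ?_
    intro x hx
    by_contra h
    exact hKs h hx
  refine hcomp.finite ?_
  rw [isDiscrete_iff_forall_mem_exists_isOpen]
  intro x hx
  have hne : ∀ᶠ y in 𝓝[≠] x, g y ≠ g x := by
    have hd := (hg.differentiable (by norm_num) x).hasFDerivAt
    obtain ⟨c, hc, hca⟩ := (fderiv ℝ g x).toLinearMap.exists_antilipschitzWith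
      (LinearMap.ker_eq_bot.2 (hnd x hx))
    exact hd.eventually_ne ⟨c, hca⟩
  rw [eventually_nhdsWithin_iff] at hne
  obtain ⟨U, hU, hUo, hxU⟩ := _root_.eventually_nhds_iff.1 hne
  refine ⟨U, hUo, ?_⟩
  ext y
  constructor
  · rintro ⟨hyU, hy⟩
    by_contra h
    exact hU y hyU h (by rw [hy, hx])
  · rintro rfl; exact ⟨hxU, hx⟩

end PartA2

section PartA3
open MeasureTheory Filter Topology

lemma equiv_of_inj {V W : Type*} [NormedAddCommGroup V] [NormedSpace ℝ V] [NormedAddCommGroup W]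
    [NormedSpace ℝ W] [FiniteDimensional ℝ V] [FiniteDimensional ℝ W]
    (f : V →L[ℝ] W) (hf : Function.Injective f) (hd : Module.finrank ℝ V = Module.finrank ℝ W) :
    ∃ e : V ≃L[ℝ] W, (e : V →L[ℝ] W) = f := by
  let e := LinearEquiv.ofInjectiveOfFinrankEq (f : V →ₗ[ℝ] W) hf hd
  exact ⟨e.toContinuousLinearEquiv, by ext x; rfl⟩

lemma local_nice {g : E3 → E3} (hg : ContDiff ℝ 2 g) (z : E3)
    (hnd : Function.Injective (fderiv ℝ g z)) :
    ∃ W ∈ 𝓝 z, InjOn g W ∧ (∃ σ : ℝ, (σ = 1 ∨ σ = -1) ∧ ∀ x ∈ W, (fderiv ℝ g x).det =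
      σ * |(fderiv ℝ g x).det|) ∧ ∀ U ∈ 𝓝 z, g '' U ∈ 𝓝 (g z) := by
  obtain ⟨e, he⟩ := equiv_of_inj _ hnd rfl
  have hs : HasStrictFDerivAt g (e : E3 →L[ℝ] E3) z := by
    rw [he]; exact hg.contDiffAt.hasStrictFDerivAt (by norm_num)
  let P := hs.toOpenPartialHomeomorph g
  have hdet : (fderiv ℝ g z).det ≠ 0 := by
    rw [← he]
    exact (LinearEquiv.isUnit_det' e.toLinearEquiv).ne_zero
  have hcont : Continuous fun x => (fderiv ℝ g x).det :=
    ContinuousLinearMap.continuous_det.comp (hg.continuous_fderiv (by norm_num))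
  have hsrc : P.source ∈ 𝓝 z := P.open_source.mem_nhds hs.mem_toOpenPartialHomeomorph_source
  have hU : ∀ U ∈ 𝓝 z, g '' U ∈ 𝓝 (g z) := by
    intro U hU
    rw [← hs.map_nhds_eq_of_equiv]
    exact image_mem_map hU
  rcases lt_or_gt_of_ne hdet with h | h
  · refine ⟨P.source ∩ {x | (fderiv ℝ g x).det < 0}, inter_mem hsrc
      ((isOpen_lt hcont continuous_const).mem_nhds h), ?_, ⟨-1, Or.inr rfl, ?_⟩, hU⟩
    · exact P.injOn.mono inter_subset_left
    · rintro x ⟨_, hx⟩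
      rw [abs_of_neg hx]; ring
  · refine ⟨P.source ∩ {x | 0 < (fderiv ℝ g x).det}, inter_mem hsrc
      ((isOpen_lt continuous_const hcont).mem_nhds h), ?_, ⟨1, Or.inl rfl, ?_⟩, hU⟩
    · exact P.injOn.mono inter_subset_left
    · rintro x ⟨_, hx⟩
      rw [abs_of_pos hx]; ring

lemma cube_small {U : Set E3} (hU : U ∈ 𝓝 (0 : E3)) :
    ∃ δ > 0, ∀ ε, ε ≤ δ → ∀ y : E3, (∀ i, |y i| < ε) → y ∈ U := by
  obtain ⟨r, hr, hrU⟩ := Metric.mem_nhds_iff.1 hU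
  refine ⟨r / 2, by positivity, fun ε hε y hy => hrU ?_⟩
  rw [mem_ball_zero_iff, EuclideanSpace.norm_eq]
  have h1 : ∀ i, ‖y i‖ ^ 2 ≤ (r/2) ^ 2 := by
    intro i
    have := (hy i).le.trans hε
    rw [Real.norm_eq_abs]
    exact pow_le_pow_left₀ (abs_nonneg _) this 2
  have : ∑ i, ‖y i‖ ^ 2 ≤ 3 * (r/2)^2 := by
    rw [Fin.sum_univ_three]
    have a := h1 0; have b := h1 1; have c := h1 2
    linarith
  rw [Real.sqrt_lt' hr]
  nlinarith

lemma zeros_even0 {g : E3 → E3} (hg : ContDiff ℝ 2 g) {q : E3} (hq : q 0 < 0)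
    (hlim : Tendsto g (cocompact E3) (𝓝 q))
    (hnd : ∀ x, g x = 0 → Function.Injective (fderiv ℝ g x)) : Even {x | g x = 0}.ncard := by
  have hq0 : q ≠ 0 := by rintro rfl; simp at hq
  have hfin := zeros_finite hg hq0 hlim hnd
  set Z := hfin.toFinset with hZ
  have memZ : ∀ z, z ∈ Z ↔ g z = 0 := by intro z; simp [hZ]
  rw [ncard_eq_toFinset_card _ hfin]
  obtain ⟨S, hS, hSd⟩ := hfin.t2_separation
  have hloc : ∀ z : E3, ∃ U : Set E3, ∃ σ : ℝ, g z = 0 → (IsOpen U ∧ z ∈ U ∧ U ⊆ S z ∧ InjOn g U ∧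
      (σ = 1 ∨ σ = -1) ∧ (∀ x ∈ U, (fderiv ℝ g x).det = σ * |(fderiv ℝ g x).det|) ∧
      g '' U ∈ 𝓝 (0 : E3)) := by
    intro z
    by_cases hz : g z = 0
    · obtain ⟨W, hW, hinj, ⟨σ, hσ, hdet⟩, him⟩ := local_nice hg z (hnd z hz)
      refine ⟨interior W ∩ S z, σ, fun _ => ⟨isOpen_interior.inter (hS z).2,
        ⟨mem_interior_iff_mem_nhds.2 hW, (hS z).1⟩, inter_subset_right,
        hinj.mono (inter_subset_left.trans interior_subset), hσ,
        fun x hx => hdet x (interior_subset hx.1), ?_⟩⟩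
      rw [← hz]
      exact him _ ((isOpen_interior.inter (hS z).2).mem_nhds
        ⟨mem_interior_iff_mem_nhds.2 hW, (hS z).1⟩)
    · exact ⟨∅, 0, fun h => absurd h hz⟩
  choose U σ hU using hloc
  have hUop : IsOpen (⋃ z ∈ Z, U z) :=
    isOpen_biUnion fun z hz => (hU z ((memZ z).1 hz)).1
  have h1 : (⋂ z ∈ Z, g '' U z) ∈ 𝓝 (0 : E3) :=
    (biInter_finset_mem Z).2 fun z hz => (hU z ((memZ z).1 hz)).2.2.2.2.2.2
  obtain ⟨V0, V1, hV0, hV1, h0V, hqV, hVd⟩ := t2_separation hq0.symm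
  obtain ⟨K, hK, hKs⟩ := mem_cocompact.1 (hlim (hV1.mem_nhds hqV))
  have hcomp : IsCompact (g '' (K ∩ (⋃ z ∈ Z, U z)ᶜ)) :=
    (hK.inter_right hUop.isClosed_compl).image hg.continuous
  have h2 : V0 ∩ (g '' (K ∩ (⋃ z ∈ Z, U z)ᶜ))ᶜ ∈ 𝓝 (0 : E3) := by
    refine inter_mem (hV0.mem_nhds h0V) (hcomp.isClosed.isOpen_compl.mem_nhds ?_)
    rintro ⟨x, ⟨_, hx⟩, hx0⟩
    exact hx (mem_biUnion ((memZ x).2 hx0) (hU x hx0).2.1)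
  obtain ⟨δ1, hδ1, hc1⟩ := cube_small h1
  obtain ⟨δ2, hδ2, hc2⟩ := cube_small h2
  obtain ⟨ε, hε, he1, he2, he3⟩ : ∃ ε > 0, ε ≤ δ1 ∧ ε ≤ δ2 ∧ ε ≤ - q 0 / 2 :=
    ⟨min δ1 (min δ2 (- q 0 / 2)), by
      have : 0 < - q 0 / 2 := by linarith
      positivity, min_le_left _ _, (min_le_right _ _).trans (min_le_left _ _),
      (min_le_right _ _).trans (min_le_right _ _)⟩
  obtain ⟨A, a, hA, ha, hAa, hapos, ha0, hasupp, hAsupp⟩ := exists_bump ε hε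
  let ψ : E3 → ℝ := fun y => a (y 0) * (a (y 1) * a (y 2))
  have hψc : Continuous ψ := by
    have := ha.continuous
    fun_prop
  have hψs : ∀ y, ψ y ≠ 0 → ∀ i, |y i| < ε := by
    intro y hy i
    by_contra h
    push Not at h
    apply hy
    have := hasupp _ h
    fin_cases i <;> simp_all [ψ]
  have hcs : HasCompactSupport (fun x => A (g x 0) * (a (g x 1) * a (g x 2))) := by
    have : ∀ᶠ y in 𝓝 q, y 0 < q 0 / 2 := by
      have hc : Continuous fun y : E3 => y 0 := by fun_prop
      exact hc.continuousAt.eventually_lt continuousAt_const (by linarith)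
    obtain ⟨K2, hK2, hK2s⟩ := mem_cocompact.1 (hlim.eventually this)
    refine HasCompactSupport.intro hK2 fun x hx => ?_
    have h3 : g x 0 < q 0 / 2 := hK2s hx
    rw [hAsupp _ (by linarith)]; simp
  have hint := integral_zero hg hA ha hAa hcs
  have hdetc : Continuous fun x => (fderiv ℝ g x).det :=
    ContinuousLinearMap.continuous_det.comp (hg.continuous_fderiv (by norm_num))
  have hψg : ∀ x, ψ (g x) ≠ 0 → x ∈ ⋃ z ∈ Z, U z := by
    intro x hx
    have h3 := hc2 ε he2 _ (hψs _ hx)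
    by_contra hxU
    by_cases hxK : x ∈ K
    · exact h3.2 ⟨x, ⟨hxK, hxU⟩, rfl⟩
    · have : g x ∈ V1 := hKs hxK
      exact (disjoint_left.1 hVd) h3.1 this
  have hψpos : 0 < ∫ y, ψ y := by
    refine hψc.integral_pos_of_hasCompactSupport_nonneg_nonzero ?_ ?_ (x := 0) ?_
    · refine HasCompactSupport.intro (isCompact_closedBall (0 : E3) (2 * ε)) fun y hy => ?_
      by_contra hne
      apply hy
      have h3 := hψs y hne
      rw [mem_closedBall_zero_iff, EuclideanSpace.norm_eq, Real.sqrt_le_left (by positivity),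
        Fin.sum_univ_three]
      have : ∀ i, ‖y i‖ ^ 2 ≤ ε ^ 2 := fun i => by
        rw [Real.norm_eq_abs]; exact pow_le_pow_left₀ (abs_nonneg _) (h3 i).le 2
      have a := this 0; have b := this 1; have c := this 2
      nlinarith
    · intro y
      exact mul_nonneg (hapos _) (mul_nonneg (hapos _) (hapos _))
    · simp only [ψ, PiLp.zero_apply]; positivity
  have hψi : ∀ z ∈ Z, ∫ x in U z, ψ (g x) * (fderiv ℝ g x).det = σ z * ∫ y, ψ y := by
    intro z hz
    obtain ⟨o, _, _, hinj, _, hdet, _⟩ := hU z ((memZ z).1 hz)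
    have e1 : ∫ x in U z, ψ (g x) * (fderiv ℝ g x).det =
        ∫ x in U z, σ z * (|(fderiv ℝ g x).det| • ψ (g x)) := by
      refine setIntegral_congr_fun o.measurableSet fun x hx => ?_
      simp only [smul_eq_mul]
      rw [hdet x hx]
      rcases (hU z ((memZ z).1 hz)).2.2.2.2.1 with h | h <;> simp [h] <;> ring
    rw [e1, integral_const_mul, ← integral_image_eq_integral_abs_det_fderiv_smul volume o.measurableSet
      (fun x _ => (hg.differentiable (by norm_num) x).hasFDerivAt.hasFDerivWithinAt) hinj,
      setIntegral_eq_integral_of_forall_compl_eq_zero]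
    intro y hy
    by_contra hne
    have := hc1 ε he1 y (hψs y hne)
    simp only [mem_iInter] at this
    exact hy (this z hz)
  have hsum : ∫ x, ψ (g x) * (fderiv ℝ g x).det = ∑ z ∈ Z, σ z * ∫ y, ψ y := by
    rw [← Finset.sum_congr rfl hψi, ← integral_biUnion_finset Z
      (fun z hz => (hU z ((memZ z).1 hz)).1.measurableSet)]
    · rw [setIntegral_eq_integral_of_forall_compl_eq_zero]
      intro x hx
      by_contra hne
      exact hx (hψg x (left_ne_zero_of_mul hne))
    · intro z hz w hw hzw
      have hz' := (memZ z).1 hz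
      have hw' := (memZ w).1 hw
      exact (hSd hz' hw' hzw).mono (hU z hz').2.2.1 (hU w hw').2.2.1
    · intro z hz
      refine Integrable.integrableOn ?_
      refine Continuous.integrable_of_hasCompactSupport ((hψc.comp hg.continuous).mul hdetc) ?_
      refine HasCompactSupport.mul_right ?_
      refine HasCompactSupport.intro hK fun x hx => ?_
      by_contra hne
      have h3 := hc2 ε he2 _ (hψs _ hne)
      have : g x ∈ V1 := hKs hx
      exact (disjoint_left.1 hVd) h3.1 this
  have h3 : ∑ z ∈ Z, σ z = 0 := by
    rw [← Finset.sum_mul] at hsum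
    have : (∑ z ∈ Z, σ z) * ∫ y, ψ y = 0 := by rw [← hsum]; exact hint
    rcases mul_eq_zero.1 this with h | h
    · exact h
    · exact absurd h hψpos.ne'
  exact sum_pm_even Z σ (fun z hz => (hU z ((memZ z).1 hz)).2.2.2.2.1) h3

lemma zeros_even {g : E3 → E3} (hg : ContDiff ℝ 2 g) {q : E3} (hq : q ≠ 0)
    (hlim : Tendsto g (cocompact E3) (𝓝 q))
    (hnd : ∀ x, g x = 0 → Function.Injective (fderiv ℝ g x)) : Even {x | g x = 0}.ncard := by
  have hb : (-bv 0 : E3) ≠ 0 := by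
    intro h
    have := congrArg (fun y : E3 => y 0) h
    simp [bv] at this
  obtain ⟨R, hR⟩ := SeparatingDual.exists_continuousLinearEquiv_apply_eq (R := ℝ) hq hb
  have := zeros_even0 (g := fun x => R (g x)) (R.contDiff.comp hg) (q := R q) (by rw [hR]; simp [bv])
    ((R.continuous.tendsto q).comp hlim) (by
      intro x hx
      have h0 : g x = 0 := by simpa using hx
      have h1 : fderiv ℝ (fun x => R (g x)) x = (R : E3 →L[ℝ] E3).comp (fderiv ℝ g x) :=
        ((R : E3 →L[ℝ] E3).hasFDerivAt.comp x (hg.differentiable (by norm_num) x).hasFDerivAt).fderiv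
      rw [h1]
      exact R.injective.comp (hnd x h0))
  simpa using this

end PartA3

section PartB1
open Filter Topology

lemma nv_mem {y : E} (hy : y ≠ 0) : ‖y‖⁻¹ • y ∈ sphere (0 : E) 1 := by
  have : ‖y‖ ≠ 0 := norm_ne_zero_iff.2 hy
  simp [norm_smul, this]

def pole0 : Sph := ⟨EuclideanSpace.single 0 1, by simp⟩

open Classical in
def nv (y : E) : Sph := if h : y ≠ 0 then ⟨‖y‖⁻¹ • y, nv_mem h⟩ else pole0

lemma nv_coe {y : E} (hy : y ≠ 0) : ((nv y : Sph) : E) = ‖y‖⁻¹ • y := by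
  simp [nv, hy]

lemma nv_smul {y : E} (hy : y ≠ 0) {s : ℝ} (hs : 0 < s) : nv (s • y) = nv y := by
  apply Subtype.ext
  rw [nv_coe hy, nv_coe (smul_ne_zero hs.ne' hy), norm_smul, smul_smul, Real.norm_of_nonneg hs.le]
  congr 1
  field_simp

lemma sph_ne (x : Sph) : (x : E) ≠ 0 := ne_zero_of_mem_unit_sphere x

lemma sph_norm (x : Sph) : ‖(x : E)‖ = 1 := norm_eq_of_mem_sphere x

lemma nv_self (x : Sph) : nv (x : E) = x := by
  apply Subtype.ext
  rw [nv_coe (sph_ne x), sph_norm]; simp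

def Ux (x : Sph) : ((ℝ ∙ ((-x : Sph) : E))ᗮ) ≃ₗᵢ[ℝ] E3 :=
  (OrthonormalBasis.fromOrthogonalSpanSingleton 3 (ne_zero_of_mem_unit_sphere (-x))).repr

def Rx (x : Sph) (y : E) : E3 := Ux x (stereoToFun ((-x : Sph) : E) y)

def Sx (x : Sph) (u : E3) : E := ((stereographic' 3 (-x)).symm u : Sph)

lemma Sx_mem (x : Sph) (u : E3) : Sx x u ∈ sphere (0 : E) 1 := ((stereographic' 3 (-x)).symm u).2

lemma Sx_norm (x : Sph) (u : E3) : ‖Sx x u‖ = 1 := norm_eq_of_mem_sphere ((stereographic' 3 (-x)).symm u)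

lemma Sx_contDiff (x : Sph) {n : WithTop ℕ∞} : ContDiff ℝ n (Sx x) := by
  have : Sx x = stereoInvFunAux ((-x : Sph) : E) ∘ ((ℝ ∙ ((-x : Sph) : E))ᗮ.subtypeL ∘ (Ux x).symm) := rfl
  rw [this]
  exact contDiff_stereoInvFunAux.comp ((ContinuousLinearMap.contDiff _).comp (Ux x).symm.contDiff)

lemma Rx_eq (x y : Sph) : stereographic' 3 (-x) y = Rx x y := rfl

lemma Rx_Sx (x : Sph) (u : E3) : Rx x (Sx x u) = u := by
  have : Rx x (Sx x u) = stereographic' 3 (-x) ((stereographic' 3 (-x)).symm u) := rfl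
  rw [this]
  exact (stereographic' 3 (-x)).right_inv (by simp)

lemma Sx_ne (x : Sph) (u : E3) : Sx x u ≠ -(x : E) := by
  have := (stereographic' 3 (-x)).map_target (x := u) (by simp)
  rw [stereographic'_source] at this
  intro h
  apply this
  apply Subtype.ext
  simpa [Sx] using h

lemma Sx_Rx (x y : Sph) (h : y ≠ -x) : Sx x (Rx x y) = y := by
  have := (stereographic' 3 (-x)).left_inv (x := y) (by simpa using h)
  exact congrArg Subtype.val this

lemma Rx_contDiffAt (x : Sph) {y : E} (hy : inner ℝ ((-x : Sph) : E) y ≠ (1 : ℝ)) {n : WithTop ℕ∞} :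
    ContDiffAt ℝ n (Rx x) y := by
  have h1 : ContDiffAt ℝ n (stereoToFun ((-x : Sph) : E)) y := by
    refine contDiffOn_stereoToFun.contDiffAt ?_
    exact ((isOpen_ne_fun (by fun_prop) continuous_const).mem_nhds hy)
  exact (Ux x).contDiff.contDiffAt.comp y h1

lemma inner_ne_one (x y : Sph) (h : y ≠ -x) : inner ℝ ((-x : Sph) : E) (y : E) ≠ (1 : ℝ) := by
  intro h1
  rw [← sphere_ext_iff] at h1
  exact h h1.symm

lemma Sx_inj_fderiv (x : Sph) (u : E3) : Function.Injective (fderiv ℝ (Sx x) u) := by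
  have hd : HasFDerivAt (Sx x) (fderiv ℝ (Sx x) u) u :=
    ((Sx_contDiff x (n := 1)).differentiable (by norm_num) u).hasFDerivAt
  have hR : HasFDerivAt (Rx x) (fderiv ℝ (Rx x) (Sx x u)) (Sx x u) := by
    refine ((Rx_contDiffAt x (n := 1) ?_).differentiableAt (by norm_num)).hasFDerivAt
    refine inner_ne_one x ⟨Sx x u, Sx_mem x u⟩ ?_
    intro h
    exact Sx_ne x u (by simpa using congrArg Subtype.val h)
  have hc := hR.comp u hd
  have : Rx x ∘ Sx x = id := funext (Rx_Sx x)
  rw [this] at hc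
  have h2 := hc.unique (hasFDerivAt_id u)
  intro v w hvw
  have := congrArg (fun T => T v - T w) h2
  simp [hvw] at this
  exact sub_eq_zero.1 this.symm

lemma inner_fderiv_zero {V : Type*} [NormedAddCommGroup V] [NormedSpace ℝ V] {φ : V → E} {u : V}
    {φ' : V →L[ℝ] E} (hφ : HasFDerivAt φ φ' u) (h1 : ∀ᶠ w in 𝓝 u, ‖φ w‖ = 1) (v : V) :
    inner ℝ (φ u) (φ' v) = 0 := by
  have h2 := hφ.norm_sq
  have h3 : HasFDerivAt (fun w => ‖φ w‖ ^ 2) (0 : V →L[ℝ] ℝ) u := by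
    refine (hasFDerivAt_const (1 : ℝ) u).congr_of_eventuallyEq ?_
    filter_upwards [h1] with w hw
    simp [hw]
  have := congrArg (fun T => T v) (h2.unique h3)
  simpa using this

lemma Sx_surj_fderiv (x : Sph) (u : E3) (w : E) (hw : inner ℝ (Sx x u) w = 0) :
    ∃ v, fderiv ℝ (Sx x) u v = w := by
  have hd : HasFDerivAt (Sx x) (fderiv ℝ (Sx x) u) u :=
    ((Sx_contDiff x (n := 1)).differentiable (by norm_num) u).hasFDerivAt
  have hle : LinearMap.range (fderiv ℝ (Sx x) u).toLinearMap ≤ (ℝ ∙ (Sx x u))ᗮ := by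
    rintro _ ⟨v, rfl⟩
    rw [Submodule.mem_orthogonal_singleton_iff_inner_right]
    exact inner_fderiv_zero hd (Eventually.of_forall (Sx_norm x)) v
  have heq : LinearMap.range (fderiv ℝ (Sx x) u).toLinearMap = (ℝ ∙ (Sx x u))ᗮ := by
    apply Submodule.eq_of_le_of_finrank_eq hle
    rw [LinearMap.finrank_range_of_inj (Sx_inj_fderiv x u)]
    have : Module.finrank ℝ ((ℝ ∙ (Sx x u))ᗮ : Submodule ℝ E) = 3 := by
      refine Submodule.finrank_orthogonal_span_singleton (n := 3) ?_
      intro h0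
      have := Sx_norm x u
      rw [h0] at this; simp at this
    rw [this]; simp
  have : w ∈ LinearMap.range (fderiv ℝ (Sx x) u).toLinearMap := by
    rw [heq, Submodule.mem_orthogonal_singleton_iff_inner_right]; exact hw
  exact this

lemma Sx_tendsto (x : Sph) : Tendsto (Sx x) (cocompact E3) (𝓝 (-(x : E))) := by
  rw [tendsto_def]
  intro V hV
  obtain ⟨O, hOV, hO, hxO⟩ := _root_.mem_nhds_iff.1 hV
  have hK : IsCompact {y : Sph | (y : E) ∉ O} := by
    refine IsClosed.isCompact ?_
    exact (hO.preimage continuous_subtype_val).isClosed_compl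
  have hc : IsCompact (stereographic' 3 (-x) '' {y : Sph | (y : E) ∉ O}) := by
    refine hK.image_of_continuousOn ((stereographic' 3 (-x)).continuousOn.mono ?_)
    intro y hy
    rw [stereographic'_source]
    rintro rfl
    exact hy (by simpa using hxO)
  refine mem_cocompact.2 ⟨_, hc, ?_⟩
  intro u hu
  by_contra h
  apply hu
  refine ⟨(stereographic' 3 (-x)).symm u, fun h2 => h (hOV h2), ?_⟩
  exact (stereographic' 3 (-x)).right_inv (by simp)

lemma nv_contMDiffAt {y : E} (hy : y ≠ 0) {n : WithTop ℕ∞} :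
    ContMDiffAt 𝓘(ℝ, E) (𝓡 3) n nv y := by
  have hsm : ContDiffAt ℝ n (fun y : E => ‖y‖⁻¹ • y) y :=
    ((contDiffAt_norm ℝ hy).inv (norm_ne_zero_iff.2 hy)).smul contDiffAt_id
  have hev : ∀ᶠ y' in 𝓝 y, ((nv y' : Sph) : E) = ‖y'‖⁻¹ • y' := by
    filter_upwards [isOpen_ne.mem_nhds hy] with y' h using nv_coe h
  rw [contMDiffAt_iff_target]
  constructor
  · have hcont : ContinuousAt (fun y : E => ((nv y : Sph) : E)) y :=
      hsm.continuousAt.congr (hev.mono fun _ h => h.symm)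
    exact Topology.IsInducing.subtypeVal.continuousAt_iff.2 hcont
  · rw [contMDiffAt_iff_contDiffAt]
    have h1 : ContDiffAt ℝ n (fun y' : E => Rx (nv y) (‖y'‖⁻¹ • y')) y := by
      refine ContDiffAt.comp y (g := Rx (nv y)) ?_ hsm
      rw [← nv_coe hy]
      refine Rx_contDiffAt _ (inner_ne_one _ _ ?_)
      intro h
      exact ne_neg_of_mem_unit_sphere ℝ (nv y) h
    refine h1.congr_of_eventuallyEq ?_
    filter_upwards [hev] with y' h
    rw [← h]
    rfl

end PartB1

section PartB2
open MeasureTheory Filter Topology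

lemma circ_coe_smooth {m : WithTop ℕ∞} : ContMDiff (𝓡 1) 𝓘(ℝ, ℂ) m (fun z : Circle => (z : ℂ)) :=
  haveI := finrank_real_complex_fact'
  contMDiff_coe_sphere (E := ℂ)

lemma circ_coe_inj (z : Circle) :
    Function.Injective (mfderiv (𝓡 1) 𝓘(ℝ, ℂ) (fun z : Circle => (z : ℂ)) z) :=
  haveI := finrank_real_complex_fact'
  mfderiv_coe_sphere_injective (E := ℂ) z


open Classical in
def fS (F : BRMap L) (x : Sph) : ℂ := if h : x ∈ L.compl then (F.f ⟨x, h⟩ : ℂ) else 0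

def fE (F : BRMap L) (y : E) : ℂ := fS F (nv y)

def dom (L : Link) : Set E := {y | y ≠ 0 ∧ nv y ∈ L.compl}

lemma fS_eq (F : BRMap L) (x : L.compl) : fS F x = F.f x := by
  have : (x : Sph) ∈ L.compl := x.2
  simp [fS]

lemma fE_sph (F : BRMap L) (x : L.compl) : fE F ((x : Sph) : E) = F.f x := by
  rw [fE, nv_self, fS_eq]

lemma nv_contAt {y : E} (hy : y ≠ 0) : ContinuousAt nv y := (nv_contMDiffAt hy (n := 0)).continuousAt

lemma dom_open (L : Link) : IsOpen (dom L) := by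
  rw [isOpen_iff_mem_nhds]
  rintro y ⟨hy, h⟩
  filter_upwards [isOpen_ne.mem_nhds hy, (nv_contAt hy).preimage_mem_nhds (L.compl.2.mem_nhds h)]
    with z h1 h2 using ⟨h1, h2⟩

lemma dom_sph (x : L.compl) : ((x : Sph) : E) ∈ dom L := ⟨sph_ne _, by rw [nv_self]; exact x.2⟩

lemma fE_norm (F : BRMap L) {y : E} (hy : y ∈ dom L) : ‖fE F y‖ = 1 := by
  have := fS_eq F ⟨nv y, hy.2⟩
  have h2 : fE F y = (F.f ⟨nv y, hy.2⟩ : ℂ) := this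
  rw [h2]; exact Circle.norm_coe _

lemma fE_smul (F : BRMap L) {y : E} (hy : y ≠ 0) {s : ℝ} (hs : 0 < s) : fE F (s • y) = fE F y := by
  rw [fE, nv_smul hy hs, fE]

lemma dom_smul {y : E} (hy : y ∈ dom L) {s : ℝ} (hs : 0 < s) : s • y ∈ dom L :=
  ⟨smul_ne_zero hs.ne' hy.1, by rw [nv_smul hy.1 hs]; exact hy.2⟩

lemma fE_contDiffAt (F : BRMap L) {y : E} (hy : y ∈ dom L) :
    ContDiffAt ℝ ((⊤ : ℕ∞) : WithTop ℕ∞) (fE F) y := by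
  rw [← contMDiffAt_iff_contDiffAt]
  have h1 : ContMDiffAt (𝓡 3) 𝓘(ℝ, ℂ) ((⊤ : ℕ∞) : WithTop ℕ∞) (fS F) (nv y) := by
    have h2 : ContMDiffAt (𝓡 3) 𝓘(ℝ, ℂ) ((⊤ : ℕ∞) : WithTop ℕ∞) (fun x : L.compl => fS F x) ⟨nv y, hy.2⟩ := by
      have : (fun x : L.compl => fS F x) = fun x => (F.f x : ℂ) := funext (fS_eq F)
      rw [this]
      exact (circ_coe_smooth _).comp _ (F.smooth _)
    exact contMDiffAt_subtype_iff.1 h2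
  exact h1.comp y (nv_contMDiffAt hy.1)

lemma fE_diff (F : BRMap L) {y : E} (hy : y ∈ dom L) : DifferentiableAt ℝ (fE F) y :=
  (fE_contDiffAt F hy).differentiableAt (by simp)

lemma fE_radial (F : BRMap L) {y : E} (hy : y ∈ dom L) : fderiv ℝ (fE F) y y = 0 := by
  have h1 : HasDerivAt (fun s : ℝ => s • y) y 1 := by
    simpa using (hasDerivAt_id (1 : ℝ)).smul_const y
  have h2 : HasFDerivAt (fE F) (fderiv ℝ (fE F) y) ((1 : ℝ) • y) := by
    rw [one_smul]; exact (fE_diff F hy).hasFDerivAt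
  have h3 := h2.comp_hasDerivAt 1 h1
  have h4 : HasDerivAt (fE F ∘ fun s : ℝ => s • y) 0 1 := by
    refine (hasDerivAt_const (1 : ℝ) (fE F y)).congr_of_eventuallyEq ?_
    filter_upwards [lt_mem_nhds (show (0 : ℝ) < 1 by norm_num)] with s hs
    exact fE_smul F hy.1 hs
  exact h3.unique h4

lemma chart_symm (x : L.compl) : ∀ᶠ u in 𝓝 (extChartAt (𝓡 3) x x),
    ((((extChartAt (𝓡 3) x).symm u : L.compl) : Sph) : E) = Sx x u := by
  have h1 : (extChartAt (𝓡 3) x).target ∈ 𝓝 (extChartAt (𝓡 3) x x) := by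
    have := extChartAt_target_mem_nhdsWithin (I := 𝓡 3) x
    simpa using this
  filter_upwards [h1] with u hu
  have h2 : u ∈ (chartAt E3 x).target := by simpa [extChartAt] using hu
  rw [TopologicalSpace.Opens.chartAt_eq] at h2
  have h3 := (chartAt E3 (x : Sph)).subtypeRestr_symm_eqOn ⟨x⟩ h2
  have h4 : ((((extChartAt (𝓡 3) x).symm u : L.compl) : Sph)) = (chartAt E3 (x : Sph)).symm u := by
    rw [h3]
    simp only [extChartAt, mfld_simps]
    rw [TopologicalSpace.Opens.chartAt_eq]
  rw [h4]
  rfl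

lemma chart_self (x : L.compl) : extChartAt (𝓡 3) x x = Rx x (x : Sph) := by
  simp only [extChartAt, mfld_simps]
  rfl

lemma Sx_self (x : Sph) : Sx x (Rx x x) = x :=
  Sx_Rx x x (ne_neg_of_mem_unit_sphere ℝ x)

lemma fE_chart (F : BRMap L) (x : L.compl) :
    (fun u => (F.f ((extChartAt (𝓡 3) x).symm u) : ℂ)) =ᶠ[𝓝 (Rx x (x : Sph))] fun u => fE F (Sx x u) := by
  have := chart_symm x
  rw [chart_self] at this
  filter_upwards [this] with u hu
  rw [← hu, fE_sph]

lemma mfderiv_coe_f (F : BRMap L) (x : L.compl) (v : E3) :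
    mfderiv (𝓡 1) 𝓘(ℝ, ℂ) (fun z : Circle => (z : ℂ)) (F.f x) (mfderiv (𝓡 3) (𝓡 1) F.f x v)
      = fderiv ℝ (fE F) x (fderiv ℝ (Sx x) (Rx x (x : Sph)) v) := by
  have hd : MDifferentiableAt (𝓡 3) (𝓡 1) F.f x := (F.smooth x).mdifferentiableAt (by simp)
  have hc : MDifferentiableAt (𝓡 1) 𝓘(ℝ, ℂ) (fun z : Circle => (z : ℂ)) (F.f x) :=
    (circ_coe_smooth (m := 1) _).mdifferentiableAt (by simp)
  have h1 := mfderiv_comp x hc hd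
  have h2 : mfderiv (𝓡 3) 𝓘(ℝ, ℂ) ((fun z : Circle => (z : ℂ)) ∘ F.f) x
      = fderiv ℝ (fun u => fE F (Sx x u)) (Rx x (x : Sph)) := by
    have hcd : MDifferentiableAt (𝓡 3) 𝓘(ℝ, ℂ) ((fun z : Circle => (z : ℂ)) ∘ F.f) x := hc.comp x hd
    rw [hcd.mfderiv]
    simp only [writtenInExtChartAt, mfld_simps, fderivWithin_univ]
    have e := (fE_chart F x).fderiv_eq (𝕜 := ℝ)
    rw [← chart_self] at e ⊢
    exact e
  have h3 : HasFDerivAt (fun u => fE F (Sx x u))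
      ((fderiv ℝ (fE F) x).comp (fderiv ℝ (Sx x) (Rx x (x : Sph)))) (Rx x (x : Sph)) := by
    refine HasFDerivAt.comp (g := fE F) (f := Sx x) (Rx x (x : Sph)) ?_ (((Sx_contDiff x (n := 1)).differentiable (by norm_num) _).hasFDerivAt)
    rw [Sx_self]
    exact (fE_diff F (dom_sph x)).hasFDerivAt
  rw [h3.fderiv] at h2
  rw [h2] at h1
  have := congrArg (fun T => T v) h1
  exact this.symm

lemma isCrit_iff (F : BRMap L) (x : L.compl) :
    IsCrit F.f x ↔ fderiv ℝ (fE F) x = 0 := by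
  constructor
  · intro h
    have h0 : ∀ v, mfderiv (𝓡 3) (𝓡 1) F.f x v = 0 := by
      intro v
      by_contra hv
      apply h
      intro w
      have hf : Module.finrank ℝ (TangentSpace (𝓡 1) (F.f x)) = 1 := by
        change Module.finrank ℝ (EuclideanSpace ℝ (Fin 1)) = 1
        simp
      obtain ⟨c, hc⟩ := exists_smul_eq_of_finrank_eq_one hf hv w
      exact ⟨c • v, by rw [map_smul, hc]⟩
    ext1 w
    obtain ⟨v, hv⟩ := Sx_surj_fderiv x (Rx x (x : Sph)) (w - (inner ℝ ((x : Sph) : E) w : ℝ) • ((x : Sph) : E)) (by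
      rw [Sx_self, inner_sub_right, inner_smul_right, real_inner_self_eq_norm_sq, sph_norm]; simp)
    have h1 := mfderiv_coe_f F x v
    rw [hv, map_sub, map_smul, fE_radial F (dom_sph x)] at h1
    have h2 : mfderiv (𝓡 1) 𝓘(ℝ, ℂ) (fun z : Circle => (z : ℂ)) (F.f x)
      (mfderiv (𝓡 3) (𝓡 1) F.f x v) = 0 := (congrArg _ (h0 v)).trans (map_zero _)
    have h3 := h1.symm.trans h2
    rw [smul_zero, sub_zero] at h3
    exact h3
  · intro h hs
    have h0 : ∀ v, mfderiv (𝓡 3) (𝓡 1) F.f x v = 0 := by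
      intro v
      apply circ_coe_inj
      refine (mfderiv_coe_f F x v).trans ?_
      rw [h]
      exact (map_zero _).symm
    obtain ⟨v, hv⟩ := hs (EuclideanSpace.single 0 1 : EuclideanSpace ℝ (Fin 1))
    rw [h0] at hv
    have := congrArg (fun w : EuclideanSpace ℝ (Fin 1) => w 0) hv
    have h2 : (0 : EuclideanSpace ℝ (Fin 1)) 0 = (EuclideanSpace.single 0 1 : EuclideanSpace ℝ (Fin 1)) 0 := this
    simp at h2

end PartB2

section PartB3
open MeasureTheory Filter Topology

lemma comp2 {V : Type*} [NormedAddCommGroup V] [NormedSpace ℝ V] {A : V → E} {th : E → ℝ} {u : V}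
    (hA : ContDiffAt ℝ 2 A u) (hth : ContDiffAt ℝ 2 th (A u)) (h0 : fderiv ℝ th (A u) = 0) (v w : V) :
    fderiv ℝ (fun u' => fderiv ℝ (fun z => th (A z)) u' v) u w
      = fderiv ℝ (fderiv ℝ th) (A u) (fderiv ℝ A u w) (fderiv ℝ A u v) := by
  have e1 : ∀ᶠ u' in 𝓝 u, DifferentiableAt ℝ A u' := by
    filter_upwards [hA.eventually (by simp)] with u' h using h.differentiableAt (by simp)
  have e2 : ∀ᶠ u' in 𝓝 u, DifferentiableAt ℝ th (A u') := by
    filter_upwards [hA.continuousAt.eventually (hth.eventually (by simp))] with u' h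
      using h.differentiableAt (by simp)
  have e3 : (fun u' => fderiv ℝ (fun z => th (A z)) u' v) =ᶠ[𝓝 u]
      fun u' => (fderiv ℝ th (A u')) (fderiv ℝ A u' v) := by
    filter_upwards [e1, e2] with u' h1 h2
    have := (h2.hasFDerivAt.comp u' h1.hasFDerivAt).fderiv
    have h3 : fderiv ℝ (fun z => th (A z)) u' = _ := this
    rw [h3]; rfl
  rw [e3.fderiv_eq]
  have d1 : HasFDerivAt (fun u' => fderiv ℝ th (A u'))
      ((fderiv ℝ (fderiv ℝ th) (A u)).comp (fderiv ℝ A u)) u := by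
    refine HasFDerivAt.comp (g := fderiv ℝ th) u ?_ e1.self_of_nhds.hasFDerivAt
    exact ((hth.fderiv_right (m := 1) (by norm_num)).differentiableAt (by simp)).hasFDerivAt
  have d2 : HasFDerivAt (fun u' => fderiv ℝ A u' v) (fderiv ℝ (fun u' => fderiv ℝ A u' v) u) u := by
    have := (hA.fderiv_right (m := 1) (by norm_num)).differentiableAt (by simp)
    exact (this.clm_apply (differentiableAt_const v)).hasFDerivAt
  have d3 := d1.clm_apply d2
  rw [d3.fderiv]
  simp [h0]

def ang (h : E → ℂ) (y v : E) : ℝ := (starRingEnd ℂ (h y) * fderiv ℝ h y v).im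

def th (F : BRMap L) (x y : E) : ℝ := Complex.arg (fE F y / fE F x)

lemma th_eq (F : BRMap L) (x y : E) : th F x y = (Complex.log (fE F y / fE F x)).im := by
  rw [Complex.log_im]; rfl

lemma fE_ne (F : BRMap L) {y : E} (hy : y ∈ dom L) : fE F y ≠ 0 := by
  rw [← norm_ne_zero_iff, fE_norm F hy]; simp

lemma th_contDiffAt (F : BRMap L) {x y : E} (hy : y ∈ dom L)
    (hs : fE F y / fE F x ∈ Complex.slitPlane) :
    ContDiffAt ℝ ((⊤ : ℕ∞) : WithTop ℕ∞) (th F x) y := by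
  have : th F x = fun y => Complex.imCLM (Complex.log (fE F y / fE F x)) := funext (th_eq F x)
  rw [this]
  refine Complex.imCLM.contDiff.contDiffAt.comp y ?_
  have h2 : ContDiffAt ℝ ((⊤ : ℕ∞) : WithTop ℕ∞) (fun y => fE F y / fE F x) y := by
    simp only [div_eq_mul_inv]
    exact (fE_contDiffAt F hy).mul contDiffAt_const
  exact ((Complex.contDiffAt_log hs).restrict_scalars ℝ).comp y h2

lemma th_fderiv (F : BRMap L) {x y : E} (hx : x ∈ dom L) (hy : y ∈ dom L)
    (hs : fE F y / fE F x ∈ Complex.slitPlane) (v : E) :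
    fderiv ℝ (th F x) y v = ang (fE F) y v := by
  have h1 : HasFDerivAt (fun y => fE F y / fE F x) ((fE F x)⁻¹ • fderiv ℝ (fE F) y) y := by
    simp only [div_eq_inv_mul]
    exact (fE_diff F hy).hasFDerivAt.const_mul _
  have h2 := Complex.imCLM.hasFDerivAt.comp y
    (((Complex.hasStrictDerivAt_log hs).hasDerivAt.hasFDerivAt.restrictScalars ℝ).comp y h1)
  have h3 : HasFDerivAt (th F x) _ y := h2.congr_of_eventuallyEq (Eventually.of_forall (th_eq F x))
  rw [h3.fderiv]
  simp only [ang, ContinuousLinearMap.comp_apply, ContinuousLinearMap.smul_apply, smul_eq_mul,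
    Complex.imCLM_apply, ContinuousLinearMap.coe_restrictScalars', ContinuousLinearMap.toSpanSingleton_apply]
  congr 1
  have hn := fE_norm F hy
  have hi : (fE F y)⁻¹ = starRingEnd ℂ (fE F y) := Complex.inv_eq_conj hn
  rw [← hi]
  have := fE_ne F hx
  have := fE_ne F hy
  field_simp

lemma slit_self (F : BRMap L) {x : E} (hx : x ∈ dom L) : fE F x / fE F x ∈ Complex.slitPlane := by
  rw [div_self (fE_ne F hx)]; simp

lemma slit_ev (F : BRMap L) {x : E} (hx : x ∈ dom L) :
    ∀ᶠ y in 𝓝 x, y ∈ dom L ∧ fE F y / fE F x ∈ Complex.slitPlane := by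
  refine ((dom_open L).mem_nhds hx |> fun h => (show ∀ᶠ y in 𝓝 x, y ∈ dom L from h)).and ?_
  have hc : ContinuousAt (fun y => fE F y / fE F x) x := (fE_diff F hx).continuousAt.div_const _
  exact hc.preimage_mem_nhds (Complex.isOpen_slitPlane.mem_nhds (slit_self F hx))

lemma fE_tangent (F : BRMap L) {y : E} (hy : y ∈ dom L) (v : E) :
    fderiv ℝ (fE F) y v = fE F y * (Complex.I * ang (fE F) y v) := by
  have h1 : HasFDerivAt (fun y => ‖fE F y‖ ^ 2) (0 : E →L[ℝ] ℝ) y := by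
    refine (hasFDerivAt_const (1 : ℝ) y).congr_of_eventuallyEq ?_
    filter_upwards [(dom_open L).mem_nhds hy] with y' h
    simp [fE_norm F h]
  have h2 := (fE_diff F hy).hasFDerivAt.norm_sq.unique h1
  have h3 := congrArg (fun T => T v) h2
  have h4 : (starRingEnd ℂ (fE F y) * fderiv ℝ (fE F) y v).re = 0 := by
    simp [Complex.inner] at h3
    simp
    linarith
  have h5 : starRingEnd ℂ (fE F y) * fderiv ℝ (fE F) y v = Complex.I * ang (fE F) y v := by
    apply Complex.ext
    · rw [h4]; simp
    · simp [ang]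
  rw [← h5, ← mul_assoc, Complex.mul_conj, Complex.normSq_eq_norm_sq, fE_norm F hy]; simp

def BF (F : BRMap L) (x : E) : E →L[ℝ] E →L[ℝ] ℝ := fderiv ℝ (fderiv ℝ (th F x)) x

lemma th_crit (F : BRMap L) {x : E} (hx : x ∈ dom L) (hc : fderiv ℝ (fE F) x = 0) :
    fderiv ℝ (th F x) x = 0 := by
  ext1 v
  rw [th_fderiv F hx hx (slit_self F hx)]
  simp [ang, hc]

lemma th_c2 (F : BRMap L) {x : E} (hx : x ∈ dom L) : ContDiffAt ℝ 2 (th F x) x :=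
  (th_contDiffAt F hx (slit_self F hx)).of_le (WithTop.coe_le_coe.2 (le_top : (2 : ℕ∞) ≤ ⊤))

lemma BF_symm (F : BRMap L) {x : E} (hx : x ∈ dom L) (v w : E) : BF F x v w = BF F x w v :=
  ((th_c2 F hx).isSymmSndFDerivAt (by simp)) v w

lemma ang_field_fderiv (F : BRMap L) {x : E} (hx : x ∈ dom L) (hc : fderiv ℝ (fE F) x = 0)
    (J : E →L[ℝ] E) :
    HasFDerivAt (fun y => ang (fE F) y (J y)) ((BF F x).flip (J x)) x := by
  have d1 : HasFDerivAt (fderiv ℝ (th F x)) (BF F x) x :=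
    (((th_c2 F hx).fderiv_right (m := 1) (by norm_num)).differentiableAt (by simp)).hasFDerivAt
  have d2 := d1.clm_apply J.hasFDerivAt
  refine (d2.congr_of_eventuallyEq ?_).congr_fderiv ?_
  · filter_upwards [slit_ev F hx] with y hy
    rw [th_fderiv F hx hy.1 hy.2]
  · rw [th_crit F hx hc]
    ext1 v
    simp

lemma BF_radial (F : BRMap L) {x : E} (hx : x ∈ dom L) (hc : fderiv ℝ (fE F) x = 0) (w : E) :
    BF F x w x = 0 := by
  have h1 := ang_field_fderiv F hx hc (ContinuousLinearMap.id ℝ E)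
  have h2 : HasFDerivAt (fun y => ang (fE F) y (ContinuousLinearMap.id ℝ E y)) (0 : E →L[ℝ] ℝ) x := by
    refine (hasFDerivAt_const (0 : ℝ) x).congr_of_eventuallyEq ?_
    filter_upwards [(dom_open L).mem_nhds hx] with y hy
    simp [ang, fE_radial F hy]
  have := congrArg (fun T => T w) (h1.unique h2)
  simpa using this

lemma BF_nondeg (F : BRMap L) (hM : MorseFun F.f) (x : L.compl)
    (hc : fderiv ℝ (fE F) x = 0) {w : E} (hw : w ≠ 0) (hxw : inner ℝ ((x : Sph) : E) w = 0)
    (h : ∀ v, BF F x w v = 0) : False := by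
  have hx := dom_sph x
  obtain ⟨v, hv⟩ := Sx_surj_fderiv x (Rx x (x : Sph)) w (by rw [Sx_self]; exact hxw)
  have hv0 : v ≠ 0 := by
    rintro rfl
    apply hw; rw [← hv, map_zero]
  obtain ⟨v2, h2⟩ := hM x ((isCrit_iff F x).2 hc) v hv0
  apply h2
  have e1 : liftChart F.f x =ᶠ[𝓝 (Rx x (x : Sph))] fun u => th F x (Sx x u) := by
    filter_upwards [fE_chart F x] with u hu
    rw [liftChart, hu, th, fE_sph]
  have e2 : (fun u => fderiv ℝ (liftChart F.f x) u v) =ᶠ[𝓝 (Rx x (x : Sph))]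
      fun u => fderiv ℝ (fun u => th F x (Sx x u)) u v := by
    filter_upwards [e1.eventuallyEq_nhds] with u hu
    rw [hu.fderiv_eq]
  rw [hessAt, chart_self, e2.fderiv_eq]
  rw [comp2 (Sx_contDiff x).contDiffAt (by rw [Sx_self]; exact th_c2 F hx)
    (by rw [Sx_self]; exact th_crit F hx hc), hv, Sx_self]
  exact (BF_symm F hx _ _).trans (h _)

end PartB3

section PartB4
open MeasureTheory Filter Topology

abbrev PP := ℝ × (ℝ × ℂ)

def tE (F : BRMap L) (i : Fin L.n) (q : ℝ × ℂ) : E := (F.tub i q : Sph)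

lemma tub_contMDiffAt (F : BRMap L) (i : Fin L.n) {q : ℝ × ℂ} (hq : q.2 ∈ ball (0 : ℂ) 1) :
    ContMDiffAt 𝓘(ℝ, ℝ × ℂ) (𝓡 3) ((⊤ : ℕ∞) : WithTop ℕ∞) (F.tub i) q :=
  (F.tub_smooth i).contMDiffAt ((isOpen_univ.prod isOpen_ball).mem_nhds ⟨mem_univ _, hq⟩)

lemma tE_contDiffAt (F : BRMap L) (i : Fin L.n) {q : ℝ × ℂ} (hq : q.2 ∈ ball (0 : ℂ) 1) :
    ContDiffAt ℝ ((⊤ : ℕ∞) : WithTop ℕ∞) (tE F i) q := by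
  rw [← contMDiffAt_iff_contDiffAt]
  exact (contMDiff_coe_sphere _).comp q (tub_contMDiffAt F i hq)

lemma tangAmb_eq (F : BRMap L) (i : Fin L.n) {q : ℝ × ℂ} (hq : q.2 ∈ ball (0 : ℂ) 1) (v : ℝ × ℂ) :
    tangAmb (F.tub i) q v = fderiv ℝ (tE F i) q v := by
  have h1 : MDifferentiableAt 𝓘(ℝ, ℝ × ℂ) (𝓡 3) (F.tub i) q :=
    (tub_contMDiffAt F i hq).mdifferentiableAt (by simp)
  have h2 : MDifferentiableAt (𝓡 3) 𝓘(ℝ, E) (fun p : Sph => (p : E)) (F.tub i q) :=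
    (contMDiff_coe_sphere (m := 1) _).mdifferentiableAt (by simp)
  have h3 := mfderiv_comp q h2 h1
  have h4 : mfderiv 𝓘(ℝ, ℝ × ℂ) 𝓘(ℝ, E) ((fun p : Sph => (p : E)) ∘ F.tub i) q = fderiv ℝ (tE F i) q :=
    mfderiv_eq_fderiv
  rw [h4] at h3
  exact (congrArg (fun T => T v) h3).symm

lemma tE_indep (F : BRMap L) (i : Fin L.n) {q : ℝ × ℂ} (hq : q.2 ∈ ball (0 : ℂ) 1) {a b : ℝ} {w : ℂ}
    (h : a • tE F i q + fderiv ℝ (tE F i) q (b, w) = 0) : a = 0 ∧ b = 0 ∧ w = 0 := by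
  have hp := F.positive i q.1 q.2 hq
  have e : (q.1, q.2) = q := rfl
  rw [e, tangAmb_eq F i hq, tangAmb_eq F i hq, tangAmb_eq F i hq] at hp
  have hw : ((b, w) : ℝ × ℂ) = b • ((1 : ℝ), (0 : ℂ)) + w.re • ((0 : ℝ), (1 : ℂ)) + w.im • ((0 : ℝ), Complex.I) := by
    ext <;> simp
  rw [hw, map_add, map_add, map_smul, map_smul, map_smul] at h
  have h2 := Matrix.eq_zero_of_vecMul_eq_zero (v := ![a, b, w.re, w.im]) hp.ne' (by
    funext j
    have := congrArg (fun y : E => y j) h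
    simp [Matrix.vecMul, dotProduct, Fin.sum_univ_four] at this ⊢
    have e2 : ((F.tub i q : Sph) : E) j = tE F i q j := rfl
    rw [e2]
    linarith)
  have h3 := congrFun h2 0
  have h4 := congrFun h2 1
  have h5 := congrFun h2 2
  have h6 := congrFun h2 3
  simp at h3 h4 h5 h6
  exact ⟨h3, h4, Complex.ext h5 h6⟩

def TT (F : BRMap L) (i : Fin L.n) (p : PP) : E := p.1 • tE F i p.2

def Om : Set PP := {p | 0 < p.1 ∧ p.2.2 ∈ ball (0 : ℂ) 1}

lemma Om_open : IsOpen Om :=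
  (isOpen_lt continuous_const continuous_fst).inter
    (isOpen_ball.preimage (continuous_snd.comp continuous_snd))

lemma TT_contDiffAt (F : BRMap L) (i : Fin L.n) {p : PP} (hp : p ∈ Om) :
    ContDiffAt ℝ ((⊤ : ℕ∞) : WithTop ℕ∞) (TT F i) p :=
  contDiffAt_fst.smul ((tE_contDiffAt F i hp.2).comp p contDiffAt_snd)

lemma TT_hasFDerivAt (F : BRMap L) (i : Fin L.n) {p : PP} (hp : p ∈ Om) :
    HasFDerivAt (TT F i) (fderiv ℝ (TT F i) p) p :=
  ((TT_contDiffAt F i hp).differentiableAt (by simp)).hasFDerivAt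

lemma TT_fderiv (F : BRMap L) (i : Fin L.n) {p : PP} (hp : p ∈ Om) (v : PP) :
    fderiv ℝ (TT F i) p v = v.1 • tE F i p.2 + p.1 • fderiv ℝ (tE F i) p.2 v.2 := by
  have h1 : HasFDerivAt (fun p : PP => tE F i p.2)
      ((fderiv ℝ (tE F i) p.2).comp (ContinuousLinearMap.snd ℝ ℝ (ℝ × ℂ))) p :=
    HasFDerivAt.comp (g := tE F i) p
      ((tE_contDiffAt F i hp.2).differentiableAt (by simp)).hasFDerivAt hasFDerivAt_snd
  have h2 : HasFDerivAt (TT F i) _ p := (hasFDerivAt_fst (p := p)).smul h1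
  rw [h2.fderiv]
  simp [add_comm]

lemma TT_inj_fderiv (F : BRMap L) (i : Fin L.n) {p : PP} (hp : p ∈ Om) :
    Function.Injective (fderiv ℝ (TT F i) p) := by
  rw [injective_iff_map_eq_zero]
  intro v hv
  rw [TT_fderiv F i hp, ← map_smul] at hv
  obtain ⟨h1, h2, h3⟩ := tE_indep F i hp.2 (a := v.1) (b := p.1 * v.2.1) (w := p.1 • v.2.2) hv
  have h0 := hp.1.ne'
  have h4 : v.2.1 = 0 := (mul_eq_zero.1 h2).resolve_left h0
  have h5 : v.2.2 = 0 := (smul_eq_zero.1 h3).resolve_left h0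
  exact Prod.ext h1 (Prod.ext h4 h5)

lemma finrank_PP : Module.finrank ℝ PP = Module.finrank ℝ E := by
  simp [PP]

lemma TT_local (F : BRMap L) (i : Fin L.n) {p : PP} (hp : p ∈ Om) :
    ∃ Φ : OpenPartialHomeomorph PP E, p ∈ Φ.source ∧ (∀ q, Φ q = TT F i q) ∧ Φ.source ⊆ Om ∧
      ∀ q ∈ Φ.source, ContDiffAt ℝ ((⊤ : ℕ∞) : WithTop ℕ∞) Φ.symm (TT F i q) := by
  have key : ∀ q ∈ Om, ∃ e : PP ≃L[ℝ] E, (e : PP →L[ℝ] E) = fderiv ℝ (TT F i) q := fun q hq =>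
    equiv_of_inj _ (TT_inj_fderiv F i hq) finrank_PP
  obtain ⟨e, he⟩ := key p hp
  have hd : HasFDerivAt (TT F i) (e : PP →L[ℝ] E) p := by rw [he]; exact TT_hasFDerivAt F i hp
  set Φ0 := (TT_contDiffAt F i hp).toOpenPartialHomeomorph (TT F i) hd (by simp) with hΦ0
  have hc : ∀ q, Φ0 q = TT F i q := fun q => rfl
  refine ⟨Φ0.restrOpen Om Om_open, ?_, hc, ?_, ?_⟩
  · exact ⟨(TT_contDiffAt F i hp).mem_toOpenPartialHomeomorph_source hd (by simp), hp⟩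
  · exact inter_subset_right
  · rintro q ⟨hq, hq2⟩
    obtain ⟨e2, he2⟩ := key q hq2
    have e3 : Φ0.symm (TT F i q) = q := Φ0.left_inv hq
    refine Φ0.contDiffAt_symm (f₀' := e2) (a := TT F i q) (Φ0.map_source hq) ?_ ?_
    · rw [e3, he2]; exact TT_hasFDerivAt F i hq2
    · rw [e3]; exact TT_contDiffAt F i hq2

lemma nv_TT (F : BRMap L) (i : Fin L.n) {p : PP} (hp : p ∈ Om) : nv (TT F i p) = F.tub i p.2 := by
  rw [TT, tE, nv_smul (sph_ne _) hp.1, nv_self]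

lemma tub_mod (F : BRMap L) (i : Fin L.n) (t : ℝ) (z : ℂ) :
    F.tub i (toIcoMod Real.two_pi_pos 0 t, z) = F.tub i (t, z) := by
  have hper : Function.Periodic (fun t => F.tub i (t, z)) (2 * π) := fun t => F.tub_per i t z
  exact hper.sub_zsmul_eq _

lemma exp_mod (t : ℝ) :
    Complex.exp ((toIcoMod Real.two_pi_pos 0 t : ℝ) * Complex.I) = Complex.exp (t * Complex.I) := by
  have hper : Function.Periodic (fun t : ℝ => Complex.exp (t * Complex.I)) (2 * π) := by
    intro t
    have := Complex.exp_periodic (t * Complex.I)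
    simp only
    rw [← this]
    push_cast
    ring_nf
  exact hper.sub_zsmul_eq _

lemma tub_eq (F : BRMap L) {i j : Fin L.n} {q r : ℝ × ℂ} (hq : q.2 ∈ ball (0 : ℂ) 1)
    (hr : r.2 ∈ ball (0 : ℂ) 1) (h : F.tub i q = F.tub j r) :
    i = j ∧ q.2 = r.2 ∧ Complex.exp (q.1 * Complex.I) = Complex.exp (r.1 * Complex.I) := by
  have h1 : F.tub i (toIcoMod Real.two_pi_pos 0 q.1, q.2) = F.tub j (toIcoMod Real.two_pi_pos 0 r.1, r.2) := by
    rw [tub_mod, tub_mod]; exact h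
  have m : ∀ t, toIcoMod Real.two_pi_pos 0 t ∈ Ico 0 (2 * π) := fun t => by
    simpa using toIcoMod_mem_Ico Real.two_pi_pos 0 t
  obtain ⟨a, b, c⟩ := F.tub_inj i j _ _ _ _ (m _) (m _) hq hr h1
  refine ⟨a, c, ?_⟩
  rw [← exp_mod q.1, b, exp_mod]

def tube (F : BRMap L) : Set E := {y | ∃ i, ∃ p ∈ Om, TT F i p = y}

lemma TT_mem (F : BRMap L) (i : Fin L.n) {p : PP} (hp : p ∈ Om) : TT F i p ∈ tube F := ⟨i, p, hp, rfl⟩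

open Classical in
def zc (F : BRMap L) (y : E) : ℂ := if h : y ∈ tube F then h.choose_spec.choose.2.2 else 0

open Classical in
def wc (F : BRMap L) (y : E) : ℂ :=
  if h : y ∈ tube F then Complex.exp (h.choose_spec.choose.2.1 * Complex.I) else 0

lemma zc_TT (F : BRMap L) (i : Fin L.n) {p : PP} (hp : p ∈ Om) : zc F (TT F i p) = p.2.2 := by
  have h := TT_mem F i hp
  rw [zc, dif_pos h]
  obtain ⟨h1, h2⟩ := h.choose_spec.choose_spec
  have h3 := nv_TT F i hp
  rw [← h2, nv_TT F _ h1] at h3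
  exact (tub_eq F h1.2 hp.2 h3).2.1

lemma wc_TT (F : BRMap L) (i : Fin L.n) {p : PP} (hp : p ∈ Om) :
    wc F (TT F i p) = Complex.exp (p.2.1 * Complex.I) := by
  have h := TT_mem F i hp
  rw [wc, dif_pos h]
  obtain ⟨h1, h2⟩ := h.choose_spec.choose_spec
  have h3 := nv_TT F i hp
  rw [← h2, nv_TT F _ h1] at h3
  exact (tub_eq F h1.2 hp.2 h3).2.2

lemma local_fun (F : BRMap L) (i : Fin L.n) {p : PP} (hp : p ∈ Om) {h : E → ℂ} {k : PP → ℂ}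
    (hk : ContDiff ℝ ((⊤ : ℕ∞) : WithTop ℕ∞) k) (hh : ∀ q ∈ Om, h (TT F i q) = k q) :
    ContDiffAt ℝ ((⊤ : ℕ∞) : WithTop ℕ∞) h (TT F i p) := by
  obtain ⟨Φ, h1, h2, h3, h4⟩ := TT_local F i hp
  refine (hk.contDiffAt.comp (TT F i p) (h4 p h1)).congr_of_eventuallyEq ?_
  have : Φ.target ∈ 𝓝 (TT F i p) := by
    rw [← h2]; exact Φ.open_target.mem_nhds (Φ.map_source h1)
  filter_upwards [this] with y hy
  have h5 := Φ.map_target hy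
  have h6 := hh _ (h3 h5)
  rw [← h2, Φ.right_inv hy] at h6
  exact h6

lemma zc_contDiffAt (F : BRMap L) {y : E} (hy : y ∈ tube F) :
    ContDiffAt ℝ ((⊤ : ℕ∞) : WithTop ℕ∞) (zc F) y := by
  obtain ⟨i, p, hp, rfl⟩ := hy
  exact local_fun F i hp (k := fun q => q.2.2) (contDiff_snd.snd) fun q hq => zc_TT F i hq

lemma wc_contDiffAt (F : BRMap L) {y : E} (hy : y ∈ tube F) :
    ContDiffAt ℝ ((⊤ : ℕ∞) : WithTop ℕ∞) (wc F) y := by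
  obtain ⟨i, p, hp, rfl⟩ := hy
  refine local_fun F i hp (k := fun q => Complex.exp (q.2.1 * Complex.I)) ?_ fun q hq => wc_TT F i hq
  refine Complex.contDiff_exp.comp (ContDiff.mul ?_ contDiff_const)
  exact Complex.ofRealCLM.contDiff.comp contDiff_snd.fst

lemma fderiv_TT_comp (F : BRMap L) (i : Fin L.n) {p : PP} (hp : p ∈ Om) {h : E → ℂ} {k : PP → ℂ} {k' : PP →L[ℝ] ℂ}
    (hd : DifferentiableAt ℝ h (TT F i p)) (hk : HasFDerivAt k k' p) (hh : ∀ q ∈ Om, h (TT F i q) = k q) (v : PP) :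
    fderiv ℝ h (TT F i p) (fderiv ℝ (TT F i) p v) = k' v := by
  have h1 := hd.hasFDerivAt.comp p (TT_hasFDerivAt F i hp)
  have h2 : HasFDerivAt (h ∘ TT F i) k' p := by
    refine hk.congr_of_eventuallyEq ?_
    filter_upwards [Om_open.mem_nhds hp] with q hq using hh q hq
  exact congrArg (fun T => T v) (h1.unique h2)

lemma zc_fderiv (F : BRMap L) (i : Fin L.n) {p : PP} (hp : p ∈ Om) (v : PP) :
    fderiv ℝ (zc F) (TT F i p) (fderiv ℝ (TT F i) p v) = v.2.2 := by
  have hk : HasFDerivAt (fun q : PP => q.2.2)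
      ((ContinuousLinearMap.snd ℝ ℝ ℂ).comp (ContinuousLinearMap.snd ℝ ℝ (ℝ × ℂ))) p :=
    ((ContinuousLinearMap.snd ℝ ℝ ℂ).comp (ContinuousLinearMap.snd ℝ ℝ (ℝ × ℂ))).hasFDerivAt
  exact fderiv_TT_comp F i hp ((zc_contDiffAt F (TT_mem F i hp)).differentiableAt (by simp))
    hk (fun q hq => zc_TT F i hq) v

lemma wc_fderiv (F : BRMap L) (i : Fin L.n) {p : PP} (hp : p ∈ Om) (v : PP) :
    fderiv ℝ (wc F) (TT F i p) (fderiv ℝ (TT F i) p v) = Complex.exp (p.2.1 * Complex.I) * (v.2.1 * Complex.I) := by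
  have h0 : HasFDerivAt (fun q : PP => ((q.2.1 : ℝ) : ℂ) * Complex.I)
      (((Complex.ofRealCLM.comp ((ContinuousLinearMap.fst ℝ ℝ ℂ).comp (ContinuousLinearMap.snd ℝ ℝ (ℝ × ℂ)))).smulRight Complex.I)) p := by
    exact (((Complex.ofRealCLM.comp ((ContinuousLinearMap.fst ℝ ℝ ℂ).comp (ContinuousLinearMap.snd ℝ ℝ (ℝ × ℂ)))).smulRight Complex.I)).hasFDerivAt
  have h1 := ((Complex.hasDerivAt_exp (p.2.1 * Complex.I)).hasFDerivAt.restrictScalars ℝ).comp p h0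
  have := fderiv_TT_comp F i hp ((wc_contDiffAt F (TT_mem F i hp)).differentiableAt (by simp))
    h1 (fun q hq => wc_TT F i hq) v
  rw [this]
  simp [mul_comm, mul_left_comm]

lemma tube_open (F : BRMap L) : IsOpen (tube F) := by
  rw [isOpen_iff_mem_nhds]
  rintro _ ⟨i, p, hp, rfl⟩
  obtain ⟨Φ, h1, h2, h3, h4⟩ := TT_local F i hp
  have : Φ.target ∈ 𝓝 (TT F i p) := by
    rw [← h2]; exact Φ.open_target.mem_nhds (Φ.map_source h1)
  filter_upwards [this] with y hy
  refine ⟨i, Φ.symm y, h3 (Φ.map_target hy), ?_⟩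
  rw [← h2, Φ.right_inv hy]

lemma TT_ne (F : BRMap L) (i : Fin L.n) {p : PP} (hp : p ∈ Om) : TT F i p ≠ 0 :=
  smul_ne_zero hp.1.ne' (sph_ne _)

lemma emb_mem (L : Link) (i : Fin L.n) (t : ℝ) : L.emb i t ∈ L.carrier := by
  refine mem_iUnion.2 ⟨i, toIcoMod Real.two_pi_pos 0 t, ?_, ?_⟩
  · have := toIcoMod_mem_Ico Real.two_pi_pos 0 t
    simp at this
    exact ⟨this.1, this.2.le⟩
  · have hper : Function.Periodic (L.emb i) (2 * π) := fun t => L.periodic i t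
    exact hper.sub_zsmul_eq _

lemma TT_carrier (F : BRMap L) (i : Fin L.n) {p : PP} (hp : p ∈ Om) :
    nv (TT F i p) ∈ L.carrier ↔ p.2.2 = 0 := by
  rw [nv_TT F i hp]
  constructor
  · intro h
    by_contra h0
    exact F.tub_off i p.2.1 p.2.2 hp.2 h0 h
  · intro h
    have : p.2 = (p.2.1, 0) := Prod.ext rfl h
    rw [this, F.tub_core]
    exact emb_mem L i _

lemma carrier_TT (F : BRMap L) {x : Sph} (hx : x ∈ L.carrier) :
    ∃ i, ∃ t : ℝ, ((1, (t, 0)) : PP) ∈ Om ∧ TT F i (1, (t, 0)) = x := by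
  obtain ⟨i, t, ht, rfl⟩ := mem_iUnion.1 hx
  refine ⟨i, t, ⟨by norm_num, by simp⟩, ?_⟩
  simp [TT, tE, F.tub_core]

lemma fE_TT (F : BRMap L) (i : Fin L.n) {p : PP} (hp : p ∈ Om) (h0 : p.2.2 ≠ 0) :
    p.2.2 = (‖p.2.2‖ : ℂ) * fE F (TT F i p) := by
  have hm : nv (TT F i p) ∈ L.compl := fun h => h0 ((TT_carrier F i hp).1 h)
  have h1 := F.adapted i p.2.1 p.2.2 hp.2 h0 ⟨nv (TT F i p), hm⟩ (nv_TT F i hp)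
  have h2 : fE F (TT F i p) = (F.f ⟨nv (TT F i p), hm⟩ : ℂ) := fS_eq F ⟨nv (TT F i p), hm⟩
  rw [h2, h1, toCircle, Circle.coe_exp]
  exact (Complex.norm_mul_exp_arg_mul_I _).symm

lemma dom_TT (F : BRMap L) (i : Fin L.n) {p : PP} (hp : p ∈ Om) (h0 : p.2.2 ≠ 0) : TT F i p ∈ dom L :=
  ⟨TT_ne F i hp, fun h => h0 ((TT_carrier F i hp).1 h)⟩

lemma tube_dom (F : BRMap L) {y : E} (hy : y ∈ tube F) : y ∈ dom L ↔ zc F y ≠ 0 := by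
  obtain ⟨i, p, hp, rfl⟩ := hy
  rw [zc_TT F i hp]
  refine ⟨fun h h0 => h.2 ((TT_carrier F i hp).2 h0), dom_TT F i hp⟩

lemma zc_fE (F : BRMap L) {y : E} (hy : y ∈ tube F) (h : zc F y ≠ 0) :
    zc F y = (‖zc F y‖ : ℂ) * fE F y := by
  obtain ⟨i, p, hp, rfl⟩ := hy
  rw [zc_TT F i hp] at *
  exact fE_TT F i hp h

end PartB4

section PartB5
open MeasureTheory Filter Topology

def angL (h : E → ℂ) (y : E) : E →L[ℝ] ℝ :=
  Complex.imCLM.comp ((starRingEnd ℂ (h y)) • fderiv ℝ h y)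

lemma angL_apply (h : E → ℂ) (y v : E) : angL h y v = ang h y v := by
  simp [angL, ang]

lemma angL_contDiffAt {h : E → ℂ} {y : E} (hh : ContDiffAt ℝ ((⊤ : ℕ∞) : WithTop ℕ∞) h y) :
    ContDiffAt ℝ ((⊤ : ℕ∞) : WithTop ℕ∞) (angL h) y := by
  have h1 : ContDiffAt ℝ ((⊤ : ℕ∞) : WithTop ℕ∞) (fun y => starRingEnd ℂ (h y)) y :=
    Complex.conjCLE.contDiff.contDiffAt.comp y hh
  have h2 : ContDiffAt ℝ ((⊤ : ℕ∞) : WithTop ℕ∞) (fderiv ℝ h) y := hh.fderiv_right (by simp)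
  exact contDiffAt_const.clm_comp (h1.smul h2)

lemma ang_zc (F : BRMap L) {y : E} (hy : y ∈ tube F) (h0 : zc F y ≠ 0) :
    angL (zc F) y = (Complex.normSq (zc F y)) • angL (fE F) y := by
  ext1 v
  have hz := zc_contDiffAt F hy
  have hzd : DifferentiableAt ℝ (zc F) y := hz.differentiableAt (by simp)
  have hdom := (tube_dom F hy).2 h0
  have hn : DifferentiableAt ℝ (fun y => ‖zc F y‖) y := hzd.norm ℝ h0
  have e : zc F =ᶠ[𝓝 y] fun y => ‖zc F y‖ • fE F y := by
    filter_upwards [(tube_open F).mem_nhds hy, hz.continuousAt.eventually_ne h0] with y' h1 h2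
    rw [Complex.real_smul]
    exact zc_fE F h1 h2
  have h1 := (hn.hasFDerivAt.smul (fE_diff F hdom).hasFDerivAt).congr_of_eventuallyEq e
  rw [ContinuousLinearMap.smul_apply, angL_apply, angL_apply, ang, h1.fderiv]
  have h2 := zc_fE F hy h0
  set r := ‖zc F y‖
  have h3 : Complex.normSq (zc F y) = r ^ 2 := Complex.normSq_eq_norm_sq _
  rw [h3, h2]
  simp only [ContinuousLinearMap.add_apply, ContinuousLinearMap.smul_apply, ContinuousLinearMap.smulRight_apply, smul_eq_mul, ang, Complex.real_smul, map_mul, Complex.conj_ofReal]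
  have h4 : starRingEnd ℂ (fE F y) * fE F y = 1 := by
    rw [mul_comm, Complex.mul_conj, Complex.normSq_eq_norm_sq, fE_norm F hdom]; simp
  have h5 : (r : ℂ) * starRingEnd ℂ (fE F y) * (r * fderiv ℝ (fE F) y v + ((fderiv ℝ (fun y => ‖zc F y‖) y) v : ℝ) * fE F y)
     = ((r ^ 2 : ℝ) : ℂ) * (starRingEnd ℂ (fE F y) * fderiv ℝ (fE F) y v) + ((r * (fderiv ℝ (fun y => ‖zc F y‖) y) v : ℝ) : ℂ) := by
    push_cast
    linear_combination (r : ℂ) * ((fderiv ℝ (fun y => ‖zc F y‖) y) v : ℝ) * h4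
  rw [h5, Complex.add_im, Complex.ofReal_im, Complex.im_ofReal_mul, add_zero]

def inner2 (F : BRMap L) : Set Sph := ⋃ i, F.tub i '' (Icc 0 (2 * π) ×ˢ closedBall (0 : ℂ) (1 / 2))

lemma inner2_closed (F : BRMap L) : IsClosed (inner2 F) := by
  refine isClosed_iUnion_of_finite fun i => ?_
  refine ((isCompact_Icc.prod (isCompact_closedBall _ _)).image_of_continuousOn ?_).isClosed
  refine (F.tub_smooth i).continuousOn.mono ?_
  rintro ⟨t, z⟩ ⟨_, hz⟩
  refine ⟨mem_univ _, ?_⟩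
  simp at hz ⊢
  linarith

lemma inner2_TT (F : BRMap L) (i : Fin L.n) {p : PP} (hp : p ∈ Om) (h : ‖p.2.2‖ ≤ 1 / 2) :
    nv (TT F i p) ∈ inner2 F := by
  rw [nv_TT F i hp]
  refine mem_iUnion.2 ⟨i, (toIcoMod Real.two_pi_pos 0 p.2.1, p.2.2), ⟨?_, ?_⟩, tub_mod F i _ _⟩
  · have := toIcoMod_mem_Ico Real.two_pi_pos 0 p.2.1
    simp at this
    exact ⟨this.1, this.2.le⟩
  · simpa using h

lemma inner2_tube (F : BRMap L) {y : E} (hy : y ≠ 0) (h : nv y ∈ inner2 F) : y ∈ tube F := by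
  obtain ⟨i, ⟨t, z⟩, ⟨_, hz⟩, h2⟩ := mem_iUnion.1 h
  refine ⟨i, (‖y‖, (t, z)), ⟨norm_pos_iff.2 hy, ?_⟩, ?_⟩
  · simp at hz ⊢; linarith
  · have := nv_coe hy
    rw [TT, tE, h2, this, smul_smul, mul_inv_cancel₀ (norm_ne_zero_iff.2 hy), one_smul]

def bb (r : ℝ) : ℝ := Real.smoothTransition (1 - 4 * r)

lemma bb_contDiff {n : ℕ∞} : ContDiff ℝ n bb :=
  Real.smoothTransition.contDiff.comp (contDiff_const.sub (contDiff_const.mul contDiff_id))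

lemma bb_zero : bb 0 = 1 := by simp [bb]

lemma bb_large {r : ℝ} (h : 1 / 4 ≤ r) : bb r = 0 := Real.smoothTransition.zero_of_nonpos (by linarith)

lemma bb_pos {r : ℝ} (h : 0 ≤ r) : 0 < r + bb r := by
  rcases h.eq_or_lt with rfl | h
  · rw [bb_zero]; norm_num
  · have := Real.smoothTransition.nonneg (1 - 4 * r)
    have : 0 ≤ bb r := this
    linarith

open Classical in
def eta (F : BRMap L) (y : E) : E →L[ℝ] ℝ :=
  if y ∈ tube F then
    ((Complex.normSq (zc F y) + bb (Complex.normSq (zc F y)))⁻¹) • angL (zc F) y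
      + bb (Complex.normSq (zc F y)) • angL (wc F) y
  else angL (fE F) y

lemma eta_off (F : BRMap L) {y : E} (hy : y ≠ 0) (h : nv y ∉ inner2 F) : eta F y = angL (fE F) y := by
  by_cases ht : y ∈ tube F
  · rw [eta, if_pos ht]
    have h1 : 1 / 4 ≤ Complex.normSq (zc F y) := by
      by_contra h2
      apply h
      obtain ⟨i, p, hp, rfl⟩ := ht
      rw [zc_TT F i hp, Complex.normSq_eq_norm_sq] at h2
      apply inner2_TT F i hp
      by_contra h3
      push Not at h2 h3
      nlinarith [norm_nonneg p.2.2]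
    have h0 : zc F y ≠ 0 := by
      intro h; rw [h] at h1; simp at h1; norm_num at h1
    rw [bb_large h1, ang_zc F ht h0, smul_smul]
    have : Complex.normSq (zc F y) ≠ 0 := by linarith
    simp [this]
  · rw [eta, if_neg ht]

lemma off_dom (F : BRMap L) {y : E} (hy : y ≠ 0) (h : nv y ∉ inner2 F) : y ∈ dom L := by
  refine ⟨hy, fun hc => h ?_⟩
  obtain ⟨i, t, hp, h1⟩ := carrier_TT F hc
  have := inner2_TT F i hp (by simp)
  rwa [h1, nv_self] at this

lemma eta_contDiffAt (F : BRMap L) {y : E} (hy : y ≠ 0) :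
    ContDiffAt ℝ ((⊤ : ℕ∞) : WithTop ℕ∞) (eta F) y := by
  by_cases h : nv y ∈ inner2 F
  · have ht := inner2_tube F hy h
    have hz := zc_contDiffAt F ht
    have h1 : ContDiffAt ℝ ((⊤ : ℕ∞) : WithTop ℕ∞) (fun y => Complex.normSq (zc F y)) y := by
      simp only [Complex.normSq_eq_norm_sq]
      exact hz.norm_sq ℝ
    have h2 : ContDiffAt ℝ ((⊤ : ℕ∞) : WithTop ℕ∞) (fun y => bb (Complex.normSq (zc F y))) y :=
      bb_contDiff.contDiffAt.comp y h1
    have h3 := (((h1.add h2).inv (bb_pos (Complex.normSq_nonneg _)).ne').smul (angL_contDiffAt hz)).add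
      (h2.smul (angL_contDiffAt (wc_contDiffAt F ht)))
    refine h3.congr_of_eventuallyEq ?_
    filter_upwards [(tube_open F).mem_nhds ht] with y' hy'
    rw [eta, if_pos hy']
    rfl
  · refine (angL_contDiffAt (fE_contDiffAt F (off_dom F hy h))).congr_of_eventuallyEq ?_
    filter_upwards [isOpen_ne.mem_nhds hy,
      (nv_contAt hy).preimage_mem_nhds ((inner2_closed F).isOpen_compl.mem_nhds h)] with y' h1 h2
    exact eta_off F h1 h2

lemma tube_ang (F : BRMap L) (i : Fin L.n) {p : PP} (hp : p ∈ Om) (v : PP) :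
    angL (zc F) (TT F i p) (fderiv ℝ (TT F i) p v) = (starRingEnd ℂ p.2.2 * v.2.2).im ∧
    angL (wc F) (TT F i p) (fderiv ℝ (TT F i) p v) = v.2.1 := by
  rw [angL_apply, angL_apply, ang, ang, zc_fderiv F i hp, wc_fderiv F i hp, zc_TT F i hp, wc_TT F i hp]
  refine ⟨rfl, ?_⟩
  rw [← mul_assoc, mul_comm (starRingEnd ℂ _), Complex.mul_conj, Complex.normSq_eq_norm_sq,
    Complex.norm_exp_ofReal_mul_I]
  simp

lemma eta_radial (F : BRMap L) {y : E} (hy : y ≠ 0) : eta F y y = 0 := by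
  by_cases h : y ∈ tube F
  · rw [eta, if_pos h]
    obtain ⟨i, p, hp, rfl⟩ := h
    have h1 := TT_fderiv F i hp (p.1, (0, 0))
    have h2 : fderiv ℝ (TT F i) p (p.1, (0, 0)) = TT F i p := by
      rw [h1]
      have : ((p.1, (0, 0)) : PP).2 = 0 := rfl
      rw [this, map_zero]; simp [TT]
    have h3 := tube_ang F i hp (p.1, (0, 0))
    rw [h2] at h3
    simp [h3.1, h3.2]
  · have h2 : nv y ∉ inner2 F := fun h3 => h (inner2_tube F hy h3)
    rw [eta, if_neg h, angL_apply, ang, fE_radial F (off_dom F hy h2)]; simp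

lemma eta_tube (F : BRMap L) {y : E} (h : y ∈ tube F) : eta F y ≠ 0 := by
  intro h0
  rw [eta, if_pos h] at h0
  obtain ⟨i, p, hp, rfl⟩ := h
  rw [zc_TT F i hp] at h0
  by_cases hz : p.2.2 = 0
  · have h3 := tube_ang F i hp (0, (1, 0))
    have := congrArg (fun T => T (fderiv ℝ (TT F i) p (0, (1, 0)))) h0
    simp [h3.1, h3.2, hz, bb_zero] at this
  · have h3 := tube_ang F i hp (0, (0, Complex.I * p.2.2))
    have := congrArg (fun T => T (fderiv ℝ (TT F i) p (0, (0, Complex.I * p.2.2)))) h0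
    simp only [ContinuousLinearMap.add_apply, ContinuousLinearMap.smul_apply, h3.1, h3.2] at this
    have h4 : (starRingEnd ℂ p.2.2 * (Complex.I * p.2.2)).im = Complex.normSq p.2.2 := by
      rw [Complex.normSq_apply]; simp
    rw [h4] at this
    have h5 := bb_pos (Complex.normSq_nonneg p.2.2)
    have h6 := Complex.normSq_pos.2 hz
    simp at this
    rcases this with h | h
    · linarith
    · exact hz h

lemma tube_not_crit (F : BRMap L) {y : E} (h : y ∈ tube F) (hd : y ∈ dom L) : fderiv ℝ (fE F) y ≠ 0 := by
  intro h0
  have hz := (tube_dom F h).1 hd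
  have h1 := ang_zc F h hz
  have h2 : angL (fE F) y = 0 := by ext1 v; simp [angL, h0]
  rw [h2, smul_zero] at h1
  obtain ⟨i, p, hp, rfl⟩ := h
  have h3 := (tube_ang F i hp (0, (0, Complex.I * p.2.2))).1
  rw [h1] at h3
  have h4 : (starRingEnd ℂ p.2.2 * (Complex.I * p.2.2)).im = Complex.normSq p.2.2 := by
    rw [Complex.normSq_apply]; simp
  rw [zc_TT F i hp] at hz
  have h5 : (0 : ℝ) = Complex.normSq p.2.2 := by rw [← h4]; exact h3
  exact hz (Complex.normSq_eq_zero.1 h5.symm)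

end PartB5

section PartB6
open MeasureTheory Filter Topology

def Jl (a b c : ℝ) : E →L[ℝ] E := LinearMap.toContinuousLinearMap
  { toFun := fun y => !₂[-a * y 1 - b * y 2 - c * y 3, a * y 0 + b * y 3 - c * y 2,
      - a * y 3 + b * y 0 + c * y 1, a * y 2 - b * y 1 + c * y 0]
    map_add' := by
      intro x y
      ext j
      fin_cases j <;> simp <;> ring
    map_smul' := by
      intro s y
      ext j
      fin_cases j <;> simp <;> ring }

def JJ : Fin 3 → E →L[ℝ] E := ![Jl 1 0 0, Jl 0 1 0, Jl 0 0 1]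

lemma J_span {x : E} (hx : ‖x‖ = 1) {Λ : E →L[ℝ] ℝ} (h : Λ x = 0) (hJ : ∀ i, Λ (JJ i x) = 0) : Λ = 0 := by
  ext1 v
  have hn : x 0 ^ 2 + x 1 ^ 2 + x 2 ^ 2 + x 3 ^ 2 = 1 := by
    have := EuclideanSpace.norm_sq_eq x
    rw [hx] at this
    simp [Fin.sum_univ_four] at this
    linarith
  have e : v = (x 0 * v 0 + x 1 * v 1 + x 2 * v 2 + x 3 * v 3) • x
    + (- x 1 * v 0 + x 0 * v 1 - x 3 * v 2 + x 2 * v 3) • JJ 0 x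
    + (- x 2 * v 0 + x 3 * v 1 + x 0 * v 2 - x 1 * v 3) • JJ 1 x
    + (- x 3 * v 0 - x 2 * v 1 + x 1 * v 2 + x 0 * v 3) • JJ 2 x := by
    ext j
    fin_cases j
    · simp [JJ, Jl]; linear_combination (-v 0) * hn
    · simp [JJ, Jl]; linear_combination (-v 1) * hn
    · simp [JJ, Jl]; linear_combination (-v 2) * hn
    · simp [JJ, Jl]; linear_combination (-v 3) * hn
  rw [e]
  simp only [map_add, map_smul, h, hJ]
  simp

def GG (F : BRMap L) (y : E) : E3 := WithLp.toLp 2 (fun i => eta F y (JJ i y))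

lemma GG_contDiffAt (F : BRMap L) {y : E} (hy : y ≠ 0) :
    ContDiffAt ℝ ((⊤ : ℕ∞) : WithTop ℕ∞) (GG F) y := by
  rw [contDiffAt_euclidean]
  intro i
  exact (eta_contDiffAt F hy).clm_apply (JJ i).contDiff.contDiffAt

lemma GG_zero (F : BRMap L) {x : E} (hx : ‖x‖ = 1) (h : GG F x = 0) : eta F x = 0 := by
  refine J_span hx (eta_radial F (by rintro rfl; simp at hx)) fun i => ?_
  exact congrArg (fun w : E3 => w i) h

lemma eta_zero (F : BRMap L) {y : E} (hy : y ≠ 0) (h : eta F y = 0) :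
    y ∈ dom L ∧ nv y ∉ inner2 F ∧ fderiv ℝ (fE F) y = 0 := by
  have h1 : nv y ∉ inner2 F := fun h2 => eta_tube F (inner2_tube F hy h2) h
  refine ⟨off_dom F hy h1, h1, ?_⟩
  rw [eta_off F hy h1] at h
  ext1 v
  rw [fE_tangent F (off_dom F hy h1), ← angL_apply, h]; simp

lemma crit_eta (F : BRMap L) {y : E} (hy : y ∈ dom L) (h : fderiv ℝ (fE F) y = 0) : eta F y = 0 := by
  have h1 : nv y ∉ inner2 F := fun h2 => tube_not_crit F (inner2_tube F hy.1 h2) hy h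
  rw [eta_off F hy.1 h1]
  ext1 v
  simp [angL, h]

def gg (F : BRMap L) (p : Sph) (u : E3) : E3 := GG F (Sx (-p) u)

lemma Sx_ne0 (x : Sph) (u : E3) : Sx x u ≠ 0 := by
  rw [← norm_ne_zero_iff, Sx_norm]; simp

lemma Sx_inj (x : Sph) : Function.Injective (Sx x) := fun u v h => by
  rw [← Rx_Sx x u, h, Rx_Sx]

lemma gg_contDiff (F : BRMap L) (p : Sph) : ContDiff ℝ 2 (gg F p) := by
  rw [contDiff_iff_contDiffAt]
  intro u
  exact ((GG_contDiffAt F (Sx_ne0 _ u)).of_le (WithTop.coe_le_coe.2 (le_top : (2 : ℕ∞) ≤ ⊤))).comp u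
    (Sx_contDiff _).contDiffAt

lemma gg_lim (F : BRMap L) (p : Sph) : Tendsto (gg F p) (cocompact E3) (𝓝 (GG F p)) := by
  have h := Sx_tendsto (-p)
  have e : -((-p : Sph) : E) = p := by simp
  rw [e] at h
  exact ((GG_contDiffAt F (sph_ne p)).continuousAt.tendsto).comp h

lemma gg_nd (F : BRMap L) (hM : MorseFun F.f) (p : Sph) (u : E3) (h : gg F p u = 0) :
    Function.Injective (fderiv ℝ (gg F p) u) := by
  have h1 := GG_zero F (Sx_norm _ u) h
  set x := Sx (-p) u with hx
  obtain ⟨hd, hi, hc⟩ := eta_zero F (Sx_ne0 _ u) h1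
  have hxs : nv x = ⟨x, Sx_mem _ u⟩ := nv_self ⟨x, Sx_mem _ u⟩
  have hm : (⟨x, Sx_mem _ u⟩ : Sph) ∈ L.compl := by rw [← hxs]; exact hd.2
  have hS : HasFDerivAt (Sx (-p)) (fderiv ℝ (Sx (-p)) u) u :=
    ((Sx_contDiff _ (n := 1)).differentiable (by norm_num) _).hasFDerivAt
  have hcomp : ∀ i, HasFDerivAt (fun u => gg F p u i) (((BF F x).flip (JJ i x)).comp (fderiv ℝ (Sx (-p)) u)) u := by
    intro i
    have h2 := ang_field_fderiv F hd hc (JJ i)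
    have h3 : HasFDerivAt (fun y => eta F y (JJ i y)) ((BF F x).flip (JJ i x)) x := by
      refine h2.congr_of_eventuallyEq ?_
      filter_upwards [isOpen_ne.mem_nhds (Sx_ne0 (-p) u),
        (nv_contAt (Sx_ne0 (-p) u)).preimage_mem_nhds ((inner2_closed F).isOpen_compl.mem_nhds hi)] with y' h1 h2
      rw [eta_off F h1 h2, angL_apply]
    exact h3.comp u hS
  have hg : HasFDerivAt (gg F p) (fderiv ℝ (gg F p) u) u :=
    ((gg_contDiff F p).differentiable (by norm_num) u).hasFDerivAt
  rw [injective_iff_map_eq_zero]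
  intro v hv
  by_contra hv0
  have hw : fderiv ℝ (Sx (-p)) u v ≠ 0 := fun h0 => hv0 (Sx_inj_fderiv _ u (by rw [h0, map_zero]))
  refine BF_nondeg F hM ⟨⟨x, Sx_mem _ u⟩, hm⟩ hc hw ?_ ?_
  · exact inner_fderiv_zero hS (Eventually.of_forall (Sx_norm _)) v
  · have : BF F x (fderiv ℝ (Sx (-p)) u v) = 0 := by
      refine J_span (Sx_norm _ u) (BF_radial F hd hc _) fun i => ?_
      have h4 := ((EuclideanSpace.proj (𝕜 := ℝ) i).hasFDerivAt.comp u hg).unique (hcomp i)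
      have h5 := congrArg (fun T => T v) h4
      simp only [ContinuousLinearMap.comp_apply, hv] at h5
      simpa using h5.symm
    intro w
    change BF F x _ w = 0
    rw [this]; simp

lemma crit_image (F : BRMap L) (p : Sph) (hp : p ∈ L.carrier) :
    (fun x : L.compl => ((x : Sph) : E)) '' critSet F.f = Sx (-p) '' {u | gg F p u = 0} := by
  ext y
  constructor
  · rintro ⟨x, hx, rfl⟩
    have hne : (x : Sph) ≠ -(-p) := by
      rw [neg_neg]
      intro h
      exact x.2 (by rw [h]; exact hp)
    refine ⟨Rx (-p) (x : Sph), ?_, Sx_Rx _ _ hne⟩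
    have h1 := crit_eta F (dom_sph x) ((isCrit_iff F x).1 hx)
    rw [mem_setOf_eq, gg, Sx_Rx _ _ hne]
    ext i
    simp [GG, h1]
  · rintro ⟨u, hu, rfl⟩
    have h1 := GG_zero F (Sx_norm _ u) hu
    obtain ⟨hd, hi, hc⟩ := eta_zero F (Sx_ne0 _ u) h1
    have hxs : nv (Sx (-p) u) = ⟨Sx (-p) u, Sx_mem _ u⟩ := nv_self ⟨Sx (-p) u, Sx_mem _ u⟩
    have hm : (⟨Sx (-p) u, Sx_mem _ u⟩ : Sph) ∈ L.compl := by rw [← hxs]; exact hd.2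
    exact ⟨⟨_, hm⟩, (isCrit_iff F ⟨_, hm⟩).2 hc, rfl⟩

lemma crit_fin_even (F : BRMap L) (hM : MorseFun F.f) :
    (critSet F.f).Finite ∧ Even (critSet F.f).ncard := by
  have hp := emb_mem L ⟨0, L.npos⟩ 0
  set p := L.emb ⟨0, L.npos⟩ 0
  have hq : GG F p ≠ 0 := by
    intro h
    have h1 := GG_zero F (sph_norm p) h
    obtain ⟨i, t, hO, h2⟩ := carrier_TT F hp
    exact eta_tube F ⟨i, _, hO, h2⟩ h1
  have e := crit_image F p hp
  have inj : Function.Injective (fun x : L.compl => ((x : Sph) : E)) := fun a b h =>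
    Subtype.ext (Subtype.ext h)
  have fin := zeros_finite (gg_contDiff F p) hq (gg_lim F p) (gg_nd F hM p)
  constructor
  · refine Set.Finite.of_finite_image ?_ inj.injOn
    rw [e]
    exact fin.image _
  · rw [← Set.ncard_image_of_injective _ inj, e, Set.ncard_image_of_injective _ (Sx_inj _)]
    exact zeros_even (gg_contDiff F p) hq (gg_lim F p) (gg_nd F hM p)

end PartB6

section PartC1
open MeasureTheory Filter Topology

abbrev QQ := E2 × E2

lemma finrank_QQ : Module.finrank ℝ E = Module.finrank ℝ QQ := by
  simp [QQ]

lemma straight_of {m : E → QQ} {p : E} (hm : ContDiffAt ℝ ((⊤ : ℕ∞) : WithTop ℕ∞) m p)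
    (hinj : Function.Injective (fderiv ℝ m p)) {O : Set E} (hO : O ∈ 𝓝 p) :
    ∃ Ψ : OpenPartialHomeomorph E QQ, p ∈ Ψ.source ∧ Ψ.source ⊆ O ∧ (∀ y, Ψ y = m y) ∧
      ContDiffAt ℝ ((⊤ : ℕ∞) : WithTop ℕ∞) Ψ.symm (m p) := by
  obtain ⟨e, he⟩ := equiv_of_inj _ hinj finrank_QQ
  have hd : HasFDerivAt m (e : E →L[ℝ] QQ) p := by
    rw [he]; exact (hm.differentiableAt (by simp)).hasFDerivAt
  set Ψ0 := hm.toOpenPartialHomeomorph m hd (by simp)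
  have hs : p ∈ Ψ0.source := hm.mem_toOpenPartialHomeomorph_source hd (by simp)
  have e3 : Ψ0.symm (m p) = p := Ψ0.left_inv hs
  refine ⟨Ψ0.restrOpen (interior O) isOpen_interior, ⟨hs, mem_interior_iff_mem_nhds.2 hO⟩,
    inter_subset_right.trans interior_subset, fun y => rfl, ?_⟩
  refine Ψ0.contDiffAt_symm (f₀' := e) (a := m p) (Ψ0.map_source hs) ?_ ?_
  · rw [e3]; exact hd
  · rw [e3]; exact hm

lemma compl_lin {M : E →L[ℝ] E2} (hM : Function.Surjective M) :
    ∃ ℓ : E →L[ℝ] E2, ∀ v, M v = 0 → ℓ v = 0 → v = 0 := by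
  have h1 : Module.finrank ℝ (LinearMap.ker M.toLinearMap) = Module.finrank ℝ E2 := by
    have := LinearMap.finrank_range_add_finrank_ker M.toLinearMap
    have h2 : LinearMap.range M.toLinearMap = ⊤ := LinearMap.range_eq_top.2 hM
    rw [h2] at this
    simp at this ⊢
    omega
  set K := LinearMap.ker M.toLinearMap with hK
  let e : K ≃L[ℝ] E2 := ContinuousLinearEquiv.ofFinrankEq h1
  refine ⟨(e : K →L[ℝ] E2).comp K.orthogonalProjection, fun v hv hl => ?_⟩
  have hvK : v ∈ K := hv
  have h3 : K.orthogonalProjection v = 0 := e.injective (by simpa using hl)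
  have h4 := Submodule.orthogonalProjection_mem_subspace_eq_self (K := K) ⟨v, hvK⟩
  simp only at h4
  rw [h3] at h4
  exact (congrArg Subtype.val h4).symm

def pageE (F : BRMap L) (θ : Circle) : Set E := (fun x : Sph => (x : E)) '' pageSet F θ

lemma pageE_coe (F : BRMap L) (θ : Circle) (x : Sph) : (x : E) ∈ pageE F θ ↔ x ∈ pageSet F θ := by
  constructor
  · rintro ⟨y, hy, h⟩
    have : y = x := Subtype.ext h
    rwa [← this]
  · exact fun h => ⟨x, h, rfl⟩

lemma page_off (F : BRMap L) (θ : Circle) (x : L.compl) : (x : Sph) ∈ pageSet F θ ↔ F.f x = θ := by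
  constructor
  · rintro (h | ⟨_, h⟩)
    · exact absurd h x.2
    · exact h
  · exact fun h => Or.inr ⟨x.2, h⟩

lemma pageE_dom (F : BRMap L) (θ : Circle) {y : E} (hy : y ∈ dom L) :
    y ∈ pageE F θ ↔ ‖y‖ = 1 ∧ fE F y = θ := by
  have key : ‖y‖ = 1 → ∃ x : L.compl, ((x : Sph) : E) = y := by
    intro h
    have h1 : nv y = ⟨y, by simpa using h⟩ := nv_self ⟨y, by simpa using h⟩
    exact ⟨⟨nv y, hy.2⟩, congrArg Subtype.val h1⟩
  constructor
  · intro h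
    have hn : ‖y‖ = 1 := by obtain ⟨x, _, rfl⟩ := h; exact sph_norm x
    obtain ⟨x, rfl⟩ := key hn
    rw [pageE_coe, page_off] at h
    exact ⟨hn, by rw [fE_sph, h]⟩
  · rintro ⟨hn, h⟩
    obtain ⟨x, rfl⟩ := key hn
    rw [pageE_coe, page_off]
    rw [fE_sph] at h
    exact Circle.ext h

def imL (F : BRMap L) (θ : Circle) (y : E) : E →L[ℝ] ℝ :=
  Complex.imCLM.comp ((starRingEnd ℂ (θ : ℂ)) • fderiv ℝ (zc F) y)

lemma imL_apply (F : BRMap L) (θ : Circle) (y v : E) :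
    imL F θ y v = (starRingEnd ℂ (θ : ℂ) * fderiv ℝ (zc F) y v).im := by simp [imL]

lemma imL_eq (F : BRMap L) (θ : Circle) {y : E} (hy : y ∈ tube F) (hd : y ∈ dom L) (h : fE F y = θ) :
    imL F θ y = ‖zc F y‖ • angL (fE F) y := by
  have h0 := (tube_dom F hy).1 hd
  have h1 := ang_zc F hy h0
  have h2 := zc_fE F hy h0
  have h3 : angL (zc F) y = ‖zc F y‖ • imL F θ y := by
    ext1 v
    rw [ContinuousLinearMap.smul_apply, angL_apply, imL_apply, ang]
    conv_lhs => rw [h2]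
    rw [h, map_mul, Complex.conj_ofReal, mul_assoc, Complex.im_ofReal_mul, smul_eq_mul]
  rw [h3, Complex.normSq_eq_norm_sq, pow_two, mul_smul] at h1
  exact smul_right_injective _ (norm_ne_zero_iff.2 h0) h1

open Classical in
def kap (F : BRMap L) (θ : Circle) (y : E) : E →L[ℝ] ℝ :=
  if y ∈ tube F then (‖zc F y‖ + bb (Complex.normSq (zc F y)))⁻¹ • imL F θ y else angL (fE F) y

lemma bb_pos2 (z : ℂ) : 0 < ‖z‖ + bb (Complex.normSq z) := by
  have h1 : 0 ≤ bb (Complex.normSq z) := Real.smoothTransition.nonneg _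
  by_cases h : z = 0
  · subst h; simp [bb_zero]
  · have := norm_pos_iff.2 h; linarith

lemma zc_large (F : BRMap L) {y : E} (ht : y ∈ tube F) (h : nv y ∉ inner2 F) : 1 / 4 ≤ Complex.normSq (zc F y) := by
  by_contra h2
  apply h
  obtain ⟨i, p, hp, rfl⟩ := ht
  rw [zc_TT F i hp, Complex.normSq_eq_norm_sq] at h2
  apply inner2_TT F i hp
  by_contra h3
  push Not at h2 h3
  nlinarith [norm_nonneg p.2.2]

lemma kap_off (F : BRMap L) (θ : Circle) {y : E} (hy : y ∈ pageE F θ) (h0 : y ≠ 0) (h : nv y ∉ inner2 F) :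
    kap F θ y = angL (fE F) y := by
  by_cases ht : y ∈ tube F
  · have hd := off_dom F h0 h
    have h1 := zc_large F ht h
    have h2 := (tube_dom F ht).1 hd
    rw [kap, if_pos ht, bb_large h1, imL_eq F θ ht hd ((pageE_dom F θ hd).1 hy).2, smul_smul, add_zero,
      inv_mul_cancel₀ (norm_ne_zero_iff.2 h2), one_smul]
  · rw [kap, if_neg ht]

lemma pageE_ne (F : BRMap L) (θ : Circle) {y : E} (hy : y ∈ pageE F θ) : y ≠ 0 := by
  obtain ⟨x, _, rfl⟩ := hy; exact sph_ne x

lemma kap_cont (F : BRMap L) (θ : Circle) : ContinuousOn (kap F θ) (pageE F θ) := by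
  intro y hy
  have h0 := pageE_ne F θ hy
  by_cases h : nv y ∈ inner2 F
  · have ht := inner2_tube F h0 h
    have hz := zc_contDiffAt F ht
    refine ContinuousAt.continuousWithinAt ?_
    have h1 : ContinuousAt (fun y => (‖zc F y‖ + bb (Complex.normSq (zc F y)))⁻¹) y := by
      refine ContinuousAt.inv₀ (hz.continuousAt.norm.add ?_) (bb_pos2 _).ne'
      exact (bb_contDiff (n := 0)).continuous.continuousAt.comp
        (Complex.continuous_normSq.continuousAt.comp hz.continuousAt)
    have h2 : ContinuousAt (imL F θ) y := by
      have h3 : ContDiffAt ℝ 0 (fderiv ℝ (zc F)) y := hz.fderiv_right (by simp)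
      exact continuousAt_const.clm_comp (h3.continuousAt.const_smul (starRingEnd ℂ (θ : ℂ)))
    refine (h1.smul h2).congr ?_
    filter_upwards [(tube_open F).mem_nhds ht] with y' hy'
    rw [kap, if_pos hy']
    rfl
  · have hd := off_dom F h0 h
    have h1 : ContinuousWithinAt (angL (fE F)) (pageE F θ) y :=
      (angL_contDiffAt (fE_contDiffAt F hd)).continuousAt.continuousWithinAt
    refine h1.congr_of_eventuallyEq ?_ (kap_off F θ hy h0 h)
    filter_upwards [self_mem_nhdsWithin, mem_nhdsWithin_of_mem_nhds
      ((nv_contAt h0).preimage_mem_nhds ((inner2_closed F).isOpen_compl.mem_nhds h))] with y' h1 h2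
    exact kap_off F θ h1 (pageE_ne F θ h1) h2

lemma kap_tube (F : BRMap L) (θ : Circle) {y : E} (h : y ∈ tube F) : kap F θ y ≠ 0 ∧ kap F θ y y = 0 := by
  rw [kap, if_pos h]
  have hb := (inv_pos.2 (bb_pos2 (zc F y))).ne'
  obtain ⟨i, p, hp, rfl⟩ := h
  constructor
  · intro h0
    rw [smul_eq_zero] at h0
    have h1 := h0.resolve_left hb
    have h2 := congrArg (fun T => T (fderiv ℝ (TT F i) p (0, (0, Complex.I * θ)))) h1
    simp only [imL_apply, zc_fderiv F i hp] at h2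
    have h3 : starRingEnd ℂ (θ : ℂ) * (Complex.I * θ) = Complex.I := by
      have : starRingEnd ℂ (θ : ℂ) * (θ : ℂ) = 1 := by
        rw [mul_comm, Complex.mul_conj, Complex.normSq_eq_norm_sq, Circle.norm_coe]; simp
      linear_combination Complex.I * this
    rw [h3] at h2
    simp at h2
  · have h1 := TT_fderiv F i hp (p.1, (0, 0))
    have h2 : fderiv ℝ (TT F i) p (p.1, (0, 0)) = TT F i p := by
      rw [h1]
      have : ((p.1, (0, 0)) : PP).2 = 0 := rfl
      rw [this, map_zero]; simp [TT]
    have h3 := zc_fderiv F i hp (p.1, (0, 0))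
    rw [h2] at h3
    rw [ContinuousLinearMap.smul_apply, imL_apply, h3]
    simp

lemma angL_ne (F : BRMap L) {y : E} (hd : y ∈ dom L) (hc : fderiv ℝ (fE F) y ≠ 0) : angL (fE F) y ≠ 0 := by
  intro h
  apply hc
  ext1 v
  rw [fE_tangent F hd, ← angL_apply, h]; simp

lemma angL_radial (F : BRMap L) {y : E} (hd : y ∈ dom L) : angL (fE F) y y = 0 := by
  rw [angL_apply, ang, fE_radial F hd]; simp

lemma kap_page (F : BRMap L) (θ : Circle) {p : Sph}
    (h : p ∈ L.carrier ∨ fderiv ℝ (fE F) p ≠ 0) : kap F θ p ≠ 0 ∧ kap F θ p p = 0 := by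
  by_cases ht : (p : E) ∈ tube F
  · exact kap_tube F θ ht
  · have hc : p ∉ L.carrier := by
      intro hc
      obtain ⟨i, t, hO, h2⟩ := carrier_TT F hc
      exact ht ⟨i, _, hO, h2⟩
    have hd := dom_sph (⟨p, hc⟩ : L.compl)
    rw [kap, if_neg ht]
    exact ⟨angL_ne F hd (h.resolve_left hc), angL_radial F hd⟩

lemma kap_dom (F : BRMap L) (θ : Circle) {y : E} (hy : y ∈ pageE F θ) (hd : y ∈ dom L) :
    ∃ c : ℝ, kap F θ y = c • angL (fE F) y := by
  by_cases ht : y ∈ tube F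
  · rw [kap, if_pos ht, imL_eq F θ ht hd ((pageE_dom F θ hd).1 hy).2, smul_smul]
    exact ⟨_, rfl⟩
  · rw [kap, if_neg ht]; exact ⟨1, by simp⟩

def Straight (A : Set E) (p : E) (κ : E →L[ℝ] ℝ) (Ψ : OpenPartialHomeomorph E QQ) : Prop :=
  p ∈ Ψ.source ∧ ContDiffAt ℝ ((⊤ : ℕ∞) : WithTop ℕ∞) Ψ p ∧
  ContDiffAt ℝ ((⊤ : ℕ∞) : WithTop ℕ∞) Ψ.symm (Ψ p) ∧
  (∀ y ∈ Ψ.source, y ∈ A ↔ (Ψ y).1 = 0 ∧ 0 ≤ (Ψ y).2 0) ∧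
  ∀ v : E2, κ (fderiv ℝ Ψ.symm (Ψ p) (0, v)) = 0

end PartC1

section PartC2
open MeasureTheory Filter Topology

lemma symm_deriv {Ψ : OpenPartialHomeomorph E QQ} {p : E} (hp : p ∈ Ψ.source)
    (h1 : ContDiffAt ℝ ((⊤ : ℕ∞) : WithTop ℕ∞) Ψ p)
    (h2 : ContDiffAt ℝ ((⊤ : ℕ∞) : WithTop ℕ∞) Ψ.symm (Ψ p)) (w : QQ) :
    fderiv ℝ Ψ p (fderiv ℝ Ψ.symm (Ψ p) w) = w := by
  have d1 : HasFDerivAt Ψ (fderiv ℝ Ψ p) (Ψ.symm (Ψ p)) := by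
    rw [Ψ.left_inv hp]; exact (h1.differentiableAt (by simp)).hasFDerivAt
  have d2 := d1.comp (Ψ p) (h2.differentiableAt (by simp)).hasFDerivAt
  have d3 : HasFDerivAt (Ψ ∘ Ψ.symm) (ContinuousLinearMap.id ℝ QQ) (Ψ p) := by
    refine (hasFDerivAt_id _).congr_of_eventuallyEq ?_
    filter_upwards [Ψ.open_target.mem_nhds (Ψ.map_source hp)] with y hy using Ψ.right_inv hy
  exact congrArg (fun T => T w) (d2.unique d3)

def mk2 (a b : ℝ) : E2 := !₂[a, b]

lemma mk2_contDiffAt {V : Type*} [NormedAddCommGroup V] [NormedSpace ℝ V] {a b : V → ℝ} {x : V} {n : WithTop ℕ∞}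
    (ha : ContDiffAt ℝ n a x) (hb : ContDiffAt ℝ n b x) : ContDiffAt ℝ n (fun y => mk2 (a y) (b y)) x := by
  rw [contDiffAt_euclidean]
  intro i
  fin_cases i
  · exact ha
  · exact hb

lemma mk2_zero {a b : ℝ} : mk2 a b = 0 ↔ a = 0 ∧ b = 0 := by
  constructor
  · intro h
    exact ⟨congrArg (fun w : E2 => w 0) h, congrArg (fun w : E2 => w 1) h⟩
  · rintro ⟨rfl, rfl⟩
    ext i; fin_cases i <;> rfl

def mk2L {V : Type*} [NormedAddCommGroup V] [NormedSpace ℝ V] (a b : V →L[ℝ] ℝ) : V →L[ℝ] E2 :=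
  ((EuclideanSpace.equiv (Fin 2) ℝ).symm : (Fin 2 → ℝ) →L[ℝ] E2).comp (ContinuousLinearMap.pi ![a, b])

lemma mk2L_apply {V : Type*} [NormedAddCommGroup V] [NormedSpace ℝ V] (a b : V →L[ℝ] ℝ) (v : V) :
    mk2L a b v = mk2 (a v) (b v) := by
  ext i; fin_cases i <;> rfl

lemma mk2_hasFDerivAt {V : Type*} [NormedAddCommGroup V] [NormedSpace ℝ V] {a b : V → ℝ} {a' b' : V →L[ℝ] ℝ} {x : V}
    (ha : HasFDerivAt a a' x) (hb : HasFDerivAt b b' x) :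
    HasFDerivAt (fun y => mk2 (a y) (b y)) (mk2L a' b') x := by
  have h : HasFDerivAt (fun y => (![a y, b y] : Fin 2 → ℝ)) (ContinuousLinearMap.pi ![a', b']) x := by
    rw [hasFDerivAt_pi']
    intro i
    fin_cases i
    · exact ha
    · exact hb
  exact ((EuclideanSpace.equiv (Fin 2) ℝ).symm : (Fin 2 → ℝ) →L[ℝ] E2).hasFDerivAt.comp x h

lemma mk2_fst (a b : ℝ) : mk2 a b 0 = a := rfl
lemma mk2_snd (a b : ℝ) : mk2 a b 1 = b := rfl

lemma th_zero (F : BRMap L) {x y : E} (hx : x ∈ dom L) (hy : y ∈ dom L) : th F x y = 0 ↔ fE F y = fE F x := by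
  constructor
  · intro h
    have h1 : fE F y / fE F x = 1 := by
      have h2 := Complex.norm_mul_exp_arg_mul_I (fE F y / fE F x)
      rw [th] at h
      rw [h, norm_div, fE_norm F hx, fE_norm F hy] at h2
      simpa using h2.symm
    rwa [div_eq_one_iff_eq (fE_ne F hx)] at h1
  · intro h
    rw [th, h, div_self (fE_ne F hx)]; simp

lemma straight_int (F : BRMap L) (θ : Circle) {p : Sph} (hp : p ∈ pageSet F θ) (hL : p ∉ L.carrier)
    (hc : fderiv ℝ (fE F) p ≠ 0) :
    ∃ Ψ, Straight (pageE F θ) p (kap F θ p) Ψ ∧ (∀ y ∈ Ψ.source, 0 < (Ψ y).2 0) ∧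
      ∀ y ∈ Ψ.source, y ∈ dom L := by
  have hd := dom_sph (⟨p, hL⟩ : L.compl)
  simp only at hd
  have hpE := (pageE_coe F θ p).2 hp
  have hth := th_contDiffAt F hd (slit_self F hd)
  have hΛ : fderiv ℝ (th F p) p = angL (fE F) p := by
    ext1 v
    rw [th_fderiv F hd hd (slit_self F hd), angL_apply]
  have hthd : HasFDerivAt (th F p) (angL (fE F) p) p := by
    rw [← hΛ]; exact (hth.differentiableAt (by simp)).hasFDerivAt
  have hnd : HasFDerivAt (fun y : E => ‖y‖ ^ 2 - 1) ((2 : ℝ) • innerSL ℝ (p : E)) p := by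
    have := (hasFDerivAt_id (p : E)).norm_sq.sub_const 1
    refine this.congr_fderiv ?_
    ext v; simp
  set M := mk2L ((2 : ℝ) • innerSL ℝ (p : E)) (angL (fE F) p) with hM
  have hsurj : Function.Surjective M := by
    have hne := angL_ne F hd hc
    obtain ⟨v, hv⟩ : ∃ v, angL (fE F) p v ≠ 0 := by
      by_contra h
      push Not at h
      exact hne (ContinuousLinearMap.ext h)
    have hrad := angL_radial F hd
    have hpp : inner ℝ (p : E) (p : E) = (1 : ℝ) := by rw [real_inner_self_eq_norm_sq, sph_norm]; norm_num
    intro w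
    set c := w 1 / angL (fE F) p v with hcdef
    set d := w 0 / 2 - c * inner ℝ (p : E) v with hddef
    refine ⟨d • (p : E) + c • v, ?_⟩
    rw [hM, mk2L_apply]
    have e0 : ((2 : ℝ) • innerSL ℝ (p : E)) (d • (p : E) + c • v) = w 0 := by
      simp only [ContinuousLinearMap.smul_apply, innerSL_apply_apply, inner_add_right, inner_smul_right, hpp, smul_eq_mul]
      rw [hddef]; ring
    have e1 : angL (fE F) p (d • (p : E) + c • v) = w 1 := by
      rw [map_add, map_smul, map_smul, hrad, hcdef]
      simp
      field_simp
    rw [e0, e1]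
    ext i; fin_cases i <;> rfl
  obtain ⟨ℓ, hℓ⟩ := compl_lin hsurj
  let m : E → QQ := fun y => (mk2 (‖y‖ ^ 2 - 1) (th F p y), ℓ (y - p) + mk2 1 0)
  have hm : ContDiffAt ℝ ((⊤ : ℕ∞) : WithTop ℕ∞) m p := by
    refine ContDiffAt.prodMk (mk2_contDiffAt ?_ hth) ?_
    · exact (contDiffAt_id.norm_sq ℝ).sub contDiffAt_const
    · exact ((ℓ.contDiff.contDiffAt).comp (p : E) (contDiffAt_id.sub contDiffAt_const)).add contDiffAt_const
  have hmd : HasFDerivAt m (M.prod ℓ) p := by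
    refine HasFDerivAt.prodMk (mk2_hasFDerivAt hnd hthd) ?_
    have h1 : HasFDerivAt (fun y : E => y - p) (ContinuousLinearMap.id ℝ E) p := (hasFDerivAt_id _).sub_const _
    exact (ℓ.hasFDerivAt.comp (p : E) h1).add_const _
  have hinj : Function.Injective (fderiv ℝ m p) := by
    rw [hmd.fderiv, injective_iff_map_eq_zero]
    intro v hv
    exact hℓ v (congrArg Prod.fst hv) (congrArg Prod.snd hv)
  have hO : {y : E | (y ∈ dom L ∧ fE F y / fE F p ∈ Complex.slitPlane) ∧ 0 < (m y).2 0} ∈ 𝓝 (p : E) := by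
    refine (slit_ev F hd).and ?_
    have hcont : ContinuousAt (fun y => (m y).2 0) p := by
      have : ContinuousAt (fun y => (m y).2) p := hm.continuousAt.snd
      exact (EuclideanSpace.proj (𝕜 := ℝ) (0 : Fin 2)).continuous.continuousAt.comp this
    refine hcont.eventually (lt_mem_nhds ?_)
    simp [m, mk2]
  obtain ⟨Ψ, hs, hsub, hΨ, hsymm⟩ := straight_of hm hinj hO
  have hΨm : (Ψ : E → QQ) = m := funext hΨ
  have hsymm2 : ContDiffAt ℝ ((⊤ : ℕ∞) : WithTop ℕ∞) Ψ.symm (Ψ p) := by rw [hΨ]; exact hsymm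
  have hm2 : ContDiffAt ℝ ((⊤ : ℕ∞) : WithTop ℕ∞) Ψ p := by rw [hΨm]; exact hm
  refine ⟨Ψ, ⟨hs, hm2, hsymm2, ?_, ?_⟩, ?_, fun y hy => (hsub hy).1.1⟩
  · intro y hy
    obtain ⟨⟨h1, h2⟩, h3⟩ := hsub hy
    rw [pageE_dom F θ h1, hΨ]
    have hfp : fE F p = θ := ((pageE_dom F θ hd).1 hpE).2
    have e1 : (m y).1 = 0 ↔ ‖y‖ ^ 2 - 1 = 0 ∧ th F p y = 0 := mk2_zero
    rw [e1, th_zero F hd h1, hfp]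
    have e2 : ‖y‖ ^ 2 - 1 = 0 ↔ ‖y‖ = 1 := by
      rw [sub_eq_zero]; exact pow_eq_one_iff_of_nonneg (norm_nonneg y) two_ne_zero
    rw [e2]
    exact ⟨fun h => ⟨h, h3.le⟩, fun h => h.1⟩
  · intro v
    obtain ⟨c, hc⟩ := kap_dom F θ hpE hd
    have h1 := symm_deriv hs hm2 hsymm2 (0, v)
    rw [hΨm, hmd.fderiv] at h1
    have h2 := congrArg (fun w : QQ => w.1 1) h1
    have h3 : angL (fE F) p (fderiv ℝ Ψ.symm (m p) (0, v)) = 0 := h2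
    rw [hc, ContinuousLinearMap.smul_apply, hΨ, h3, smul_zero]
  · intro y hy
    rw [hΨ]; exact (hsub hy).2

end PartC2

section PartC3
open MeasureTheory Filter Topology

lemma circ_conj (θ : Circle) : starRingEnd ℂ (θ : ℂ) * (θ : ℂ) = 1 := by
  rw [mul_comm, Complex.mul_conj, Complex.normSq_eq_norm_sq, Circle.norm_coe]; simp

lemma TT_norm (F : BRMap L) (i : Fin L.n) {q : PP} (hq : q ∈ Om) : ‖TT F i q‖ = q.1 := by
  rw [TT, norm_smul, tE, sph_norm, Real.norm_of_nonneg hq.1.le, mul_one]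

lemma page_TT (F : BRMap L) (θ : Circle) (i : Fin L.n) {q : PP} (hq : q ∈ Om) :
    TT F i q ∈ pageE F θ ↔ q.1 = 1 ∧ (starRingEnd ℂ (θ : ℂ) * q.2.2).im = 0 ∧
      0 ≤ (starRingEnd ℂ (θ : ℂ) * q.2.2).re := by
  by_cases h0 : q.2.2 = 0
  · rw [h0]
    simp only [mul_zero, Complex.zero_im, Complex.zero_re, le_refl, and_true]
    constructor
    · rintro ⟨x, _, hx⟩
      rw [← TT_norm F i hq, ← hx]; exact sph_norm x
    · intro h
      have h1 : TT F i q = ((F.tub i q.2 : Sph) : E) := by rw [TT, h, one_smul]; rfl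
      rw [h1, pageE_coe, ← nv_TT F i hq]
      exact Or.inl ((TT_carrier F i hq).2 h0)
  · rw [pageE_dom F θ (dom_TT F i hq h0), TT_norm F i hq]
    refine and_congr_right fun _ => ?_
    have h1 := fE_TT F i hq h0
    have hn : (‖q.2.2‖ : ℂ) ≠ 0 := by simpa using h0
    constructor
    · intro h
      rw [h] at h1
      have h2 : starRingEnd ℂ (θ : ℂ) * q.2.2 = (‖q.2.2‖ : ℂ) := by
        conv_lhs => rw [h1]
        linear_combination (‖q.2.2‖ : ℂ) * circ_conj θ
      rw [h2]; simp
    · rintro ⟨h2, h3⟩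
      set r := (starRingEnd ℂ (θ : ℂ) * q.2.2).re with hr
      have h4 : starRingEnd ℂ (θ : ℂ) * q.2.2 = (r : ℂ) := by
        apply Complex.ext
        · simp [hr]
        · rw [h2]; simp
      have h5 : q.2.2 = (r : ℂ) * θ := by
        linear_combination (θ : ℂ) * h4 - q.2.2 * circ_conj θ
      have h6 : ‖q.2.2‖ = r := by
        rw [h5, norm_mul, Circle.norm_coe, mul_one, Complex.norm_real, Real.norm_of_nonneg h3]
      have h7 : (‖q.2.2‖ : ℂ) * fE F (TT F i q) = (‖q.2.2‖ : ℂ) * θ := by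
        rw [← h1, h6, ← h5]
      exact mul_left_cancel₀ hn h7

def kL (θ : Circle) : PP →L[ℝ] QQ :=
  let a : PP →L[ℝ] ℂ := (starRingEnd ℂ (θ : ℂ)) • ((ContinuousLinearMap.snd ℝ ℝ ℂ).comp (ContinuousLinearMap.snd ℝ ℝ (ℝ × ℂ)))
  (mk2L (ContinuousLinearMap.fst ℝ ℝ (ℝ × ℂ)) (Complex.imCLM.comp a)).prod
    (mk2L (Complex.reCLM.comp a) ((ContinuousLinearMap.fst ℝ ℝ ℂ).comp (ContinuousLinearMap.snd ℝ ℝ (ℝ × ℂ))))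

lemma kL_apply (θ : Circle) (q : PP) : kL θ q = (mk2 q.1 (starRingEnd ℂ (θ : ℂ) * q.2.2).im,
    mk2 (starRingEnd ℂ (θ : ℂ) * q.2.2).re q.2.1) := by
  simp only [kL]
  refine Prod.ext ?_ ?_
  · exact mk2L_apply _ _ _
  · exact mk2L_apply _ _ _

lemma kL_inj (θ : Circle) {q : PP} (h : kL θ q = 0) : q = 0 := by
  rw [kL_apply] at h
  have h1 := mk2_zero.1 (congrArg Prod.fst h)
  have h2 := mk2_zero.1 (congrArg Prod.snd h)
  have h3 : starRingEnd ℂ (θ : ℂ) * q.2.2 = 0 := Complex.ext h2.1 h1.2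
  have h4 : q.2.2 = 0 := by linear_combination (θ : ℂ) * h3 - q.2.2 * circ_conj θ
  exact Prod.ext h1.1 (Prod.ext h2.2 h4)

lemma straight_bdry (F : BRMap L) (θ : Circle) {p : Sph} (hL : p ∈ L.carrier) :
    ∃ Ψ, Straight (pageE F θ) p (kap F θ p) Ψ ∧ (Ψ p).2 0 = 0 := by
  obtain ⟨i, t, hO, hp⟩ := carrier_TT F hL
  rw [← hp]
  set p0 : PP := (1, (t, 0)) with hp0
  obtain ⟨Φ, h1, h2, h3, h4⟩ := TT_local F i hO
  have hinv : Φ.symm (TT F i p0) = p0 := by rw [← h2]; exact Φ.left_inv h1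
  let k : PP → QQ := fun q => kL θ q - (mk2 1 0, 0)
  let m : E → QQ := fun y => k (Φ.symm y)
  have hk : ∀ q, HasFDerivAt k (kL θ) q := fun q => (kL θ).hasFDerivAt.sub_const _
  have hkc : ∀ q, ContDiffAt ℝ ((⊤ : ℕ∞) : WithTop ℕ∞) k q := fun q => (kL θ).contDiff.contDiffAt.sub contDiffAt_const
  have hm : ContDiffAt ℝ ((⊤ : ℕ∞) : WithTop ℕ∞) m (TT F i p0) := (hkc _).comp (TT F i p0) (h4 p0 h1)
  have hmd : ∀ v, fderiv ℝ m (TT F i p0) (fderiv ℝ (TT F i) p0 v) = kL θ v := by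
    intro v
    have d1 := (hm.differentiableAt (by simp)).hasFDerivAt.comp p0 (TT_hasFDerivAt F i hO)
    have d2 : HasFDerivAt (m ∘ TT F i) (kL θ) p0 := by
      refine (hk p0).congr_of_eventuallyEq ?_
      filter_upwards [Φ.open_source.mem_nhds h1] with q hq
      change k (Φ.symm (TT F i q)) = k q
      rw [← h2, Φ.left_inv hq]
    exact congrArg (fun T => T v) (d1.unique d2)
  obtain ⟨e, he⟩ := equiv_of_inj _ (TT_inj_fderiv F i hO) finrank_PP
  have hsur : ∀ v, ∃ w, fderiv ℝ (TT F i) p0 w = v := fun v => ⟨e.symm v, by rw [← he]; exact e.apply_symm_apply v⟩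
  have hinj : Function.Injective (fderiv ℝ m (TT F i p0)) := by
    rw [injective_iff_map_eq_zero]
    intro v hv
    obtain ⟨w, rfl⟩ := hsur v
    rw [hmd] at hv
    rw [kL_inj θ hv, map_zero]
  have hOn : Φ.target ∈ 𝓝 (TT F i p0) := by
    rw [← h2]; exact Φ.open_target.mem_nhds (Φ.map_source h1)
  obtain ⟨Ψ, hs, hsub, hΨ, hsymm⟩ := straight_of hm hinj hOn
  have hΨm : (Ψ : E → QQ) = m := funext hΨ
  have hsymm2 : ContDiffAt ℝ ((⊤ : ℕ∞) : WithTop ℕ∞) Ψ.symm (Ψ (TT F i p0)) := by rw [hΨ]; exact hsymm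
  have hm2 : ContDiffAt ℝ ((⊤ : ℕ∞) : WithTop ℕ∞) Ψ (TT F i p0) := by rw [hΨm]; exact hm
  have hkv : ∀ q, k q = (mk2 (q.1 - 1) (starRingEnd ℂ (θ : ℂ) * q.2.2).im,
      mk2 (starRingEnd ℂ (θ : ℂ) * q.2.2).re q.2.1) := by
    intro q
    change kL θ q - (mk2 1 0, 0) = _
    rw [kL_apply]
    refine Prod.ext ?_ ?_
    · ext j; fin_cases j <;> simp [mk2]
    · ext j; fin_cases j <;> simp [mk2]
  refine ⟨Ψ, ⟨hs, hm2, hsymm2, ?_, ?_⟩, ?_⟩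
  · intro y hy
    have hy2 := hsub hy
    have hq := Φ.map_target hy2
    have hye : y = TT F i (Φ.symm y) := by rw [← h2, Φ.right_inv hy2]
    have hmy : m y = k (Φ.symm y) := rfl
    rw [hΨ, hmy, hkv]
    conv_lhs => rw [hye]
    rw [page_TT F θ i (h3 hq)]
    simp only [mk2_zero, mk2_fst, sub_eq_zero, and_assoc]
  · intro v
    have e1 := symm_deriv hs hm2 hsymm2 (0, v)
    obtain ⟨w, hw⟩ := hsur (fderiv ℝ Ψ.symm (Ψ (TT F i p0)) (0, v))
    rw [← hw, hΨm, hmd, kL_apply] at e1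
    have e2 := congrArg (fun w : QQ => w.1 1) e1
    have e3 : (starRingEnd ℂ (θ : ℂ) * w.2.2).im = 0 := e2
    rw [← hw, kap, if_pos (TT_mem F i hO), smul_apply, imL_apply, zc_fderiv F i hO, e3, smul_zero]
  · have hmy : m (TT F i p0) = k (Φ.symm (TT F i p0)) := rfl
    rw [hΨ, hmy, hinv, hkv]
    simp [hp0, mk2]

lemma straight_all (F : BRMap L) (θ : Circle) (hr : IsRegularValue F θ) {p : Sph} (hp : p ∈ pageSet F θ) :
    ∃ Ψ, Straight (pageE F θ) p (kap F θ p) Ψ ∧ ((Ψ p).2 0 = 0 ↔ p ∈ L.carrier) := by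
  by_cases hL : p ∈ L.carrier
  · obtain ⟨Ψ, h1, h2⟩ := straight_bdry F θ hL
    exact ⟨Ψ, h1, by simp [h2, hL]⟩
  · have hc : fderiv ℝ (fE F) p ≠ 0 := by
      intro h
      have h1 := (isCrit_iff F ⟨p, hL⟩).2 h
      exact hr ⟨p, hL⟩ ((page_off F θ ⟨p, hL⟩).1 hp) h1
    obtain ⟨Ψ, h1, h2, _⟩ := straight_int F θ hp hL hc
    exact ⟨Ψ, h1, by simp [(h2 p h1.1).ne', hL]⟩

lemma reg_kap (F : BRMap L) (θ : Circle) (hr : IsRegularValue F θ) {p : Sph} (hp : p ∈ pageSet F θ) :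
    kap F θ p ≠ 0 ∧ kap F θ p p = 0 := by
  refine kap_page F θ ?_
  by_cases hL : p ∈ L.carrier
  · exact Or.inl hL
  · refine Or.inr fun h => ?_
    exact hr ⟨p, hL⟩ ((page_off F θ ⟨p, hL⟩).1 hp) ((isCrit_iff F ⟨p, hL⟩).2 h)

end PartC3

section PartC4
open MeasureTheory Filter Topology

section Gen
variable {H : Type} [TopologicalSpace H] (I : ModelWithCorners ℝ E2 H)

def StrI (A : Set Sph) (p : E) (Ψ : OpenPartialHomeomorph E QQ) : Prop :=
  p ∈ Ψ.source ∧ ContDiffAt ℝ ((⊤ : ℕ∞) : WithTop ℕ∞) Ψ p ∧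
  ContDiffAt ℝ ((⊤ : ℕ∞) : WithTop ℕ∞) Ψ.symm (Ψ p) ∧
  (∀ y ∈ Ψ.source, y ∈ (fun x : Sph => (x : E)) '' A ↔ (Ψ y).1 = 0 ∧ (Ψ y).2 ∈ range I)

open Classical in
def chInv {A : Set Sph} (a0 : A) (Ψ : OpenPartialHomeomorph E QQ) (h : H) : A :=
  if hh : nv (Ψ.symm (0, I h)) ∈ A then ⟨nv (Ψ.symm (0, I h)), hh⟩ else a0

variable {I}

lemma chInv_coe {A : Set Sph} {p : E} (a0 : A) {Ψ : OpenPartialHomeomorph E QQ} (hΨ : StrI I A p Ψ) {h : H}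
    (hh : (0, I h) ∈ Ψ.target) : (((chInv I a0 Ψ h : A) : Sph) : E) = Ψ.symm (0, I h) := by
  have h1 := Ψ.map_target hh
  have h2 := Ψ.right_inv hh
  obtain ⟨x, hx, hx2⟩ := (hΨ.2.2.2 _ h1).2 (by rw [h2]; exact ⟨rfl, mem_range_self _⟩)
  have h3 : nv (Ψ.symm (0, I h)) = x := by rw [← hx2]; exact nv_self x
  have h4 : nv (Ψ.symm (0, I h)) ∈ A := by rw [h3]; exact hx
  rw [chInv, dif_pos h4]
  simp only [h3]
  exact hx2

lemma str_snd {A : Set Sph} {p : E} {Ψ : OpenPartialHomeomorph E QQ} (hΨ : StrI I A p Ψ) {a : A}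
    (ha : ((a : Sph) : E) ∈ Ψ.source) : (0, I (I.symm (Ψ a).2)) = Ψ a := by
  obtain ⟨h1, h2⟩ := (hΨ.2.2.2 _ ha).1 ⟨a, a.2, rfl⟩
  rw [I.right_inv h2]
  exact Prod.ext h1.symm rfl

def chrt {A : Set Sph} {p : E} (a0 : A) {Ψ : OpenPartialHomeomorph E QQ} (hΨ : StrI I A p Ψ) : OpenPartialHomeomorph A H where
  toFun a := I.symm (Ψ a).2
  invFun := chInv I a0 Ψ
  source := {a | ((a : Sph) : E) ∈ Ψ.source}
  target := {h | (0, I h) ∈ Ψ.target}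
  map_source' := by
    intro a ha
    change (0, I (I.symm (Ψ a).2)) ∈ Ψ.target
    rw [str_snd hΨ ha]
    exact Ψ.map_source ha
  map_target' := by
    intro h hh
    change (((chInv I a0 Ψ h : A) : Sph) : E) ∈ Ψ.source
    rw [chInv_coe a0 hΨ hh]
    exact Ψ.map_target hh
  left_inv' := by
    intro a ha
    apply Subtype.ext
    apply Subtype.ext
    have ht : (0, I (I.symm (Ψ a).2)) ∈ Ψ.target := by rw [str_snd hΨ ha]; exact Ψ.map_source ha
    rw [chInv_coe a0 hΨ ht, str_snd hΨ ha, Ψ.left_inv ha]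
  right_inv' := by
    intro h hh
    change I.symm (Ψ (((chInv I a0 Ψ h : A) : Sph) : E)).2 = h
    rw [chInv_coe a0 hΨ hh, Ψ.right_inv hh, I.left_inv]
  open_source := Ψ.open_source.preimage (continuous_subtype_val.comp continuous_subtype_val)
  open_target := Ψ.open_target.preimage (continuous_const.prodMk I.continuous)
  continuousOn_toFun := by
    refine I.continuous_symm.comp_continuousOn (continuous_snd.comp_continuousOn ?_)
    exact Ψ.continuousOn.comp (continuous_subtype_val.comp continuous_subtype_val).continuousOn fun a ha => ha
  continuousOn_invFun := by
    rw [Topology.IsInducing.subtypeVal.continuousOn_iff, Topology.IsInducing.subtypeVal.continuousOn_iff]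
    have : ContinuousOn (fun h => Ψ.symm (0, I h)) {h | (0, I h) ∈ Ψ.target} :=
      Ψ.continuousOn_symm.comp (continuous_const.prodMk I.continuous).continuousOn fun h hh => hh
    exact this.congr fun h hh => chInv_coe a0 hΨ hh

@[reducible] def mkCS {A : Set Sph} (Ψ : A → OpenPartialHomeomorph E QQ) (hΨ : ∀ a : A, StrI I A (a : Sph) (Ψ a)) :
    ChartedSpace H A where
  atlas := range fun a => chrt a (hΨ a)
  chartAt a := chrt a (hΨ a)
  mem_chart_source a := (hΨ a).1
  chart_mem_atlas a := mem_range_self a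

lemma chart_facts {C : Type} [TopologicalSpace C] [ChartedSpace H C] {emb : C → Sph} {a : C} (hc : ContinuousAt emb a)
    {Ψ : OpenPartialHomeomorph E QQ} (hs : (emb a : E) ∈ Ψ.source)
    (hΨ1 : ContDiffAt ℝ ((⊤ : ℕ∞) : WithTop ℕ∞) Ψ (emb a))
    (hΨ2 : ContDiffAt ℝ ((⊤ : ℕ∞) : WithTop ℕ∞) Ψ.symm (Ψ (emb a)))
    (hpt : (0, extChartAt I a a) = Ψ (emb a))
    (hev : ∀ᶠ u in 𝓝[range I] (extChartAt I a a), (emb ((extChartAt I a).symm u) : E) = Ψ.symm (0, u)) :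
    ContMDiffAt I (𝓡 3) ((⊤ : ℕ∞) : WithTop ℕ∞) emb a ∧
    Function.Injective (mfderiv I (𝓡 3) emb a) ∧
    ∀ v : E2, mfderiv (𝓡 3) 𝓘(ℝ, E) (fun q : Sph => (q : E)) (emb a) (mfderiv I (𝓡 3) emb a v) =
      fderiv ℝ Ψ.symm (Ψ (emb a)) (0, v) := by
  have hin : ContDiff ℝ ((⊤ : ℕ∞) : WithTop ℕ∞) (fun u : E2 => ((0, u) : QQ)) := contDiff_const.prodMk contDiff_id
  have hgc : ContDiffAt ℝ ((⊤ : ℕ∞) : WithTop ℕ∞) (fun u : E2 => Ψ.symm (0, u)) (extChartAt I a a) := by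
    refine ContDiffAt.comp (g := Ψ.symm) _ ?_ hin.contDiffAt
    rw [hpt]; exact hΨ2
  have hval : (emb ((extChartAt I a).symm (extChartAt I a a)) : E) = Ψ.symm (0, extChartAt I a a) := by
    rw [extChartAt_to_inv, hpt, Ψ.left_inv hs]
  have hcE : ContinuousAt (fun c => (emb c : E)) a := continuous_subtype_val.continuousAt.comp hc
  have hEM : ContMDiffAt I 𝓘(ℝ, E) ((⊤ : ℕ∞) : WithTop ℕ∞) (fun c => (emb c : E)) a := by
    rw [contMDiffAt_iff]
    refine ⟨hcE, ?_⟩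
    refine (hgc.contDiffWithinAt (s := range I)).congr_of_eventuallyEq ?_ ?_
    · exact hev
    · exact hval
  have hM : ContMDiffAt I (𝓡 3) ((⊤ : ℕ∞) : WithTop ℕ∞) emb a := by
    have h1 := (nv_contMDiffAt (sph_ne (emb a))).comp a hEM
    refine h1.congr_of_eventuallyEq (Eventually.of_forall fun c => ?_)
    exact (nv_self (emb c)).symm
  have hD : HasMFDerivAt I 𝓘(ℝ, E) (fun c => (emb c : E)) a
      ((fderiv ℝ Ψ.symm (Ψ (emb a))).comp (ContinuousLinearMap.inr ℝ E2 E2)) := by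
    refine ⟨hcE, ?_⟩
    have h1 : HasFDerivAt (fun u : E2 => Ψ.symm (0, u))
        ((fderiv ℝ Ψ.symm (Ψ (emb a))).comp (ContinuousLinearMap.inr ℝ E2 E2)) (extChartAt I a a) := by
      have h2 : HasFDerivAt Ψ.symm (fderiv ℝ Ψ.symm (Ψ (emb a))) ((0, extChartAt I a a) : QQ) := by
        rw [hpt]; exact (hΨ2.differentiableAt (by simp)).hasFDerivAt
      exact h2.comp (extChartAt I a a) (ContinuousLinearMap.inr ℝ E2 E2).hasFDerivAt
    exact (h1.hasFDerivWithinAt (s := range I)).congr_of_eventuallyEq hev hval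
  have hcomp : ∀ v : E2, mfderiv (𝓡 3) 𝓘(ℝ, E) (fun q : Sph => (q : E)) (emb a) (mfderiv I (𝓡 3) emb a v) =
      fderiv ℝ Ψ.symm (Ψ (emb a)) (0, v) := by
    have h2 : MDifferentiableAt (𝓡 3) 𝓘(ℝ, E) (fun p : Sph => (p : E)) (emb a) :=
      (contMDiff_coe_sphere (m := 1) _).mdifferentiableAt (by simp)
    have h3 := h2.hasMFDerivAt.comp a (hM.mdifferentiableAt (by simp)).hasMFDerivAt
    have h4 := hasMFDerivAt_unique h3 hD
    intro v
    exact congrArg (fun T : E2 →L[ℝ] E => T v) h4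
  refine ⟨hM, ?_, hcomp⟩
  intro v w hvw
  have h1 := (hcomp v).symm.trans ((congrArg _ hvw).trans (hcomp w))
  have h2 := congrArg (fderiv ℝ Ψ (emb a)) h1
  rw [symm_deriv hs hΨ1 hΨ2, symm_deriv hs hΨ1 hΨ2] at h2
  exact congrArg Prod.snd h2

lemma mkCS_facts {A : Set Sph} (Ψ : A → OpenPartialHomeomorph E QQ) (hΨ : ∀ a : A, StrI I A (a : Sph) (Ψ a)) (a : A) :
    letI := mkCS Ψ hΨ
    ContMDiffAt I (𝓡 3) ((⊤ : ℕ∞) : WithTop ℕ∞) (fun a : A => (a : Sph)) a ∧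
    Function.Injective (mfderiv I (𝓡 3) (fun a : A => (a : Sph)) a) ∧
    (∀ v : E2, mfderiv (𝓡 3) 𝓘(ℝ, E) (fun q : Sph => (q : E)) (a : Sph) (mfderiv I (𝓡 3) (fun a : A => (a : Sph)) a v) =
      fderiv ℝ (Ψ a).symm (Ψ a a) (0, v)) ∧ extChartAt I a a = (Ψ a a).2 := by
  letI := mkCS Ψ hΨ
  have hst := str_snd (hΨ a) (hΨ a).1
  have hpt : (0, extChartAt I a a) = Ψ a (a : Sph) := hst
  have hfin : extChartAt I a a = (Ψ a a).2 := congrArg Prod.snd hpt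
  have h := chart_facts (I := I) (emb := fun a : A => (a : Sph)) (a := a) (Ψ := Ψ a)
    continuous_subtype_val.continuousAt (hΨ a).1 (hΨ a).2.1 (hΨ a).2.2.1 hpt ?_
  · exact ⟨h.1, h.2.1, h.2.2, hfin⟩
  · have hopen : {u : E2 | (0, u) ∈ (Ψ a).target} ∈ 𝓝 (extChartAt I a a) := by
      refine ((Ψ a).open_target.preimage (continuous_const.prodMk continuous_id)).mem_nhds ?_
      change (0, extChartAt I a a) ∈ (Ψ a).target
      rw [hpt]; exact (Ψ a).map_source (hΨ a).1
    filter_upwards [mem_nhdsWithin_of_mem_nhds hopen, self_mem_nhdsWithin] with u hu hr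
    have h1 : (0, I (I.symm u)) ∈ (Ψ a).target := by rw [I.right_inv hr]; exact hu
    have h2 := chInv_coe a (hΨ a) h1
    rw [I.right_inv hr] at h2
    exact h2

end Gen

end PartC4

section PartC5
open MeasureTheory Filter Topology

lemma page_closed (F : BRMap L) (θ : Circle) : IsClosed (pageSet F θ) := by
  have h1 : (pageSet F θ)ᶜ = (fun x : L.compl => (x : Sph)) '' (F.f ⁻¹' {θ}ᶜ) := by
    ext x
    constructor
    · intro hx
      have hL : x ∈ L.compl := fun h => hx (Or.inl h)
      exact ⟨⟨x, hL⟩, fun h => hx ((page_off F θ ⟨x, hL⟩).2 h), rfl⟩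
    · rintro ⟨y, hy, rfl⟩ h
      exact hy ((page_off F θ y).1 h)
  rw [← isOpen_compl_iff, h1]
  exact L.compl.2.isOpenMap_subtype_val _ (isClosed_singleton.isOpen_compl.preimage F.smooth.continuous)

def pgΨ (F : BRMap L) (θ : Circle) (hr : IsRegularValue F θ) (a : pageSet F θ) : OpenPartialHomeomorph E QQ :=
  (straight_all F θ hr a.2).choose

lemma pgΨ_str (F : BRMap L) (θ : Circle) (hr : IsRegularValue F θ) (a : pageSet F θ) :
    Straight (pageE F θ) (a : Sph) (kap F θ (a : Sph)) (pgΨ F θ hr a) ∧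
      ((pgΨ F θ hr a (a : Sph)).2 0 = 0 ↔ (a : Sph) ∈ L.carrier) := (straight_all F θ hr a.2).choose_spec

lemma pgΨ_strI (F : BRMap L) (θ : Circle) (hr : IsRegularValue F θ) (a : pageSet F θ) :
    StrI (𝓡∂ 2) (pageSet F θ) (a : Sph) (pgΨ F θ hr a) := by
  obtain ⟨⟨h1, h2, h3, h4, h5⟩, _⟩ := pgΨ_str F θ hr a
  refine ⟨h1, h2, h3, ?_⟩
  rw [range_modelWithCornersEuclideanHalfSpace]
  exact h4

@[reducible] def pgCS (F : BRMap L) (θ : Circle) (hr : IsRegularValue F θ) :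
    ChartedSpace (EuclideanHalfSpace 2) (pageSet F θ) := mkCS (pgΨ F θ hr) (pgΨ_strI F θ hr)

lemma pg_bdry (F : BRMap L) (θ : Circle) (hr : IsRegularValue F θ) (a : pageSet F θ) :
    letI := pgCS F θ hr
    a ∈ (𝓡∂ 2).boundary (pageSet F θ) ↔ (a : Sph) ∈ L.carrier := by
  letI := pgCS F θ hr
  have h := (mkCS_facts (pgΨ F θ hr) (pgΨ_strI F θ hr) a).2.2.2
  rw [← (pgΨ_str F θ hr a).2]
  change extChartAt (𝓡∂ 2) a a ∈ frontier (range (𝓡∂ 2)) ↔ _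
  rw [frontier_range_modelWithCornersEuclideanHalfSpace, h]
  exact eq_comm

def spanSurf (F : BRMap L) (θ : Circle) (hr : IsRegularValue F θ) : SpanningSurface L :=
  letI := pgCS F θ hr
  { carr := pageSet F θ
    cpt := isCompact_iff_compactSpace.1 (page_closed F θ).isCompact
    emb := fun a => (a : Sph)
    smooth := fun a => (mkCS_facts (pgΨ F θ hr) (pgΨ_strI F θ hr) a).1
    inj := Subtype.val_injective
    imm := fun a => (mkCS_facts (pgΨ F θ hr) (pgΨ_strI F θ hr) a).2.1
    bdry := by
      ext x
      constructor
      · rintro ⟨a, ha, rfl⟩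
        exact (pg_bdry F θ hr a).1 ha
      · intro hx
        exact ⟨⟨x, Or.inl hx⟩, (pg_bdry F θ hr _).2 hx, rfl⟩
    int_off := fun a ha h => ha ((pg_bdry F θ hr a).2 h)
    coorient := by
      refine ⟨fun a => (InnerProductSpace.toDual ℝ E).symm (kap F θ (a : Sph)), ?_, ?_⟩
      · refine (InnerProductSpace.toDual ℝ E).symm.continuous.comp ?_
        refine (kap_cont F θ).comp_continuous (continuous_subtype_val.comp continuous_subtype_val) ?_
        intro a
        exact ⟨a, a.2, rfl⟩
      · intro a
        have hk := reg_kap F θ hr a.2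
        refine ⟨?_, ?_, ?_⟩
        · intro h
          exact hk.1 ((map_eq_zero_iff _ (InnerProductSpace.toDual ℝ E).symm.injective).1 h)
        · exact (InnerProductSpace.toDual_symm_apply).trans hk.2
        · intro v
          refine (InnerProductSpace.toDual_symm_apply).trans ?_
          have h1 := (mkCS_facts (pgΨ F θ hr) (pgΨ_strI F θ hr) a).2.2.1 v
          exact (congrArg (kap F θ (a : Sph)) h1).trans ((pgΨ_str F θ hr a).1.2.2.2.2 v) }

lemma spanSurf_range (F : BRMap L) (θ : Circle) (hr : IsRegularValue F θ) :
    range (spanSurf F θ hr).emb = pageSet F θ := Subtype.range_coe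

lemma clopen_surface (F : BRMap L) (θ : Circle) (hr : IsRegularValue F θ) {C : Set (pageSet F θ)} (hC : IsClopen C)
    (hne : C.Nonempty) (hL : ∀ a ∈ C, (a : Sph) ∉ L.carrier) : ContainsClosedSurface (pageSet F θ) := by
  obtain ⟨V, hV, hVC⟩ := isOpen_induced_iff.1 hC.2
  obtain ⟨O, hO, hOV⟩ := isOpen_induced_iff.1 hV
  set A : Set Sph := Subtype.val '' C with hA
  have hAO : ∀ y : E, y ∈ (fun x : Sph => (x : E)) '' A ↔ y ∈ pageE F θ ∧ y ∈ O := by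
    intro y
    constructor
    · rintro ⟨_, ⟨a, ha, rfl⟩, rfl⟩
      refine ⟨⟨a, a.2, rfl⟩, ?_⟩
      rw [← hVC, ← hOV] at ha
      exact ha
    · rintro ⟨⟨x, hx, rfl⟩, hy⟩
      refine ⟨x, ⟨⟨x, hx⟩, ?_, rfl⟩, rfl⟩
      rw [← hVC, ← hOV]
      exact hy
  have key : ∀ a : A, ∃ Ψ, StrI (𝓡 2) A ((a : Sph) : E) Ψ := by
    rintro ⟨_, a, ha, rfl⟩
    have hLa := hL a ha
    have hc : fderiv ℝ (fE F) (a : Sph) ≠ 0 := by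
      intro h
      exact hr ⟨a, hLa⟩ ((page_off F θ ⟨a, hLa⟩).1 a.2) ((isCrit_iff F ⟨a, hLa⟩).2 h)
    obtain ⟨Ψ, ⟨h1, h2, h3, h4, _⟩, h5, _⟩ := straight_int F θ a.2 hLa hc
    have haO : ((a : Sph) : E) ∈ O := ((hAO _).1 ⟨a, ⟨a, ha, rfl⟩, rfl⟩).2
    refine ⟨Ψ.restrOpen O hO, ⟨h1, haO⟩, h2, h3, ?_⟩
    rintro y ⟨hy1, hy2⟩
    rw [hAO]
    have hI : range (𝓡 2) = univ := by simp
    rw [hI]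
    change _ ↔ (Ψ y).1 = 0 ∧ _
    constructor
    · rintro ⟨h, _⟩
      exact ⟨((h4 y hy1).1 h).1, mem_univ _⟩
    · rintro ⟨h, _⟩
      exact ⟨(h4 y hy1).2 ⟨h, (h5 y hy1).le⟩, hy2⟩
  choose Ψ hΨ using key
  letI := mkCS Ψ hΨ
  have hcl : IsCompact A := by
    haveI : CompactSpace (pageSet F θ) := isCompact_iff_compactSpace.1 (page_closed F θ).isCompact
    exact hC.1.isCompact.image continuous_subtype_val
  exact ⟨{ carr := A
           cpt := isCompact_iff_compactSpace.1 hcl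
           ne := (hne.image _).to_subtype
           emb := fun a => (a : Sph)
           smooth := fun a => (mkCS_facts Ψ hΨ a).1
           inj := Subtype.val_injective
           imm := fun a => (mkCS_facts Ψ hΨ a).2.1
           sub := by
             rintro _ ⟨⟨_, a, _, rfl⟩, rfl⟩
             exact a.2 }⟩

lemma seifert_of_bc (F : BRMap L) (hb : BoundaryConnected F) (θ : Circle) (hr : IsRegularValue F θ) :
    ∃ S : SeifertSurface L, range S.emb = pageSet F θ := by
  refine ⟨{ spanSurf F θ hr with no_closed := ?_ }, spanSurf_range F θ hr⟩
  letI := pgCS F θ hr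
  change ∀ p : pageSet F θ, (connectedComponent p ∩ (𝓡∂ 2).boundary (pageSet F θ)).Nonempty
  intro p
  haveI : LocallyConnectedSpace (pageSet F θ) := ChartedSpace.locallyConnectedSpace (EuclideanHalfSpace 2) _
  by_contra h
  refine hb θ (clopen_surface F θ hr (C := connectedComponent p) ⟨isClosed_connectedComponent, isOpen_connectedComponent⟩
    ⟨p, mem_connectedComponent⟩ ?_)
  intro a ha hL
  exact h ⟨a, ha, (pg_bdry F θ hr a).2 hL⟩

end PartC5

section PartD1
open MeasureTheory Filter Topology

structure Patch (K : Set Sph) (p : Sph) where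
  φ : E2 → E
  u0 : E2
  smooth : ContDiffAt ℝ ((⊤ : ℕ∞) : WithTop ℕ∞) φ u0
  inj : Function.Injective (fderiv ℝ φ u0)
  val : φ u0 = p
  mem : ∀ u, φ u ∈ (fun x : Sph => (x : E)) '' K

lemma surf_patch {A : Set Sph} (S : ClosedSurfaceIn A) (a : S.carr) : Nonempty (Patch (range S.emb) (S.emb a)) := by
  letI := S.ts
  letI := S.cs
  have hM := S.smooth a
  have h2 : MDifferentiableAt (𝓡 3) 𝓘(ℝ, E) (fun p : Sph => (p : E)) (S.emb a) :=
    (contMDiff_coe_sphere (m := 1) _).mdifferentiableAt (by simp)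
  have hE : ContMDiffAt (𝓡 2) 𝓘(ℝ, E) ((⊤ : ℕ∞) : WithTop ℕ∞) (fun c => (S.emb c : E)) a :=
    ContMDiffAt.comp a (contMDiff_coe_sphere (S.emb a)) hM
  have hR : range (𝓡 2) = univ := by simp
  have h1 := (contMDiffAt_iff.1 hE).2
  rw [hR, contDiffWithinAt_univ] at h1
  have h3 := h2.hasMFDerivAt.comp a (hM.mdifferentiableAt (by simp)).hasMFDerivAt
  have h4 := h3.2
  rw [hR] at h4
  have h5 : ∃ T : E2 →L[ℝ] E, HasFDerivAt (fun u => (S.emb ((extChartAt (𝓡 2) a).symm u) : E)) T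
      (extChartAt (𝓡 2) a a) ∧ Function.Injective T :=
    ⟨_, HasFDerivWithinAt.hasFDerivAt h4 Filter.univ_mem, (mfderiv_coe_sphere_injective (S.emb a)).comp (S.imm a)⟩
  obtain ⟨T, h5, h6⟩ := h5
  refine ⟨{ φ := fun u => (S.emb ((extChartAt (𝓡 2) a).symm u) : E)
            u0 := extChartAt (𝓡 2) a a
            smooth := h1
            inj := ?_
            val := by rw [extChartAt_to_inv]
            mem := fun u => ⟨_, mem_range_self _, rfl⟩ }⟩
  rw [h5.fderiv]
  exact h6

lemma exists_ker (f : E2 →L[ℝ] ℝ) : ∃ v : E2, v ≠ 0 ∧ f v = 0 := by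
  by_contra h
  push Not at h
  have hinj : Function.Injective f.toLinearMap := by
    rw [injective_iff_map_eq_zero]
    intro v hv
    by_contra h0
    exact h v h0 hv
  have := LinearMap.finrank_le_finrank_of_injective hinj
  simp at this

section
variable {F : BRMap L} {θ : Circle} {K : Set Sph} {p : Sph}

lemma patch_page (hK : K ⊆ pageSet F θ) (P : Patch K p) (u : E2) : P.φ u ∈ pageE F θ := by
  obtain ⟨x, hx, h⟩ := P.mem u
  exact ⟨x, hK hx, h⟩

lemma patch_mem (P : Patch K p) : p ∈ K := by
  obtain ⟨x, hx, h⟩ := P.mem P.u0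
  rw [P.val] at h
  rwa [← Subtype.ext h]

lemma patch_norm (P : Patch K p) (u : E2) : ‖P.φ u‖ = 1 := by
  obtain ⟨x, hx, h⟩ := P.mem u
  rw [← h]; exact sph_norm x

lemma patch_ev (P : Patch K p) {O : Set E} (hO : O ∈ 𝓝 (p : E)) : ∀ᶠ u in 𝓝 P.u0, P.φ u ∈ O := by
  have := P.smooth.continuousAt
  exact this.eventually (by rw [P.val]; exact hO)

lemma patch_comp (P : Patch K p) {Ψ : OpenPartialHomeomorph E QQ} (h : ContDiffAt ℝ ((⊤ : ℕ∞) : WithTop ℕ∞) Ψ (p : E)) :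
    ContDiffAt ℝ ((⊤ : ℕ∞) : WithTop ℕ∞) (fun u => Ψ (P.φ u)) P.u0 ∧
    HasFDerivAt (fun u => Ψ (P.φ u)) ((fderiv ℝ Ψ p).comp (fderiv ℝ P.φ P.u0)) P.u0 := by
  have h' : ContDiffAt ℝ ((⊤ : ℕ∞) : WithTop ℕ∞) Ψ (P.φ P.u0) := by rw [P.val]; exact h
  refine ⟨h'.comp P.u0 P.smooth, ?_⟩
  have d := (h'.differentiableAt (by simp)).hasFDerivAt.comp P.u0 (P.smooth.differentiableAt (by simp)).hasFDerivAt
  rw [P.val] at d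
  exact d

lemma str_inj {A : Set E} {κ : E →L[ℝ] ℝ} {Ψ : OpenPartialHomeomorph E QQ} (h : Straight A p κ Ψ) :
    Function.Injective (fderiv ℝ Ψ p) := by
  have hs : Function.Surjective (fderiv ℝ Ψ p).toLinearMap := fun w => ⟨_, symm_deriv h.1 h.2.1 h.2.2.1 w⟩
  exact (LinearMap.injective_iff_surjective_of_finrank_eq_finrank finrank_QQ).2 hs

lemma patch_fst (hK : K ⊆ pageSet F θ) (P : Patch K p) {κ : E →L[ℝ] ℝ} {Ψ : OpenPartialHomeomorph E QQ}
    (h : Straight (pageE F θ) p κ Ψ) (v : E2) : (fderiv ℝ Ψ p (fderiv ℝ P.φ P.u0 v)).1 = 0 := by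
  have d1 := (patch_comp P h.2.1).2.fst
  have d2 : HasFDerivAt (fun u => (Ψ (P.φ u)).1) (0 : E2 →L[ℝ] E2) P.u0 := by
    refine (hasFDerivAt_const (0 : E2) P.u0).congr_of_eventuallyEq ?_
    filter_upwards [patch_ev P (Ψ.open_source.mem_nhds h.1)] with u hu
    exact ((h.2.2.2.1 _ hu).1 (patch_page hK P u)).1
  exact congrArg (fun T => T v) (d1.unique d2)

lemma patch_off (hK : K ⊆ pageSet F θ) (P : Patch K p) : p ∉ L.carrier := by
  intro hL
  obtain ⟨Ψ, h, h0⟩ := straight_bdry F θ hL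
  set D := (fderiv ℝ Ψ p).comp (fderiv ℝ P.φ P.u0) with hD
  have d0 := (patch_comp P h.2.1).2.snd
  have d1 : HasFDerivAt (fun u => (Ψ (P.φ u)).2 0)
      ((EuclideanSpace.proj (𝕜 := ℝ) (0 : Fin 2)).comp ((ContinuousLinearMap.snd ℝ E2 E2).comp D)) P.u0 :=
    (EuclideanSpace.proj (𝕜 := ℝ) (0 : Fin 2)).hasFDerivAt.comp P.u0 d0
  have hmin : IsLocalMin (fun u => (Ψ (P.φ u)).2 0) P.u0 := by
    filter_upwards [patch_ev P (Ψ.open_source.mem_nhds h.1)] with u hu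
    change (Ψ (P.φ P.u0)).2 0 ≤ _
    rw [P.val, h0]
    exact ((h.2.2.2.1 _ hu).1 (patch_page hK P u)).2
  have hz := hmin.hasFDerivAt_eq_zero d1
  obtain ⟨v, hv, hv1⟩ := exists_ker
    ((EuclideanSpace.proj (𝕜 := ℝ) (1 : Fin 2)).comp ((ContinuousLinearMap.snd ℝ E2 E2).comp D))
  apply hv
  have e1 := patch_fst hK P h v
  have e2 : (fderiv ℝ Ψ p (fderiv ℝ P.φ P.u0 v)).2 0 = 0 := congrArg (fun T => T v) hz
  have e3 : (fderiv ℝ Ψ p (fderiv ℝ P.φ P.u0 v)).2 1 = 0 := hv1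
  have e4 : fderiv ℝ Ψ p (fderiv ℝ P.φ P.u0 v) = 0 := by
    refine Prod.ext e1 ?_
    ext i; fin_cases i
    · exact e2
    · exact e3
  have e5 : fderiv ℝ P.φ P.u0 v = 0 := str_inj h (e4.trans (map_zero _).symm)
  exact P.inj (e5.trans (map_zero _).symm)

lemma lin_iso {B : E →L[ℝ] E →L[ℝ] ℝ} {T : E2 →L[ℝ] E} {q : E} (hq : q ≠ 0) (hT : Function.Injective T)
    (hqT : ∀ v, inner ℝ q (T v) = 0) (hBq : ∀ w, B w q = 0) (hB : ∀ v w, B (T v) (T w) = 0) :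
    ∃ v, v ≠ 0 ∧ ∀ y, B (T v) y = 0 := by
  let T1 : (E2 × ℝ) →ₗ[ℝ] E := T.toLinearMap.coprod (LinearMap.toSpanSingleton ℝ E q)
  have hT1 : ∀ z, T1 z = T z.1 + z.2 • q := fun z => by simp [T1]
  obtain ⟨n, hn⟩ : ∃ n, n ∉ LinearMap.range T1 := by
    by_contra h
    push Not at h
    have h1 := LinearMap.finrank_range_le T1
    have h2 : LinearMap.range T1 = ⊤ := by
      rw [eq_top_iff]; exact fun x _ => h x
    rw [h2] at h1
    simp at h1
  let T2 : ((E2 × ℝ) × ℝ) →ₗ[ℝ] E := T1.coprod (LinearMap.toSpanSingleton ℝ E n)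
  have hT2 : ∀ z, T2 z = T z.1.1 + z.1.2 • q + z.2 • n := fun z => by simp [T2, hT1]
  have hinj : Function.Injective T2 := by
    rw [injective_iff_map_eq_zero]
    intro z hz
    have hz0 := hz
    rw [hT2] at hz
    have h2 : z.2 = 0 := by
      by_contra h
      apply hn
      refine ⟨(-(z.2)⁻¹) • z.1, ?_⟩
      rw [map_smul, hT1, neg_smul, eq_neg_of_add_eq_zero_left hz, smul_neg, neg_neg, smul_smul, inv_mul_cancel₀ h, one_smul]
    rw [h2, zero_smul, add_zero] at hz
    have h3 : z.1.2 = 0 := by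
      have h4 := congrArg (fun y => inner ℝ q y) hz
      simp only [inner_add_right, hqT, inner_smul_right, zero_add, inner_zero_right] at h4
      exact (mul_eq_zero.1 h4).resolve_right (inner_self_ne_zero.2 hq)
    rw [h3, zero_smul, add_zero] at hz
    have h5 : z.1.1 = 0 := hT (hz.trans (map_zero T).symm)
    exact Prod.ext (Prod.ext h5 h3) h2
  have hsur : Function.Surjective T2 :=
    (LinearMap.injective_iff_surjective_of_finrank_eq_finrank (by simp)).1 hinj
  obtain ⟨v, hv, hv1⟩ := exists_ker ((B.flip n).comp T)
  refine ⟨v, hv, fun y => ?_⟩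
  obtain ⟨z, rfl⟩ := hsur y
  have hv2 : B (T v) n = 0 := hv1
  rw [hT2, map_add, map_add, map_smul, map_smul, hB, hBq, hv2]
  simp

lemma patch_reg (hM : MorseFun F.f) (hK : K ⊆ pageSet F θ) (P : Patch K p) : fderiv ℝ (fE F) p ≠ 0 := by
  intro hc
  have hL := patch_off hK P
  have hd : (p : E) ∈ dom L := dom_sph ⟨p, hL⟩
  have hpE : (p : E) ∈ pageE F θ := (pageE_coe F θ p).2 (hK (patch_mem P))
  have hfp := ((pageE_dom F θ hd).1 hpE).2
  have hev : ∀ᶠ u in 𝓝 P.u0, th F p (P.φ u) = 0 := by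
    filter_upwards [patch_ev P ((dom_open L).mem_nhds hd)] with u hu
    rw [th_zero F hd hu, hfp]
    exact ((pageE_dom F θ hu).1 (patch_page hK P u)).2
  have hB : ∀ v w, BF F p (fderiv ℝ P.φ P.u0 v) (fderiv ℝ P.φ P.u0 w) = 0 := by
    intro v w
    have c := comp2 (A := P.φ) (th := th F p) (u := P.u0)
      (P.smooth.of_le (WithTop.coe_le_coe.2 (le_top : (2 : ℕ∞) ≤ ⊤)))
      (by rw [P.val]; exact th_c2 F hd) (by rw [P.val]; exact th_crit F hd hc) w v
    rw [P.val] at c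
    rw [BF, ← c]
    have h1 : (fun u' => fderiv ℝ (fun z => th F p (P.φ z)) u' w) =ᶠ[𝓝 P.u0] fun _ => (0 : ℝ) := by
      filter_upwards [hev.eventually_nhds] with u hu
      have : (fun z => th F p (P.φ z)) =ᶠ[𝓝 u] fun _ => (0 : ℝ) := hu
      rw [this.fderiv_eq]; simp
    rw [h1.fderiv_eq]; simp
  have hin : ∀ v, inner ℝ (p : E) (fderiv ℝ P.φ P.u0 v) = 0 := by
    intro v
    have := inner_fderiv_zero (P.smooth.differentiableAt (by simp)).hasFDerivAt
      (Eventually.of_forall (patch_norm P)) v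
    rwa [P.val] at this
  obtain ⟨v, hv, hv1⟩ := lin_iso (sph_ne p) P.inj hin (fun w => BF_radial F hd hc w) hB
  refine BF_nondeg F hM ⟨p, hL⟩ hc (w := fderiv ℝ P.φ P.u0 v) ?_ (hin v) hv1
  intro h
  exact hv (P.inj (h.trans (map_zero _).symm))

lemma patch_open (hM : MorseFun F.f) (hK : K ⊆ pageSet F θ) (P : Patch K p) :
    ∀ᶠ y in 𝓝 (p : E), y ∈ pageE F θ → y ∈ (fun x : Sph => (x : E)) '' K := by
  obtain ⟨Ψ, h, _, _⟩ := straight_int F θ (hK (patch_mem P)) (patch_off hK P) (patch_reg hM hK P)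
  obtain ⟨c1, c2⟩ := patch_comp P h.2.1
  set D : E2 →L[ℝ] E2 := (ContinuousLinearMap.snd ℝ E2 E2).comp ((fderiv ℝ Ψ p).comp (fderiv ℝ P.φ P.u0)) with hD
  have d : HasFDerivAt (fun u => (Ψ (P.φ u)).2) D P.u0 := c2.snd
  have ds : HasStrictFDerivAt (fun u => (Ψ (P.φ u)).2) D P.u0 :=
    c1.snd.hasStrictFDerivAt' d (by simp)
  have hinj : Function.Injective D := by
    rw [injective_iff_map_eq_zero]
    intro v hv
    have e4 : fderiv ℝ Ψ p (fderiv ℝ P.φ P.u0 v) = 0 := Prod.ext (patch_fst hK P h v) hv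
    have e5 : fderiv ℝ P.φ P.u0 v = 0 := str_inj h (e4.trans (map_zero _).symm)
    exact P.inj (e5.trans (map_zero _).symm)
  have hsur : Function.Surjective D.toLinearMap := LinearMap.injective_iff_surjective.1 hinj
  have hmap := ds.map_nhds_eq_of_surj (LinearMap.range_eq_top.2 hsur)
  have hS : (fun u => (Ψ (P.φ u)).2) '' {u | P.φ u ∈ Ψ.source} ∈ 𝓝 (Ψ p).2 := by
    have h1 : (Ψ p).2 = (fun u => (Ψ (P.φ u)).2) P.u0 := by simp only [P.val]
    rw [h1, ← hmap]
    exact image_mem_map (patch_ev P (Ψ.open_source.mem_nhds h.1))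
  have hcont : ContinuousAt (fun y => (Ψ y).2) (p : E) := (h.2.1.continuousAt).snd
  filter_upwards [hcont.preimage_mem_nhds hS, Ψ.open_source.mem_nhds h.1] with y hy1 hy2 hy3
  obtain ⟨u, hu, hu2⟩ := hy1
  have e1 := ((h.2.2.2.1 _ hy2).1 hy3).1
  have e2 := ((h.2.2.2.1 _ hu).1 (patch_page hK P u)).1
  have e3 : Ψ (P.φ u) = Ψ y := Prod.ext (e2.trans e1.symm) hu2
  rw [← Ψ.injOn hu hy2 e3]
  exact P.mem u

end

end PartD1

section PartD2
open MeasureTheory Filter Topology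

lemma near_value (F : BRMap L) {p : E} (hd : p ∈ dom L) (hp : fderiv ℝ (fE F) p ≠ 0) {B : Set ℂ} (hB : B.Finite)
    {O : Set E} (hO : O ∈ 𝓝 p) : ∃ y ∈ O, y ∈ dom L ∧ fE F y ∉ B := by
  by_contra h
  push Not at h
  obtain ⟨r, hr, hsub⟩ := Metric.mem_nhds_iff.1 (inter_mem hO ((dom_open L).mem_nhds hd))
  have hconn : IsPreconnected (ball p r) := (convex_ball p r).isPreconnected
  have hcont : ContinuousOn (fE F) (ball p r) := fun y hy =>
    (fE_diff F (hsub hy).2).continuousAt.continuousWithinAt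
  have himg := hconn.image _ hcont
  have hfin : (fE F '' ball p r).Finite := hB.subset (by
    rintro _ ⟨y, hy, rfl⟩
    exact h y (hsub hy).1 (hsub hy).2)
  have hss : (fE F '' ball p r).Subsingleton := by
    by_contra hn
    exact himg.infinite_of_nontrivial (not_subsingleton_iff.1 hn) hfin
  apply hp
  have : fE F =ᶠ[𝓝 p] fun _ => fE F p := by
    filter_upwards [ball_mem_nhds p hr] with y hy
    exact hss (mem_image_of_mem _ hy) (mem_image_of_mem _ (mem_ball_self hr))
  rw [this.fderiv_eq]; simp

lemma bc_of_seifert (F : BRMap L) (hM : MorseFun F.f) (hS : ∀ θ : Circle, IsRegularValue F θ →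
      ∃ S : SeifertSurface L, Set.range S.emb = pageSet F θ) : BoundaryConnected F := by
  rintro θ ⟨S⟩
  letI := S.ts
  letI := S.cs
  haveI := S.cpt
  obtain ⟨a⟩ := S.ne
  set K := range S.emb with hKdef
  have hK : K ⊆ pageSet F θ := S.sub
  have hKc : IsCompact K := isCompact_range S.smooth.continuous
  have hpatch : ∀ x ∈ K, Nonempty (Patch K x) := by
    rintro _ ⟨b, rfl⟩
    exact surf_patch S b
  have hKL : ∀ x ∈ K, x ∉ L.carrier := fun x hx => (hpatch x hx).elim fun P => patch_off hK P
  have hRcl : IsOpen (pageSet F θ \ K)ᶜ := by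
    rw [isOpen_iff_mem_nhds]
    intro x hx
    by_cases hxp : x ∈ pageSet F θ
    · have hxK : x ∈ K := by
        by_contra h
        exact hx ⟨hxp, h⟩
      obtain ⟨P⟩ := hpatch x hxK
      have h1 := patch_open hM hK P
      have h2 := (continuous_subtype_val (p := fun y : E => y ∈ sphere (0 : E) 1)).continuousAt (x := x) |>.eventually h1
      filter_upwards [h2] with y hy hyR
      obtain ⟨z, hz, hzy⟩ := hy ⟨y, hyR.1, rfl⟩
      have hzy2 : z = y := Subtype.ext hzy
      exact hyR.2 (hzy2 ▸ hz)
    · filter_upwards [(page_closed F θ).isOpen_compl.mem_nhds hxp] with y hy hyR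
      exact hy hyR.1
  obtain ⟨U, hUo, hKU, hUR⟩ := normal_exists_closure_subset hKc.isClosed hRcl (fun x hx h => h.2 hx)
  have hUL : ∀ x ∈ closure U, x ∉ L.carrier := by
    intro x hx hL
    have h1 := hUR hx
    apply h1
    refine ⟨Or.inl hL, fun hxK => hKL x hxK hL⟩
  have hFr : IsCompact (fE F '' ((fun x : Sph => (x : E)) '' frontier U)) := by
    refine IsCompact.image_of_continuousOn (isClosed_frontier.isCompact.image continuous_subtype_val) ?_
    rintro _ ⟨x, hx, rfl⟩
    exact (fE_diff F (dom_sph (⟨x, hUL x (frontier_subset_closure hx)⟩ : L.compl))).continuousAt.continuousWithinAt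
  obtain ⟨P⟩ := hpatch (S.emb a) (mem_range_self a)
  have hpK : S.emb a ∈ K := mem_range_self a
  set p := S.emb a with hp
  have hpL := hKL p hpK
  have hd : (p : E) ∈ dom L := dom_sph (⟨p, hpL⟩ : L.compl)
  have hfp : fE F p = θ := ((pageE_dom F θ hd).1 ((pageE_coe F θ p).2 (hK hpK))).2
  have hθ : fE F p ∉ fE F '' ((fun x : Sph => (x : E)) '' frontier U) := by
    rintro ⟨_, ⟨x, hx, rfl⟩, hxθ⟩
    have hxL := hUL x (frontier_subset_closure hx)
    have hxd : (x : E) ∈ dom L := dom_sph (⟨x, hxL⟩ : L.compl)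
    have hxp : x ∈ pageSet F θ := (pageE_coe F θ x).1 ((pageE_dom F θ hxd).2 ⟨sph_norm x, by rw [← hfp]; exact hxθ⟩)
    have h1 := hUR (frontier_subset_closure hx)
    have hxK : x ∈ K := by
      by_contra h
      exact h1 ⟨hxp, h⟩
    rw [hUo.frontier_eq] at hx
    exact hx.2 (hKU hxK)
  have hO : {y : E | fE F y ∉ fE F '' ((fun x : Sph => (x : E)) '' frontier U)} ∩ nv ⁻¹' U ∈ 𝓝 (p : E) := by
    refine inter_mem ?_ ?_
    · exact (fE_diff F hd).continuousAt.preimage_mem_nhds (hFr.isClosed.isOpen_compl.mem_nhds hθ)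
    · refine (nv_contAt (sph_ne p)).preimage_mem_nhds ?_
      rw [nv_self]
      exact hUo.mem_nhds (hKU hpK)
  have hBfin : ((fun x : L.compl => fE F ((x : Sph) : E)) '' critSet F.f).Finite := (crit_fin_even F hM).1.image _
  obtain ⟨y, ⟨hy1, hyU⟩, hyd, hyB⟩ := near_value F hd (patch_reg hM hK P) hBfin hO
  set x : L.compl := ⟨nv y, hyd.2⟩ with hx
  have hfx : fE F y = (F.f x : ℂ) := fS_eq F x
  have hreg : IsRegularValue F (F.f x) := by
    intro z hz hc
    apply hyB
    refine ⟨z, hc, ?_⟩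
    simp only
    rw [fE_sph, hz, hfx]
  obtain ⟨T, hT⟩ := hS (F.f x) hreg
  letI := T.ts
  letI := T.cs
  have hxT : (x : Sph) ∈ range T.emb := by
    rw [hT]; exact (page_off F _ x).2 rfl
  obtain ⟨q, hq⟩ := hxT
  have hTc : Continuous T.emb := T.smooth.continuous
  have hnoF : ∀ b, T.emb b ∉ frontier U := by
    intro b hb
    have hbL := hUL _ (frontier_subset_closure hb)
    have hbp : T.emb b ∈ pageSet F (F.f x) := by rw [← hT]; exact mem_range_self b
    have h1 := (page_off F (F.f x) ⟨T.emb b, hbL⟩).1 hbp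
    apply hy1
    refine ⟨_, ⟨T.emb b, hb, rfl⟩, ?_⟩
    have h2 := fE_sph F ⟨T.emb b, hbL⟩
    rw [h1] at h2
    exact h2.trans hfx.symm
  have hclopen : IsClopen (T.emb ⁻¹' U) := by
    refine ⟨?_, hUo.preimage hTc⟩
    have : T.emb ⁻¹' U = T.emb ⁻¹' closure U := by
      ext b
      refine ⟨fun h => subset_closure h, fun h => ?_⟩
      by_contra hb
      apply hnoF b
      rw [hUo.frontier_eq]
      exact ⟨h, hb⟩
    rw [this]
    exact isClosed_closure.preimage hTc
  have hqU : q ∈ T.emb ⁻¹' U := by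
    change T.emb q ∈ U
    rw [hq]; exact hyU
  obtain ⟨b, hb1, hb2⟩ := T.no_closed q
  have hbU := hclopen.connectedComponent_subset hqU hb1
  have hbL : T.emb b ∈ L.carrier := by
    rw [← T.bdry]; exact ⟨b, hb2, rfl⟩
  exact hUL _ (subset_closure hbU) hbL

end PartD2

/-- If `f : S³∖L → S¹` is a simple boundary-regular Morse
map for a link `L`, then its critical set is finite of even cardinality;
every smooth page of `f` is a spanning surface for `L`; and `f` is
boundary-connected if and only if every smooth page of `f` is a Seifert
surface for `L`. -/
theorem statement_1 (L : Link) (F : BRMap L) (hMorse : MorseFun F.f) :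
    (critSet F.f).Finite ∧ Even (critSet F.f).ncard ∧
    (∀ θ : Circle, IsRegularValue F θ →
      ∃ S : SpanningSurface L, Set.range S.emb = pageSet F θ) ∧
    (BoundaryConnected F ↔ ∀ θ : Circle, IsRegularValue F θ →
      ∃ S : SeifertSurface L, Set.range S.emb = pageSet F θ) := by
  exact ⟨(crit_fin_even F hMorse).1, (crit_fin_even F hMorse).2, fun θ hr => ⟨spanSurf F θ hr, spanSurf_range F θ hr⟩,
    fun hb θ hr => seifert_of_bc F hb θ hr, bc_of_seifert F hMorse⟩

end MorseNovikov
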